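/- arXiv:1311.2863 — 2 statements merged into one kernel-verified Lean document; each statement's English description precedes it below -/
import Mathlib

section
/- Let D be an unbounded c-John domain in ℝⁿ, n ≥ 2, and let τ, δ ∈ (0,1) and 1 ≤ p < n/δ be given. Then there is a constant C = C(δ, τ, p, n, c) > 0 such that the fractional Sobolev inequality ∫_D |u(x)|^{np/(n−δp)} dx ≤ C |u|_{W^{δ,p}_τ(D)}^{np/(n−δp)} holds for each u ∈ Ẇ^{δ,p}_τ(D) having compact support in D. -/
open MeasureTheory Metric Set
open scoped ENNReal NNReal BigOperators

noncomputable section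

/-- Euclidean `n`-space. -/
abbrev Eucl (n : ℕ) : Type := EuclideanSpace ℝ (Fin n)

/-- `D` is a `c`-John domain (bounded or unbounded): an open connected set such that each
pair of points can be joined by a rectifiable curve, parametrized by arc length
(formalized as a `1`-Lipschitz parametrization on `[0, ℓ]`), along which
`dist(γ t, ∂D) ≥ min{t, ℓ - t}/c`. -/
def IsJohnDomain (n : ℕ) (c : ℝ) (D : Set (Eucl n)) : Prop :=
  IsOpen D ∧ IsConnected D ∧
    ∀ x₁ ∈ D, ∀ x₂ ∈ D, ∃ ℓ : ℝ, 0 ≤ ℓ ∧ ∃ γ : ℝ → Eucl n,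
      γ 0 = x₁ ∧ γ ℓ = x₂ ∧ (∀ t ∈ Icc (0:ℝ) ℓ, γ t ∈ D) ∧
      LipschitzOnWith 1 γ (Icc 0 ℓ) ∧
      ∀ t ∈ Icc (0:ℝ) ℓ, min t (ℓ - t) / c ≤ infDist (γ t) (frontier D)

/-- The ball `B(x, τ·dist(x, ∂G))`; by convention, if `∂G = ∅` (i.e. `G = ℝⁿ`)
it is all of `ℝⁿ`. -/
def tauBall (n : ℕ) (τ : ℝ) (G : Set (Eucl n)) (x : Eucl n) : Set (Eucl n) :=
  {y : Eucl n | edist x y < ENNReal.ofReal τ * EMetric.infEdist x (frontier G)}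

/-- The fractional kernel `|u x - u y|^p / |x - y|^(n + δp)` as an extended real. -/
def fracKernel (n : ℕ) (δ p : ℝ) (u : Eucl n → ℝ) (x y : Eucl n) : ℝ≥0∞ :=
  ENNReal.ofReal (|u x - u y| ^ p / dist x y ^ ((n : ℝ) + δ * p))

/-- The `p`-th power of the seminorm `|u|_{W^{δ,p}_τ(G)}`. -/
def fracEnergyTau (n : ℕ) (δ τ p : ℝ) (G : Set (Eucl n)) (u : Eucl n → ℝ) : ℝ≥0∞ :=
  ∫⁻ x in G, ∫⁻ y in tauBall n τ G x, fracKernel n δ p u x y ∂volume ∂volume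

/-- The `p`-th power of the seminorm `|u|_{W^{δ,p}(G)}`. -/
def fracEnergy (n : ℕ) (δ p : ℝ) (G : Set (Eucl n)) (u : Eucl n → ℝ) : ℝ≥0∞ :=
  ∫⁻ x in G, ∫⁻ y in G, fracKernel n δ p u x y ∂volume ∂volume

/-- The fractional `(δ,p)`-capacity of a compact set `K ⊆ G`:
`inf |u|_{W^{δ,p}(G)}^p` over `u ∈ C₀(G)` with `u ≥ 1` on `K`. -/
def fracCap (n : ℕ) (δ p : ℝ) (K G : Set (Eucl n)) : ℝ≥0∞ :=
  ⨅ (u : Eucl n → ℝ) (_ : Continuous u) (_ : HasCompactSupport u) (_ : tsupport u ⊆ G)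
    (_ : ∀ x ∈ K, 1 ≤ u x), fracEnergy n δ p G u

/-- The fractional `(δ,q,p)`-Hardy inequality holds in `G` with constant `C`. -/
def HasFracHardy (n : ℕ) (δ p q C : ℝ) (G : Set (Eucl n)) : Prop :=
  ∀ u : Eucl n → ℝ, Continuous u → HasCompactSupport u → tsupport u ⊆ G →
    (∫⁻ x in G, ENNReal.ofReal
        (|u x| ^ q / infDist x (frontier G) ^ (q * (δ + n * (1/q - 1/p)))) ∂volume)
      ≤ ENNReal.ofReal C * fracEnergy n δ p G u ^ (q / p)

/-- The closed axis-parallel cube with center `z` and half side length `r`. -/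
def cube (n : ℕ) (z : Eucl n) (r : ℝ) : Set (Eucl n) :=
  {x : Eucl n | ∀ i, |x i - z i| ≤ r}

/-- The quantity `|Q|^(-1-δ/n) ∫_Q |u - u_Q|` for the cube `Q = cube n z r`. -/
def aTerm (n : ℕ) (δ : ℝ) (u : Eucl n → ℝ) (z : Eucl n) (r : ℝ) : ℝ :=
  ((volume (cube n z r)).toReal) ^ (-(1:ℝ) - δ / n) *
    ∫ x in cube n z r, |u x - ⨍ y in cube n z r, u y ∂volume| ∂volume

/-- The seminorm `|u|_{A^{δ,p}_κ(G)}`: the supremum, over families `𝒬` of pairwise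
disjoint cubes `Q` (given by center-halfside pairs) with `κQ ⊆ G`, of the `L^p(G)`
norm of `∑_{Q ∈ 𝒬} (|Q|^(-1-δ/n) ∫_Q |u - u_Q|) χ_Q`. -/
def ASeminorm (n : ℕ) (κ δ p : ℝ) (G : Set (Eucl n)) (u : Eucl n → ℝ) : ℝ≥0∞ :=
  ⨆ (𝒬 : Set (Eucl n × ℝ)) (_ : ∀ c ∈ 𝒬, 0 < c.2 ∧ cube n c.1 (κ * c.2) ⊆ G)
    (_ : ∀ c ∈ 𝒬, ∀ c' ∈ 𝒬, c ≠ c' → cube n c.1 c.2 ∩ cube n c'.1 c'.2 = ∅),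
    (∫⁻ x in G,
        (∑' c : 𝒬, (cube n (c : Eucl n × ℝ).1 (c : Eucl n × ℝ).2).indicator
          (fun _ => ENNReal.ofReal (aTerm n δ u (c : Eucl n × ℝ).1 (c : Eucl n × ℝ).2)) x) ^ p
      ∂volume) ^ (1 / p)

/-- `Q` is a closed dyadic cube in `ℝⁿ`. -/
def IsDyadicCube (n : ℕ) (Q : Set (Eucl n)) : Prop :=
  ∃ (k : ℤ) (z : Fin n → ℤ),
    Q = {x : Eucl n | ∀ i, (z i : ℝ) * (2:ℝ) ^ k ≤ x i ∧ x i ≤ ((z i : ℝ) + 1) * (2:ℝ) ^ k}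

/-- `W` is a Whitney decomposition of the proper open set `G`: a countable family of
closed dyadic cubes with pairwise disjoint interiors whose union is `G`, with
`diam Q ≤ dist(Q, ∂G) ≤ 4 diam Q` for each cube `Q ∈ W`. -/
def IsWhitneyDecomposition (n : ℕ) (G : Set (Eucl n)) (W : Set (Set (Eucl n))) : Prop :=
  W.Countable ∧ (∀ Q ∈ W, IsDyadicCube n Q) ∧ ⋃₀ W = G ∧
    (W.Pairwise fun Q R => interior Q ∩ interior R = ∅) ∧
    ∀ Q ∈ W, (∀ x ∈ Q, Metric.diam Q ≤ infDist x (frontier G)) ∧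
      ∃ x ∈ Q, infDist x (frontier G) ≤ 4 * Metric.diam Q

/-- `lam` is an upper Assouad-type covering exponent for `E`: there is `C > 0` such
that for every `x ∈ E` and all `0 < r < R < 2 diam E`, the set `E ∩ B(x,R)` can be
covered by at most `C (R/r)^lam` balls centered in `E` of radius `r`. -/
def UpperAssouadBound (n : ℕ) (E : Set (Eucl n)) (lam : ℝ) : Prop :=
  ∃ C : ℝ, 0 < C ∧ ∀ x ∈ E, ∀ r R : ℝ, 0 < r → r < R →
    ENNReal.ofReal R < 2 * EMetric.diam E →
    ∃ F : Finset (Eucl n), ↑F ⊆ E ∧ (F.card : ℝ) ≤ C * (R / r) ^ lam ∧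
      E ∩ ball x R ⊆ ⋃ y ∈ F, ball y r

/-- The upper Assouad dimension of `E`. -/
def upperAssouadDim (n : ℕ) (E : Set (Eucl n)) : ℝ :=
  sInf {lam : ℝ | 0 ≤ lam ∧ UpperAssouadBound n E lam}

/-- `lam` is a lower Assouad-type exponent for `E`: there is `C > 0` such that for
every `x ∈ E` and all `0 < r < R < 2 diam E`, at least `C (R/r)^lam` balls centered
in `E` of radius `r` are needed to cover `E ∩ B(x,R)`. -/
def LowerAssouadBound (n : ℕ) (E : Set (Eucl n)) (lam : ℝ) : Prop :=
  ∃ C : ℝ, 0 < C ∧ ∀ x ∈ E, ∀ r R : ℝ, 0 < r → r < R →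
    ENNReal.ofReal R < 2 * EMetric.diam E →
    ∀ F : Finset (Eucl n), ↑F ⊆ E → (E ∩ ball x R ⊆ ⋃ y ∈ F, ball y r) →
      C * (R / r) ^ lam ≤ (F.card : ℝ)

/-- The lower Assouad dimension of `E`. -/
def lowerAssouadDim (n : ℕ) (E : Set (Eucl n)) : ℝ :=
  sSup {lam : ℝ | 0 ≤ lam ∧ LowerAssouadBound n E lam}

end

/-!
A point `x` of an unbounded John domain `D` can be joined to infinity by a chain of balls whose
radii grow geometrically and are comparable to their distances to `∂D` and to `x`. For integrable
`u` the averages of `u` over these balls tend to `0`, so `|u x|` is at most the sum of the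
oscillations between consecutive balls, and each oscillation is bounded, via Jensen's inequality,
by `r ^ δ` times a power of the average of the energy density over a ball of radius `r`. Balls of
size at most a free parameter `R` are estimated by a function `P` of `x`, larger balls by the total
energy `E`; this gives `|u x| ≲ R ^ δ P(x) ^ (1/p) + R ^ (δ - n/p) E ^ (1/p)`, and optimising in
`R` gives `|u x| ^ q ≲ P(x) E ^ (q/p - 1)` with `q = np/(n - δp)`. Taking `P` to be a maximal
function would fail for `p = 1`, where it is only of weak type. Instead `P` spreads the energy at
each `y` uniformly over a ball comparable to `B(y, dist(y, ∂D))`: it still dominates the averages,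
since `|x - y| ≲ dist(y, ∂D)` for `y` in a ball of the chain, and its integral is at most `2E` by
Fubini. Clipping `u` from below and above removes the integrability assumption.
-/

section Averages

variable {α X : Type*} [MeasurableSpace α]

theorem rpow_lintegral_le_lintegral_rpow {μ : Measure α} [IsProbabilityMeasure μ] {f : α → ℝ≥0∞}
    (hf : AEMeasurable f μ) {p : ℝ} (hp : 1 ≤ p) :
    (∫⁻ x, f x ∂μ) ^ p ≤ ∫⁻ x, f x ^ p ∂μ := by
  have h := eLpNorm'_le_eLpNorm'_of_exponent_le one_pos hp μ hf.aestronglyMeasurable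
  simp only [eLpNorm', enorm_eq_self, ENNReal.rpow_one, div_one, one_div] at h
  exact (ENNReal.le_rpow_inv_iff (by linarith)).1 h

theorem lintegral_lintegral_le_rpow_inv {μ ν : Measure α} [IsProbabilityMeasure μ]
    [IsProbabilityMeasure ν] {f : α → α → ℝ≥0∞} (hf : Measurable (Function.uncurry f))
    {p : ℝ} (hp : 1 ≤ p) :
    ∫⁻ y, ∫⁻ z, f y z ∂ν ∂μ ≤ (∫⁻ y, ∫⁻ z, f y z ^ p ∂ν ∂μ) ^ p⁻¹ := by
  rw [ENNReal.le_rpow_inv_iff (by linarith)]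
  calc (∫⁻ y, ∫⁻ z, f y z ∂ν ∂μ) ^ p ≤ ∫⁻ y, (∫⁻ z, f y z ∂ν) ^ p ∂μ :=
        rpow_lintegral_le_lintegral_rpow hf.lintegral_prod_right'.aemeasurable hp
    _ ≤ ∫⁻ y, ∫⁻ z, f y z ^ p ∂ν ∂μ := by
        gcongr with y
        exact rpow_lintegral_le_lintegral_rpow hf.of_uncurry_left.aemeasurable hp

variable [PseudoEMetricSpace X] [MeasurableSpace X] [OpensMeasurableSpace X] {u : α → X}

theorem lintegral_edist_le_add (hu : Measurable u) (b : X) (μ ν : Measure α)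
    [IsProbabilityMeasure μ] [IsProbabilityMeasure ν] :
    ∫⁻ y, edist b (u y) ∂μ ≤
      ∫⁻ y, ∫⁻ z, edist (u y) (u z) ∂ν ∂μ + ∫⁻ z, edist b (u z) ∂ν := by
  have htriangle (y : α) :
      edist b (u y) ≤ ∫⁻ z, edist (u y) (u z) ∂ν + ∫⁻ z, edist b (u z) ∂ν := by
    have hmeas : Measurable fun z ↦ edist b (u z) := measurable_edist_right.comp hu
    rw [← lintegral_add_right _ hmeas]
    calc edist b (u y) = ∫⁻ _, edist b (u y) ∂ν := by simp
      _ ≤ ∫⁻ z, (edist (u y) (u z) + edist b (u z)) ∂ν := by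
          gcongr with z
          rw [add_comm, edist_comm (u y)]
          exact edist_triangle _ _ _
  calc ∫⁻ y, edist b (u y) ∂μ
      ≤ ∫⁻ y, (∫⁻ z, edist (u y) (u z) ∂ν + ∫⁻ z, edist b (u z) ∂ν) ∂μ := by
        gcongr with y; exact htriangle y
    _ = _ := by rw [lintegral_add_right _ measurable_const]; simp

theorem lintegral_edist_le_sum_add (hu : Measurable u) (b : X) (ν : ℕ → Measure α)
    [∀ j, IsProbabilityMeasure (ν j)] (J : ℕ) :
    ∫⁻ y, edist b (u y) ∂ν 0 ≤
      ∑ j ∈ Finset.range J, ∫⁻ y, ∫⁻ z, edist (u y) (u z) ∂ν (j + 1) ∂ν j +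
        ∫⁻ z, edist b (u z) ∂ν J := by
  induction J with
  | zero => simp
  | succ J ih =>
    rw [Finset.sum_range_succ, add_assoc]
    exact ih.trans (by gcongr; exact lintegral_edist_le_add hu b (ν J) (ν (J + 1)))

end Averages

section BallSweep

variable {X : Type*} [PseudoMetricSpace X] [MeasurableSpace X]

/-- The superposition of the functions `g(y) 1_{B(y, r y)} / μ(B(y, r y))` with respect to `ν`.
It spreads the mass `g(y)` uniformly over the ball `B(y, r y)`, so it preserves total mass. -/
noncomputable def ballSweep (μ ν : Measure X) (r : X → ℝ) (g : X → ℝ≥0∞) (x : X) : ℝ≥0∞ :=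
  ∫⁻ y, (ball y (r y)).indicator (fun _ ↦ g y / μ (ball y (r y))) x ∂ν

variable {μ ν : Measure X} {r : X → ℝ} {g : X → ℝ≥0∞}

theorem setLIntegral_div_le_ballSweep {B : Set X} {M : ℝ≥0∞} {x : X} (hB : MeasurableSet B)
    (hx : ∀ y ∈ B, x ∈ ball y (r y)) (hM : ∀ y ∈ B, μ (ball y (r y)) ≤ M) (hM0 : M ≠ 0) :
    (∫⁻ y in B, g y ∂ν) / M ≤ ballSweep μ ν r g x := by
  rw [div_eq_mul_inv, ← lintegral_mul_const' _ _ (ENNReal.inv_ne_top.2 hM0)]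
  calc ∫⁻ y in B, g y * M⁻¹ ∂ν
      ≤ ∫⁻ y in B, (ball y (r y)).indicator (fun _ ↦ g y / μ (ball y (r y))) x ∂ν := by
        refine setLIntegral_mono' hB fun y hy ↦ ?_
        rw [indicator_of_mem (hx y hy), ← div_eq_mul_inv]
        gcongr
        exact hM y hy
    _ ≤ ballSweep μ ν r g x := setLIntegral_le_lintegral _ _

variable [OpensMeasurableSpace X] [SecondCountableTopology X] [SFinite μ]

theorem measurable_ballSweep_kernel (hr : Measurable r) (hg : Measurable g) :
    Measurable fun q : X × X ↦
      (ball q.2 (r q.2)).indicator (fun _ ↦ g q.2 / μ (ball q.2 (r q.2))) q.1 := by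
  have hball : MeasurableSet {q : X × X | dist q.1 q.2 < r q.2} :=
    measurableSet_lt measurable_dist (hr.comp measurable_snd)
  have hvol : Measurable fun y ↦ μ (ball y (r y)) := measurable_measure_prodMk_right hball
  exact ((hg.div hvol).comp measurable_snd).indicator hball

theorem measurable_ballSweep [SFinite ν] (hr : Measurable r) (hg : Measurable g) :
    Measurable (ballSweep μ ν r g) :=
  (measurable_ballSweep_kernel hr hg).lintegral_prod_right'

theorem lintegral_ballSweep [SFinite ν] (hr : Measurable r) (hg : Measurable g)
    (h0 : ∀ᵐ y ∂ν, μ (ball y (r y)) ≠ 0) (htop : ∀ᵐ y ∂ν, μ (ball y (r y)) ≠ ⊤) :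
    ∫⁻ x, ballSweep μ ν r g x ∂μ = ∫⁻ y, g y ∂ν := by
  unfold ballSweep
  rw [lintegral_lintegral_swap (measurable_ballSweep_kernel hr hg).aemeasurable]
  refine lintegral_congr_ae ?_
  filter_upwards [h0, htop] with y hy0 hytop
  rw [lintegral_indicator_const measurableSet_ball, ENNReal.div_mul_cancel hy0 hytop]

end BallSweep

section GeometricSums

variable {ρ L R α β : ℝ}

theorem sum_geom_rpow_of_lt_le (hρ : 0 < ρ) (hL : 1 < L) (hR : 0 < R) (hα : 0 < α) (J : ℕ) :
    ∑ j ∈ Finset.range J with ρ * L ^ j < R, (ρ * L ^ j) ^ α ≤ (1 - L ^ (-α))⁻¹ * R ^ α := by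
  have hLα : L ^ (-α) < 1 := Real.rpow_lt_one_of_one_lt_of_neg hL (by linarith)
  have hinv (x : ℝ) (hx : 0 < x) : (x / L) ^ α = x ^ α * L ^ (-α) := by
    rw [Real.div_rpow hx.le (by linarith), Real.rpow_neg (by linarith), div_eq_mul_inv]
  suffices h : ∑ j ∈ Finset.range J with ρ * L ^ j < R, (ρ * L ^ j) ^ α ≤
      (1 - L ^ (-α))⁻¹ * min (ρ * L ^ J / L) R ^ α from
    h.trans (by gcongr; exact min_le_right _ _)
  induction J with
  | zero => simp only [Finset.range_zero, Finset.filter_empty, Finset.sum_empty]; positivity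
  | succ J ih =>
    have hs : 0 < ρ * L ^ J := by positivity
    have hsucc : ρ * L ^ (J + 1) / L = ρ * L ^ J := by rw [pow_succ]; field_simp
    have hle : ρ * L ^ J / L ≤ ρ * L ^ J := div_le_self hs.le hL.le
    rw [Finset.range_add_one, Finset.filter_insert, hsucc]
    split_ifs with hJ
    · rw [Finset.sum_insert (by simp), min_eq_left hJ.le]
      rw [min_eq_left (hle.trans hJ.le), hinv _ hs] at ih
      calc _ ≤ (ρ * L ^ J) ^ α + (1 - L ^ (-α))⁻¹ * ((ρ * L ^ J) ^ α * L ^ (-α)) := by gcongr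
        _ = (1 - L ^ (-α))⁻¹ * (ρ * L ^ J) ^ α := by
          field_simp [(by linarith : 1 - L ^ (-α) ≠ 0)]; ring
    · exact ih.trans (by gcongr)

theorem sum_geom_rpow_neg_of_le_le (hρ : 0 < ρ) (hL : 1 < L) (hR : 0 < R) (hβ : 0 < β) (J : ℕ) :
    ∑ j ∈ Finset.range J with R ≤ ρ * L ^ j, (ρ * L ^ j) ^ (-β) ≤
      (1 - L ^ (-β))⁻¹ * R ^ (-β) := by
  have hLβ : L ^ (-β) < 1 := Real.rpow_lt_one_of_one_lt_of_neg hL (by linarith)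
  have hK : 0 < (1 - L ^ (-β))⁻¹ := inv_pos.2 (by linarith)
  suffices h : ∑ j ∈ Finset.range J with R ≤ ρ * L ^ j, (ρ * L ^ j) ^ (-β) ≤
      (1 - L ^ (-β))⁻¹ * (R ^ (-β) - max (ρ * L ^ J) R ^ (-β)) from
    h.trans (by gcongr; exact sub_le_self _ (by positivity))
  induction J with
  | zero =>
    simp only [Finset.range_zero, Finset.filter_empty, Finset.sum_empty]
    have : max (ρ * L ^ 0) R ^ (-β) ≤ R ^ (-β) :=
      Real.rpow_le_rpow_of_nonpos hR (le_max_right _ _) (by linarith)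
    exact mul_nonneg hK.le (by linarith)
  | succ J ih =>
    have hs : 0 < ρ * L ^ J := by positivity
    have hsucc : ρ * L ^ (J + 1) = ρ * L ^ J * L := by ring
    have hle : ρ * L ^ J ≤ ρ * L ^ J * L := le_mul_of_one_le_right hs.le hL.le
    rw [Finset.range_add_one, Finset.filter_insert, hsucc]
    split_ifs with hJ
    · rw [Finset.sum_insert (by simp), max_eq_left (hJ.trans hle),
        Real.mul_rpow hs.le (by linarith)]
      rw [max_eq_left hJ] at ih
      calc _ ≤ (ρ * L ^ J) ^ (-β) + (1 - L ^ (-β))⁻¹ * (R ^ (-β) - (ρ * L ^ J) ^ (-β)) := by gcongr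
        _ = _ := by field_simp [(by linarith : 1 - L ^ (-β) ≠ 0)]; ring
    · refine ih.trans ?_
      have : max (ρ * L ^ J * L) R ^ (-β) ≤ max (ρ * L ^ J) R ^ (-β) :=
        Real.rpow_le_rpow_of_nonpos (by positivity) (by gcongr) (by linarith)
      gcongr

theorem sum_le_of_geom_rpow_le (hρ : 0 < ρ) (hL : 1 < L) (hR : 0 < R) (hα : 0 < α)
    (hβ : 0 < β) {J : ℕ} {T : ℕ → ℝ≥0∞} {X Y : ℝ≥0∞}
    (hX : ∀ j < J, ρ * L ^ j < R → T j ≤ ENNReal.ofReal ((ρ * L ^ j) ^ α) * X)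
    (hY : ∀ j < J, R ≤ ρ * L ^ j → T j ≤ ENNReal.ofReal ((ρ * L ^ j) ^ (-β)) * Y) :
    ∑ j ∈ Finset.range J, T j ≤
      ENNReal.ofReal ((1 - L ^ (-α))⁻¹ * R ^ α) * X +
        ENNReal.ofReal ((1 - L ^ (-β))⁻¹ * R ^ (-β)) * Y := by
  rw [← Finset.sum_filter_add_sum_filter_not _ (fun j ↦ ρ * L ^ j < R)]
  simp only [not_lt]
  gcongr ?_ + ?_
  · calc _ ≤ ∑ j ∈ Finset.range J with ρ * L ^ j < R, ENNReal.ofReal ((ρ * L ^ j) ^ α) * X :=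
          Finset.sum_le_sum fun j hj ↦ by
            obtain ⟨hjJ, hjR⟩ := Finset.mem_filter.1 hj
            exact hX j (Finset.mem_range.1 hjJ) hjR
      _ ≤ _ := by
          rw [← Finset.sum_mul, ← ENNReal.ofReal_sum_of_nonneg fun j _ ↦ by positivity]
          gcongr
          exact sum_geom_rpow_of_lt_le hρ hL hR hα J
  · calc _ ≤ ∑ j ∈ Finset.range J with R ≤ ρ * L ^ j, ENNReal.ofReal ((ρ * L ^ j) ^ (-β)) * Y :=
          Finset.sum_le_sum fun j hj ↦ by
            obtain ⟨hjJ, hjR⟩ := Finset.mem_filter.1 hj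
            exact hY j (Finset.mem_range.1 hjJ) hjR
      _ ≤ _ := by
          rw [← Finset.sum_mul, ← ENNReal.ofReal_sum_of_nonneg fun j _ ↦ by positivity]
          gcongr
          exact sum_geom_rpow_neg_of_le_le hρ hL hR hβ J

end GeometricSums

section Interpolation

variable {α β A C X Y : ℝ}

theorem exists_rpow_mul_eq_rpow_mul (hα : 0 < α) (hβ : 0 < β) (hX : 0 < X) (hY : 0 < Y) :
    ∃ R : ℝ, 0 < R ∧ R ^ α * X = X ^ (β / (α + β)) * Y ^ (α / (α + β)) ∧
      R ^ (-β) * Y = X ^ (β / (α + β)) * Y ^ (α / (α + β)) := by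
  have hexp : β / (α + β) = 1 - α / (α + β) := by field_simp; ring
  have hpow (s : ℝ) : ((Y / X) ^ (α + β)⁻¹) ^ s = Y ^ (s / (α + β)) / X ^ (s / (α + β)) := by
    rw [← Real.rpow_mul (by positivity), Real.div_rpow hY.le hX.le, inv_mul_eq_div]
  refine ⟨(Y / X) ^ (α + β)⁻¹, by positivity, ?_, ?_⟩
  · rw [hpow, hexp, Real.rpow_sub hX, Real.rpow_one]
    ring
  · rw [hpow, neg_div, Real.rpow_neg hY.le, Real.rpow_neg hX.le,
      (by linarith : α / (α + β) = 1 - β / (α + β)), Real.rpow_sub hY, Real.rpow_one]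
    field_simp

theorem le_rpow_mul_rpow_of_forall_le (hα : 0 < α) (hβ : 0 < β) (hC : 0 ≤ C) (hX : 0 ≤ X)
    (hY : 0 ≤ Y) (h : ∀ R : ℝ, 0 < R → A ≤ C * (R ^ α * X + R ^ (-β) * Y)) :
    A ≤ 2 * C * (X ^ (β / (α + β)) * Y ^ (α / (α + β))) := by
  have hpert (ε : ℝ) (hε : 0 < ε) :
      A ≤ 2 * C * ((X + ε) ^ (β / (α + β)) * (Y + ε) ^ (α / (α + β))) := by
    obtain ⟨R, hR, hRX, hRY⟩ :=
      exists_rpow_mul_eq_rpow_mul hα hβ (add_pos_of_nonneg_of_pos hX hε)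
        (add_pos_of_nonneg_of_pos hY hε)
    calc A ≤ C * (R ^ α * X + R ^ (-β) * Y) := h R hR
      _ ≤ C * (R ^ α * (X + ε) + R ^ (-β) * (Y + ε)) := by gcongr <;> linarith
      _ = _ := by rw [hRX, hRY]; ring
  have hcont : Continuous fun ε : ℝ ↦
      2 * C * ((X + ε) ^ (β / (α + β)) * (Y + ε) ^ (α / (α + β))) := by
    have h1 : 0 ≤ β / (α + β) := by positivity
    have h2 : 0 ≤ α / (α + β) := by positivity
    fun_prop (disch := assumption)
  have hlim := (hcont.tendsto 0).mono_left (nhdsWithin_le_nhds (s := Ioi 0))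
  simp only [add_zero] at hlim
  exact ge_of_tendsto hlim (eventually_mem_nhdsWithin.mono hpert)

theorem enn_le_rpow_mul_rpow_of_forall_le {α β : ℝ} (hα : 0 < α) (hβ : 0 < β)
    {A C X Y : ℝ≥0∞} (hC : C ≠ ⊤) (hX : X ≠ ⊤) (hY : Y ≠ ⊤)
    (h : ∀ R : ℝ, 0 < R →
      A ≤ C * (ENNReal.ofReal (R ^ α) * X + ENNReal.ofReal (R ^ (-β)) * Y)) :
    A ≤ 2 * C * (X ^ (β / (α + β)) * Y ^ (α / (α + β))) := by
  have hA : A ≠ ⊤ := ne_top_of_le_ne_top (by finiteness) (h 1 one_pos)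
  lift A to ℝ≥0 using hA
  lift C to ℝ≥0 using hC
  lift X to ℝ≥0 using hX
  lift Y to ℝ≥0 using hY
  have hreal : (A : ℝ) ≤ 2 * C * ((X : ℝ) ^ (β / (α + β)) * (Y : ℝ) ^ (α / (α + β))) := by
    refine le_rpow_mul_rpow_of_forall_le hα hβ C.2 X.2 Y.2 fun R hR ↦ ?_
    have hR' := ENNReal.toReal_mono (by finiteness) (h R hR)
    rwa [ENNReal.toReal_mul, ENNReal.toReal_add (by finiteness) (by finiteness),
      ENNReal.toReal_mul, ENNReal.toReal_mul, ENNReal.toReal_ofReal (by positivity),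
      ENNReal.toReal_ofReal (by positivity)] at hR'
  rw [← ENNReal.coe_rpow_of_nonneg _ (by positivity),
    ← ENNReal.coe_rpow_of_nonneg _ (by positivity)]
  exact_mod_cast hreal

end Interpolation

section JohnDomains

theorem infDist_frontier_pos {X : Type*} [PseudoMetricSpace X] {D : Set X} {x : X}
    (hD : IsOpen D) (hne : (frontier D).Nonempty) (hx : x ∈ D) : 0 < infDist x (frontier D) :=
  (isClosed_frontier.notMem_iff_infDist_pos hne).1 fun h ↦ (hD.frontier_eq ▸ h).2 hx

theorem ball_infDist_frontier_subset {E : Type*} [NormedAddCommGroup E] [NormedSpace ℝ E]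
    [FiniteDimensional ℝ E] {D : Set E} {x : E} (hne : (frontier D).Nonempty) (hx : x ∈ D) :
    ball x (infDist x (frontier D)) ⊆ D := by
  have hD : D ≠ univ := by
    rintro rfl
    simp at hne
  obtain ⟨y, hy, hxy⟩ := exists_mem_frontier_infDist_compl_eq_dist hx hD
  exact (ball_subset_ball (hxy ▸ infDist_le_dist_of_mem hy)).trans ball_infDist_compl_subset

variable {n : ℕ} {τ c a ρ s : ℝ} {D : Set (Eucl n)} {x y : Eucl n}

theorem mem_tauBall_iff (hτ : 0 ≤ τ) (hne : (frontier D).Nonempty) :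
    y ∈ tauBall n τ D x ↔ dist x y < τ * infDist x (frontier D) := by
  change edist x y < ENNReal.ofReal τ * infEDist x (frontier D) ↔ _
  rw [← ENNReal.ofReal_toReal (infEDist_ne_top hne), ← infDist, edist_dist,
    ← ENNReal.ofReal_mul hτ, ENNReal.ofReal_lt_ofReal_iff_of_nonneg dist_nonneg]

namespace IsJohnDomain

theorem exists_curve (hD : IsJohnDomain n c D) (hub : ¬ Bornology.IsBounded D) (hc : 1 ≤ c)
    (hx : x ∈ D) (hρ : ρ ≤ infDist x (frontier D)) (S : ℝ) :
    ∃ w : ℝ → Eucl n, w ρ = x ∧ LipschitzOnWith 1 w (Icc ρ S) ∧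
      ∀ s ∈ Icc ρ S, w s ∈ D ∧ s ≤ 3 * c * infDist (w s) (frontier D) := by
  obtain ⟨y, hy, hxy⟩ : ∃ y ∈ D, 2 * (S - ρ) < dist y x := by
    by_contra! h
    exact hub (isBounded_closedBall.subset h)
  obtain ⟨ℓ, hℓ, γ, hγ0, hγℓ, hγD, hlip, hjohn⟩ := hD.2.2 x hx y hy
  have hlength : dist y x ≤ ℓ := by
    simpa [hγ0, hγℓ, Real.dist_eq, abs_of_nonneg hℓ] using
      hlip.dist_le_mul ℓ ⟨hℓ, le_rfl⟩ 0 ⟨le_rfl, hℓ⟩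
  have hmaps : MapsTo (· - ρ) (Icc ρ S) (Icc 0 ℓ) := fun s hs ↦
    ⟨by linarith [hs.1], by linarith [hs.1, hs.2]⟩
  refine ⟨fun s ↦ γ (s - ρ), by simp [hγ0], ?_, fun s hs ↦ ⟨hγD _ (hmaps hs), ?_⟩⟩
  · exact LipschitzOnWith.of_dist_le_mul fun s hs t ht ↦ by
      simpa using hlip.dist_le_mul _ (hmaps hs) _ (hmaps ht)
  have hdrop : infDist x (frontier D) ≤ infDist (γ (s - ρ)) (frontier D) + (s - ρ) := by
    have := hlip.dist_le_mul 0 ⟨le_rfl, hℓ⟩ _ (hmaps hs)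
    rw [hγ0, Real.dist_eq, zero_sub, abs_neg, abs_of_nonneg (hmaps hs).1, NNReal.coe_one,
      one_mul] at this
    exact infDist_le_infDist_add_dist.trans (by gcongr)
  have hgrow := hjohn _ (hmaps hs)
  rw [min_eq_left (by linarith [hs.1, hs.2]), div_le_iff₀ (by linarith)] at hgrow
  nlinarith [infDist_nonneg (x := γ (s - ρ)) (s := frontier D)]

theorem frontier_nonempty (hD : IsJohnDomain n c D) (hub : ¬ Bornology.IsBounded D)
    (hc : 1 ≤ c) : (frontier D).Nonempty := by
  by_contra hempty
  obtain ⟨x, hx⟩ := hD.2.1.nonempty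
  obtain ⟨w, -, -, hw⟩ := hD.exists_curve hub hc hx (ρ := 0) infDist_nonneg 1
  have := (hw 1 ⟨zero_le_one, le_rfl⟩).2
  rw [not_nonempty_iff_eq_empty.1 hempty, infDist_empty] at this
  linarith

theorem exists_centers (hD : IsJohnDomain n c D) (hub : ¬ Bornology.IsBounded D) (hc : 1 ≤ c)
    (ha : 0 ≤ a) (hx : x ∈ D) (hρ : 0 ≤ ρ) (hρx : ρ ≤ infDist x (frontier D)) (J : ℕ) :
    ∃ w : ℕ → Eucl n, w 0 = x ∧
      (∀ j ≤ J, w j ∈ D ∧ ρ * (1 + a) ^ j ≤ 3 * c * infDist (w j) (frontier D) ∧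
        dist x (w j) ≤ ρ * (1 + a) ^ j - ρ) ∧
      ∀ j < J, dist (w j) (w (j + 1)) ≤ a * (ρ * (1 + a) ^ j) := by
  obtain ⟨w, hwx, hlip, hw⟩ := hD.exists_curve hub hc hx hρx (ρ * (1 + a) ^ J)
  have hmono : Monotone fun j ↦ ρ * (1 + a) ^ j :=
    (pow_right_mono₀ (by linarith)).const_mul hρ
  have hmem {j : ℕ} (hj : j ≤ J) : ρ * (1 + a) ^ j ∈ Icc ρ (ρ * (1 + a) ^ J) :=
    ⟨by simpa using hmono (Nat.zero_le j), hmono hj⟩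
  have hdist {i j : ℕ} (hij : i ≤ j) (hj : j ≤ J) :
      dist (w (ρ * (1 + a) ^ i)) (w (ρ * (1 + a) ^ j)) ≤ ρ * (1 + a) ^ j - ρ * (1 + a) ^ i := by
    rw [dist_comm]
    refine (hlip.dist_le_mul _ (hmem hj) _ (hmem (hij.trans hj))).trans_eq ?_
    rw [NNReal.coe_one, one_mul, Real.dist_eq, abs_of_nonneg (sub_nonneg.2 (hmono hij))]
  refine ⟨fun j ↦ w (ρ * (1 + a) ^ j), by simp [hwx],
    fun j hj ↦ ⟨(hw _ (hmem hj)).1, (hw _ (hmem hj)).2, ?_⟩, fun j hj ↦ ?_⟩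
  · simpa [hwx] using hdist (Nat.zero_le j) hj
  · exact (hdist (Nat.le_succ j) hj).trans_eq (by rw [Nat.succ_eq_add_one]; ring)

end IsJohnDomain

theorem le_infDist_frontier_of_mem_ball (hc : 0 < c) {w : Eucl n} (hac : 24 * a * c ≤ 1)
    (hs : 0 ≤ s) (hw : s ≤ 3 * c * infDist w (frontier D)) (hy : y ∈ ball w (a * s)) :
    7 * s ≤ 24 * c * infDist y (frontier D) := by
  have hdrop : infDist w (frontier D) ≤ infDist y (frontier D) + a * s :=
    infDist_le_infDist_add_dist.trans (by gcongr; exact (mem_ball'.1 hy).le)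
  nlinarith

theorem mem_tauBall_of_dist_lt (hτ : 0 ≤ τ) (hne : (frontier D).Nonempty) (ha : 0 < a)
    (haτ : 24 * a * c ≤ τ) (hs : 0 < s) (hx : 7 * s ≤ 24 * c * infDist x (frontier D))
    (hxy : dist x y < 4 * (a * s)) : y ∈ tauBall n τ D x := by
  rw [mem_tauBall_iff hτ hne]
  calc dist x y < 4 * (a * s) := hxy
    _ ≤ a * (7 * s) := by nlinarith [mul_pos ha hs]
    _ ≤ a * (24 * c * infDist x (frontier D)) := by gcongr
    _ = 24 * a * c * infDist x (frontier D) := by ring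
    _ ≤ τ * infDist x (frontier D) := by gcongr; exact infDist_nonneg

/-- A chain of balls `B_j = B(w_j, a s_j)`, `j ≤ J`, with `s_j = ρ (1 + a)^j`, leading away from
`x` inside `D`. Neighbouring balls are close relative to the distance to `∂D`, and if
`ρ = dist(x, ∂D)` then each `y ∈ B_j` satisfies `dist(y, ∂D) ≈ s_j ≳ |x - y|`. -/
structure IsJohnChain (n : ℕ) (τ c a ρ : ℝ) (D : Set (Eucl n)) (x : Eucl n) (J : ℕ)
    (w : ℕ → Eucl n) : Prop where
  ball_subset : ∀ j ≤ J, ball (w j) (a * (ρ * (1 + a) ^ j)) ⊆ D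
  start : ball (w 0) (a * ρ) ⊆ tauBall n τ D x ∩ closedBall x (4 * (a * ρ))
  step : ∀ j < J, ∀ y ∈ ball (w j) (a * (ρ * (1 + a) ^ j)),
    ball (w (j + 1)) (a * (ρ * (1 + a) ^ (j + 1))) ⊆
      tauBall n τ D y ∩ closedBall y (4 * (a * (ρ * (1 + a) ^ (j + 1))))
  mem_ball : ρ = infDist x (frontier D) → ∀ j ≤ J, ∀ y ∈ ball (w j) (a * (ρ * (1 + a) ^ j)),
    x ∈ ball y (8 * c * infDist y (frontier D))
  infDist_le : ρ = infDist x (frontier D) → ∀ j ≤ J, ∀ y ∈ ball (w j) (a * (ρ * (1 + a) ^ j)),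
    infDist y (frontier D) ≤ 2 * (ρ * (1 + a) ^ j)

theorem IsJohnDomain.exists_isJohnChain (hD : IsJohnDomain n c D)
    (hub : ¬ Bornology.IsBounded D) (hc : 1 ≤ c) (ha : 0 < a) (hac : 24 * a * c ≤ 1)
    (haτ : 24 * a * c ≤ τ) (hx : x ∈ D) (hρ : 0 < ρ) (hρx : ρ ≤ infDist x (frontier D)) (J : ℕ) :
    ∃ w, IsJohnChain n τ c a ρ D x J w := by
  have hc0 : 0 < c := one_pos.trans_le hc
  have hτ : 0 ≤ τ := by nlinarith [mul_pos ha hc0]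
  have hne := hD.frontier_nonempty hub hc
  obtain ⟨w, hwx, hw, hstep⟩ := hD.exists_centers hub hc ha.le hx hρ.le hρx J
  have hs (j : ℕ) : 0 < ρ * (1 + a) ^ j := by positivity
  have hdeep {j : ℕ} (hj : j ≤ J) {y : Eucl n} (hy : y ∈ ball (w j) (a * (ρ * (1 + a) ^ j))) :
      7 * (ρ * (1 + a) ^ j) ≤ 24 * c * infDist y (frontier D) :=
    le_infDist_frontier_of_mem_ball hc0 hac (hs j).le (hw j hj).2.1 hy
  have hfar {j : ℕ} (hj : j ≤ J) {y : Eucl n} (hy : y ∈ ball (w j) (a * (ρ * (1 + a) ^ j))) :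
      dist x y < 2 * (ρ * (1 + a) ^ j) - ρ := by
    nlinarith [dist_triangle x (w j) y, mem_ball'.1 hy, hs j, (hw j hj).2.2]
  refine ⟨w, fun j hj ↦ ?_, fun z hz ↦ ?_, fun j hj y hy z hz ↦ ?_,
    fun _ j hj y hy ↦ ?_, fun hρx j hj y hy ↦ ?_⟩
  · obtain ⟨hwD, hdepth, -⟩ := hw j hj
    refine (ball_subset_ball ?_).trans (ball_infDist_frontier_subset hne hwD)
    nlinarith [infDist_nonneg (x := w j) (s := frontier D)]
  · rw [hwx, mem_ball'] at hz
    have hxz : dist x z < 4 * (a * ρ) := by nlinarith [mul_pos ha hρ]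
    exact ⟨mem_tauBall_of_dist_lt hτ hne ha haτ hρ (by nlinarith) hxz, mem_closedBall'.2 hxz.le⟩
  · have htriangle := dist_triangle4 y (w j) (w (j + 1)) z
    have hpos : 0 < a * (ρ * (1 + a) ^ j) := mul_pos ha (hs j)
    have hsucc : a * (ρ * (1 + a) ^ (j + 1)) = (1 + a) * (a * (ρ * (1 + a) ^ j)) := by ring
    rw [mem_ball', hsucc] at hz
    rw [hsucc]
    exact ⟨mem_tauBall_of_dist_lt hτ hne ha haτ (hs j) (hdeep hj.le hy)
        (by nlinarith [hstep j hj, mem_ball.1 hy]),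
      mem_closedBall'.2 (by nlinarith [hstep j hj, mem_ball.1 hy])⟩
  · rw [mem_ball]
    linarith [hfar hj hy, hdeep hj hy, hs j]
  · linarith [hfar hj hy, infDist_le_infDist_add_dist (x := y) (y := x) (s := frontier D),
      dist_comm x y]

end JohnDomains

section EnergyDensity

open ProbabilityTheory

theorem lintegral_cond {α : Type*} [MeasurableSpace α] (μ : Measure α) (s : Set α)
    (f : α → ℝ≥0∞) : ∫⁻ x, f x ∂μ[|s] = (∫⁻ x in s, f x ∂μ) / μ s := by
  rw [ProbabilityTheory.cond, lintegral_smul_measure, smul_eq_mul, mul_comm, div_eq_mul_inv]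

theorem isProbabilityMeasure_cond_ball {n : ℕ} {r : ℝ} (w : Eucl n) (hr : 0 < r) :
    IsProbabilityMeasure (volume[|ball w r]) :=
  cond_isProbabilityMeasure_of_finite (measure_ball_pos _ _ hr).ne' measure_ball_lt_top.ne

theorem volume_ball_eq {n : ℕ} {r : ℝ} (w : Eucl n) (hr : 0 < r) :
    volume (ball w r) = ENNReal.ofReal (r ^ n) * volume (ball (0 : Eucl n) 1) := by
  simp [Measure.addHaar_ball_of_pos volume w hr]

variable {n : ℕ} {δ τ p : ℝ} {D : Set (Eucl n)} {u : Eucl n → ℝ}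

theorem measurable_fracKernel (hu : Measurable u) :
    Measurable fun q : Eucl n × Eucl n ↦ fracKernel n δ p u q.1 q.2 := by
  unfold fracKernel
  fun_prop

theorem edist_rpow_le_mul_fracKernel (hδ : 0 ≤ δ) (hp : 0 < p) {y z : Eucl n} {L : ℝ}
    (hL : dist y z ≤ L) :
    edist (u y) (u z) ^ p ≤ ENNReal.ofReal (L ^ ((n : ℝ) + δ * p)) * fracKernel n δ p u y z := by
  have hL0 : 0 ≤ L := dist_nonneg.trans hL
  rw [edist_dist, Real.dist_eq, ENNReal.ofReal_rpow_of_nonneg (abs_nonneg _) hp.le, fracKernel,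
    ← ENNReal.ofReal_mul (by positivity)]
  refine ENNReal.ofReal_le_ofReal ?_
  rcases eq_or_ne y z with rfl | hyz
  · simp [Real.zero_rpow hp.ne']
  · have hdist : 0 < dist y z := dist_pos.2 hyz
    rw [mul_div_assoc', le_div_iff₀ (by positivity), mul_comm]
    gcongr

theorem fracEnergyTau_comp_le (hp : 0 ≤ p) {φ : ℝ → ℝ} (hφ : LipschitzWith 1 φ) :
    fracEnergyTau n δ τ p D (φ ∘ u) ≤ fracEnergyTau n δ τ p D u := by
  refine lintegral_mono fun x ↦ lintegral_mono fun y ↦ ENNReal.ofReal_le_ofReal ?_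
  have hlip : |φ (u x) - φ (u y)| ≤ |u x - u y| := by
    simpa only [Real.dist_eq, NNReal.coe_one, one_mul] using hφ.dist_le_mul (u x) (u y)
  exact div_le_div_of_nonneg_right (Real.rpow_le_rpow (abs_nonneg _) hlip hp) (by positivity)

/-- The density of the fractional energy, so that `|u|^p_{W^{δ,p}_τ(D)}` is its integral
over `D`. -/
noncomputable def energyDensity (n : ℕ) (δ τ p : ℝ) (D : Set (Eucl n)) (u : Eucl n → ℝ)
    (y : Eucl n) : ℝ≥0∞ :=
  ∫⁻ z in tauBall n τ D y, fracKernel n δ p u y z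

theorem measurable_energyDensity (hu : Measurable u) :
    Measurable (energyDensity n δ τ p D u) := by
  have hset : MeasurableSet {q : Eucl n × Eucl n | q.2 ∈ tauBall n τ D q.1} :=
    measurableSet_lt (by fun_prop)
      ((measurable_infEDist.comp measurable_fst).const_mul (ENNReal.ofReal τ))
  have hind := ((measurable_fracKernel (δ := δ) (p := p) hu).indicator hset).lintegral_prod_right'
    (ν := volume)
  convert hind using 2 with y
  exact (lintegral_indicator (measurable_prodMk_left hset) _).symm

/-- The constant in the fractional Poincaré inequality `lintegral_lintegral_edist_le`. -/
noncomputable def oscConst (n : ℕ) (δ p : ℝ) : ℝ≥0∞ :=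
  (ENNReal.ofReal (4 ^ ((n : ℝ) + δ * p)) / volume (ball (0 : Eucl n) 1)) ^ p⁻¹

theorem oscConst_ne_top (hp : 0 ≤ p) : oscConst n δ p ≠ ⊤ :=
  ENNReal.rpow_ne_top_of_nonneg (inv_nonneg.2 hp)
    (ENNReal.div_ne_top ENNReal.ofReal_ne_top (measure_ball_pos _ _ one_pos).ne')

theorem ofReal_rpow_div_volume_ball (hp : 0 < p) {r : ℝ} (hr : 0 < r) (w : Eucl n) :
    ENNReal.ofReal ((4 * r) ^ ((n : ℝ) + δ * p)) / volume (ball w r) =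
      (oscConst n δ p * ENNReal.ofReal (r ^ δ)) ^ p := by
  have hrn : ENNReal.ofReal (r ^ n) ≠ 0 := (ENNReal.ofReal_pos.2 (pow_pos hr n)).ne'
  have hsplit : (4 * r) ^ ((n : ℝ) + δ * p) = r ^ n * (4 ^ ((n : ℝ) + δ * p) * r ^ (δ * p)) := by
    rw [Real.mul_rpow (by norm_num) hr.le, Real.rpow_add hr, Real.rpow_natCast]
    ring
  rw [ENNReal.mul_rpow_of_nonneg _ _ hp.le, oscConst, ENNReal.rpow_inv_rpow hp.ne',
    ENNReal.ofReal_rpow_of_pos (by positivity), ← Real.rpow_mul hr.le, volume_ball_eq w hr,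
    hsplit, ENNReal.ofReal_mul (by positivity),
    ENNReal.mul_div_mul_left _ _ hrn ENNReal.ofReal_ne_top, ENNReal.ofReal_mul (by positivity),
    ENNReal.mul_div_right_comm]

theorem lintegral_edist_rpow_cond_le (hδ : 0 ≤ δ) (hp : 0 < p) {y w : Eucl n} {r : ℝ}
    (hy : ball w r ⊆ tauBall n τ D y ∩ closedBall y (4 * r)) :
    ∫⁻ z, edist (u y) (u z) ^ p ∂volume[|ball w r] ≤
      ENNReal.ofReal ((4 * r) ^ ((n : ℝ) + δ * p)) / volume (ball w r) *
        energyDensity n δ τ p D u y := by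
  rw [lintegral_cond, ← ENNReal.mul_div_right_comm]
  gcongr
  calc ∫⁻ z in ball w r, edist (u y) (u z) ^ p
      ≤ ∫⁻ z in ball w r, ENNReal.ofReal ((4 * r) ^ ((n : ℝ) + δ * p)) * fracKernel n δ p u y z :=
        setLIntegral_mono' measurableSet_ball fun z hz ↦
          edist_rpow_le_mul_fracKernel hδ hp (mem_closedBall'.1 (hy hz).2)
    _ = ENNReal.ofReal ((4 * r) ^ ((n : ℝ) + δ * p)) * ∫⁻ z in ball w r, fracKernel n δ p u y z :=
        lintegral_const_mul' _ _ ENNReal.ofReal_ne_top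
    _ ≤ _ := by
        gcongr
        exact lintegral_mono_set fun z hz ↦ (hy hz).1

theorem lintegral_lintegral_edist_le (hδ : 0 ≤ δ) (hp : 1 ≤ p) (hu : Measurable u)
    {μ : Measure (Eucl n)} [IsProbabilityMeasure μ] {w : Eucl n} {r : ℝ} (hr : 0 < r)
    (hμ : ∀ᵐ y ∂μ, ball w r ⊆ tauBall n τ D y ∩ closedBall y (4 * r)) :
    ∫⁻ y, ∫⁻ z, edist (u y) (u z) ∂volume[|ball w r] ∂μ ≤
      oscConst n δ p * ENNReal.ofReal (r ^ δ) * (∫⁻ y, energyDensity n δ τ p D u y ∂μ) ^ p⁻¹ := by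
  have hp0 : 0 < p := one_pos.trans_le hp
  have := isProbabilityMeasure_cond_ball w hr
  calc ∫⁻ y, ∫⁻ z, edist (u y) (u z) ∂volume[|ball w r] ∂μ
      ≤ (∫⁻ y, ∫⁻ z, edist (u y) (u z) ^ p ∂volume[|ball w r] ∂μ) ^ p⁻¹ :=
        lintegral_lintegral_le_rpow_inv (by fun_prop) hp
    _ ≤ (∫⁻ y, (oscConst n δ p * ENNReal.ofReal (r ^ δ)) ^ p *
          energyDensity n δ τ p D u y ∂μ) ^ p⁻¹ := by
        gcongr ?_ ^ _
        refine lintegral_mono_ae (hμ.mono fun y hy ↦ ?_)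
        rw [← ofReal_rpow_div_volume_ball hp0 hr w]
        exact lintegral_edist_rpow_cond_le hδ hp0 hy
    _ = _ := by
        rw [lintegral_const_mul _ (measurable_energyDensity hu),
          ENNReal.mul_rpow_of_nonneg _ _ (inv_nonneg.2 hp0.le), ENNReal.rpow_rpow_inv hp0.ne']

end EnergyDensity

section HedbergEstimate

open Filter ProbabilityTheory Topology

variable {n J j : ℕ} {c a ρ δ τ p R : ℝ} {D : Set (Eucl n)} {u : Eucl n → ℝ} {x : Eucl n}
  {w : ℕ → Eucl n}

/-- A function with integral at most `2 |u|^p_{W^{δ,p}_τ(D)}` over `D` that controls the averages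
of the energy density over all John chain balls of size `≲ |x - y|`. It plays the role that the
Hardy–Littlewood maximal function has in Hedberg's argument. -/
noncomputable def sweptEnergy (n : ℕ) (c δ τ p : ℝ) (D : Set (Eucl n)) (u : Eucl n → ℝ)
    (x : Eucl n) : ℝ≥0∞ :=
  energyDensity n δ τ p D u x +
    ballSweep volume (volume.restrict D) (fun y ↦ 8 * c * infDist y (frontier D))
      (energyDensity n δ τ p D u) x

theorem measurable_sweptEnergy (hu : Measurable u) : Measurable (sweptEnergy n c δ τ p D u) :=
  (measurable_energyDensity hu).add
    (measurable_ballSweep (measurable_infDist.const_mul _) (measurable_energyDensity hu))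

theorem setLIntegral_sweptEnergy_le (hc : 0 < c) (hD : IsOpen D) (hne : (frontier D).Nonempty)
    (hu : Measurable u) :
    ∫⁻ x in D, sweptEnergy n c δ τ p D u x ≤ 2 * fracEnergyTau n δ τ p D u := by
  have hr : Measurable fun y : Eucl n ↦ 8 * c * infDist y (frontier D) :=
    measurable_infDist.const_mul _
  have hpos : ∀ᵐ y ∂volume.restrict D, volume (ball y (8 * c * infDist y (frontier D))) ≠ 0 :=
    (ae_restrict_mem hD.measurableSet).mono fun y hy ↦ (measure_ball_pos _ _
      (mul_pos (by positivity) (infDist_frontier_pos hD hne hy))).ne'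
  simp only [sweptEnergy]
  rw [lintegral_add_left (measurable_energyDensity hu), two_mul]
  gcongr
  · exact le_rfl
  · calc _ ≤ ∫⁻ x, ballSweep volume (volume.restrict D) (fun y ↦ 8 * c * infDist y (frontier D))
            (energyDensity n δ τ p D u) x := setLIntegral_le_lintegral _ _
      _ = fracEnergyTau n δ τ p D u :=
          lintegral_ballSweep hr (measurable_energyDensity hu) hpos
            (ae_of_all _ fun y ↦ measure_ball_lt_top.ne)

namespace IsJohnChain

theorem lintegral_cond_ball_le_div (hw : IsJohnChain n τ c a ρ D x J w) (hj : j ≤ J)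
    (f : Eucl n → ℝ≥0∞) :
    ∫⁻ y, f y ∂volume[|ball (w j) (a * (ρ * (1 + a) ^ j))] ≤
      (∫⁻ y in D, f y) / volume (ball (w j) (a * (ρ * (1 + a) ^ j))) := by
  rw [lintegral_cond]
  gcongr
  exact hw.ball_subset j hj

theorem volume_ball_le (hw : IsJohnChain n τ c a ρ D x J w) (hc : 0 < c) (ha : 0 < a)
    (hρ : 0 < ρ) (hρx : ρ = infDist x (frontier D)) (hj : j ≤ J) {y : Eucl n}
    (hy : y ∈ ball (w j) (a * (ρ * (1 + a) ^ j))) :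
    volume (ball y (8 * c * infDist y (frontier D))) ≤
      ENNReal.ofReal ((16 * c / a) ^ n) * volume (ball (w j) (a * (ρ * (1 + a) ^ j))) := by
  have hr : 8 * c * infDist y (frontier D) ≤ 16 * c / a * (a * (ρ * (1 + a) ^ j)) :=
    calc 8 * c * infDist y (frontier D) ≤ 8 * c * (2 * (ρ * (1 + a) ^ j)) := by
          gcongr
          exact hw.infDist_le hρx j hj y hy
      _ = 16 * c / a * (a * (ρ * (1 + a) ^ j)) := by field_simp; ring
  calc volume (ball y (8 * c * infDist y (frontier D)))
      ≤ volume (ball y (16 * c / a * (a * (ρ * (1 + a) ^ j)))) :=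
        measure_mono (ball_subset_ball hr)
    _ = _ := by
        rw [volume_ball_eq y (by positivity), volume_ball_eq (w j) (by positivity), mul_pow,
          ENNReal.ofReal_mul (by positivity), mul_assoc]

theorem lintegral_cond_ball_le_sweptEnergy (hw : IsJohnChain n τ c a ρ D x J w) (hc : 0 < c)
    (ha : 0 < a) (hρ : 0 < ρ) (hρx : ρ = infDist x (frontier D)) (hj : j ≤ J) :
    ∫⁻ y, energyDensity n δ τ p D u y ∂volume[|ball (w j) (a * (ρ * (1 + a) ^ j))] ≤
      ENNReal.ofReal ((16 * c / a) ^ n) * sweptEnergy n c δ τ p D u x := by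
  have hM : ENNReal.ofReal ((16 * c / a) ^ n) ≠ 0 := (ENNReal.ofReal_pos.2 (by positivity)).ne'
  have hB : volume (ball (w j) (a * (ρ * (1 + a) ^ j))) ≠ 0 :=
    (measure_ball_pos _ _ (by positivity)).ne'
  have hsweep := setLIntegral_div_le_ballSweep (ν := volume.restrict D)
    (g := energyDensity n δ τ p D u) measurableSet_ball (hw.mem_ball hρx j hj)
    (fun _ ↦ hw.volume_ball_le hc ha hρ hρx hj) (mul_ne_zero hM hB)
  rw [Measure.restrict_restrict_of_subset (hw.ball_subset j hj)] at hsweep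
  rw [lintegral_cond, ← ENNReal.mul_div_mul_left _ _ hM ENNReal.ofReal_ne_top, mul_div_assoc]
  gcongr
  exact hsweep.trans le_add_self

end IsJohnChain

/-- The measures averaged against along a chain of balls `B(w_j, r_j)` starting from the point `x`:
the Dirac mass at `x`, followed by the uniform probability measures on the balls. -/
noncomputable def chainMeasure (x : Eucl n) (w : ℕ → Eucl n) (r : ℕ → ℝ) : ℕ → Measure (Eucl n)
  | 0 => Measure.dirac x
  | j + 1 => volume[|ball (w j) (r j)]

theorem isProbabilityMeasure_chainMeasure {r : ℕ → ℝ} (hr : ∀ j, 0 < r j) :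
    ∀ j, IsProbabilityMeasure (chainMeasure x w r j)
  | 0 => Measure.dirac.isProbabilityMeasure
  | j + 1 => isProbabilityMeasure_cond_ball (w j) (hr j)

namespace IsJohnChain

theorem enorm_le_sum_add (hw : IsJohnChain n τ c a ρ D x J w) (hδ : 0 ≤ δ) (hp : 1 ≤ p)
    (hu : Measurable u) (ha : 0 < a) (hρ : 0 < ρ) :
    ‖u x‖ₑ ≤ oscConst n δ p * (ENNReal.ofReal ((a * ρ) ^ δ) * energyDensity n δ τ p D u x ^ p⁻¹ +
      ∑ j ∈ Finset.range J, ENNReal.ofReal ((a * (ρ * (1 + a) ^ (j + 1))) ^ δ) *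
        (∫⁻ y, energyDensity n δ τ p D u y
          ∂volume[|ball (w j) (a * (ρ * (1 + a) ^ j))]) ^ p⁻¹) +
      ∫⁻ z, ‖u z‖ₑ ∂volume[|ball (w J) (a * (ρ * (1 + a) ^ J))] := by
  set r : ℕ → ℝ := fun j ↦ a * (ρ * (1 + a) ^ j) with hr_def
  have hr (j : ℕ) : 0 < r j := by positivity
  have hprob := isProbabilityMeasure_chainMeasure (x := x) (w := w) hr
  have htelescope := lintegral_edist_le_sum_add hu 0 (chainMeasure x w r) (J + 1)
  rw [chainMeasure, lintegral_dirac, Finset.sum_range_succ'] at htelescope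
  simp only [edist_zero_left] at htelescope
  refine htelescope.trans ?_
  rw [add_comm (Finset.sum _ _), mul_add, Finset.mul_sum]
  refine add_le_add_left (add_le_add ?_ (Finset.sum_le_sum fun j hj ↦ ?_)) _
  · have hstart : ∀ᵐ y ∂Measure.dirac x, ball (w 0) (r 0) ⊆
        tauBall n τ D y ∩ closedBall y (4 * r 0) := by
      rw [ae_dirac_eq]
      simpa [r] using hw.start
    have hosc := lintegral_lintegral_edist_le hδ hp hu (hr 0) hstart
    rw [lintegral_dirac x (energyDensity n δ τ p D u)] at hosc
    simpa only [chainMeasure, hr_def, pow_zero, mul_one, mul_assoc] using hosc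
  · have hstep : ∀ᵐ y ∂volume[|ball (w j) (r j)], ball (w (j + 1)) (r (j + 1)) ⊆
        tauBall n τ D y ∩ closedBall y (4 * r (j + 1)) :=
      (ae_cond_mem measurableSet_ball).mono (hw.step j (Finset.mem_range.1 hj))
    have := isProbabilityMeasure_cond_ball (w j) (hr j)
    have hosc := lintegral_lintegral_edist_le hδ hp hu (hr (j + 1)) hstep
    rwa [mul_assoc] at hosc

theorem lintegral_cond_ball_rpow_le_energy (hw : IsJohnChain n τ c a ρ D x J w) (hp : 0 < p)
    (ha : 0 < a) (hρ : 0 < ρ) (hj : j ≤ J) :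
    (∫⁻ y, energyDensity n δ τ p D u y ∂volume[|ball (w j) (a * (ρ * (1 + a) ^ j))]) ^ p⁻¹ ≤
      ENNReal.ofReal ((ρ * (1 + a) ^ j) ^ (-(n / p))) *
        ((ENNReal.ofReal (a ^ n) * volume (ball (0 : Eucl n) 1))⁻¹ ^ p⁻¹ *
          fracEnergyTau n δ τ p D u ^ p⁻¹) := by
  set s := ρ * (1 + a) ^ j
  have hs : 0 < s := by positivity
  have hpow : ENNReal.ofReal (s ^ (-(n / p))) = (ENNReal.ofReal (s ^ n))⁻¹ ^ p⁻¹ := by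
    rw [← ENNReal.ofReal_inv_of_pos (by positivity), ENNReal.ofReal_rpow_of_pos (by positivity),
      ← Real.rpow_natCast, ← Real.rpow_neg hs.le, ← Real.rpow_mul hs.le, div_eq_mul_inv,
      neg_mul]
  rw [hpow, ← ENNReal.mul_rpow_of_nonneg _ _ (by positivity),
    ← ENNReal.mul_rpow_of_nonneg _ _ (by positivity)]
  gcongr
  refine (hw.lintegral_cond_ball_le_div hj _).trans_eq ?_
  rw [volume_ball_eq (w j) (by positivity), mul_pow, mul_comm (a ^ n),
    ENNReal.ofReal_mul (by positivity), mul_assoc,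
    div_eq_mul_inv, mul_comm, ENNReal.mul_inv (Or.inl (ENNReal.ofReal_pos.2 (pow_pos hs n)).ne')
      (Or.inl ENNReal.ofReal_ne_top), mul_assoc]
  rfl

theorem sum_le (hw : IsJohnChain n τ c a ρ D x J w) (hδ : 0 < δ) (hp : 0 < p) (hδp : δ * p < n)
    (hc : 0 < c) (ha : 0 < a) (ha1 : a ≤ 1 / 2) (hR : 0 < R) (hρ : 0 < ρ)
    (hρR : ρ = min (infDist x (frontier D)) R) :
    ∑ j ∈ Finset.range J, ENNReal.ofReal ((a * (ρ * (1 + a) ^ (j + 1))) ^ δ) *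
        (∫⁻ y, energyDensity n δ τ p D u y
          ∂volume[|ball (w j) (a * (ρ * (1 + a) ^ j))]) ^ p⁻¹ ≤
      ENNReal.ofReal ((1 - (1 + a) ^ (-δ))⁻¹ * R ^ δ) *
          (ENNReal.ofReal ((16 * c / a) ^ n) * sweptEnergy n c δ τ p D u x) ^ p⁻¹ +
        ENNReal.ofReal ((1 - (1 + a) ^ (-(n / p - δ)))⁻¹ * R ^ (-(n / p - δ))) *
          ((ENNReal.ofReal (a ^ n) * volume (ball (0 : Eucl n) 1))⁻¹ ^ p⁻¹ *
            fracEnergyTau n δ τ p D u ^ p⁻¹) := by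
  have hβ : 0 < n / p - δ := sub_pos.2 ((lt_div_iff₀ hp).2 hδp)
  have hs (j : ℕ) : 0 < ρ * (1 + a) ^ j := by positivity
  have hscale (j : ℕ) : ENNReal.ofReal ((a * (ρ * (1 + a) ^ (j + 1))) ^ δ) ≤
      ENNReal.ofReal ((ρ * (1 + a) ^ j) ^ δ) := by
    refine ENNReal.ofReal_le_ofReal (Real.rpow_le_rpow (by positivity) ?_ hδ.le)
    calc a * (ρ * (1 + a) ^ (j + 1)) = a * (1 + a) * (ρ * (1 + a) ^ j) := by ring
      _ ≤ ρ * (1 + a) ^ j := mul_le_of_le_one_left (hs j).le (by nlinarith)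
  refine sum_le_of_geom_rpow_le hρ (by linarith) hR hδ hβ (fun j hj hjR ↦ ?_) fun j hj _ ↦ ?_
  · have hρx : ρ = infDist x (frontier D) := by
      have hρ_lt : ρ < R :=
        (le_mul_of_one_le_right hρ.le (one_le_pow₀ (by linarith))).trans_lt hjR
      rw [hρR, min_eq_left]
      by_contra! h
      exact hρ_lt.ne (hρR.trans (min_eq_right h.le))
    gcongr ?_ * ?_ ^ _
    · exact hscale j
    · exact hw.lintegral_cond_ball_le_sweptEnergy hc ha hρ hρx hj.le
  · have hexp : (ρ * (1 + a) ^ j) ^ (-(n / p - δ)) =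
        (ρ * (1 + a) ^ j) ^ δ * (ρ * (1 + a) ^ j) ^ (-(n / p)) := by
      rw [← Real.rpow_add (hs j)]
      ring_nf
    rw [hexp, ENNReal.ofReal_mul (by positivity), mul_assoc]
    gcongr ?_ * ?_
    · exact hscale j
    · exact hw.lintegral_cond_ball_rpow_le_energy hp ha hρ hj.le

end IsJohnChain

/-- The constant of the pointwise Hedberg estimate, up to the optimisation in the scale `R`. The
two geometric sums come from the scales below and above `R`. -/
noncomputable def hedbergConst (n : ℕ) (c a δ p : ℝ) : ℝ≥0∞ :=
  oscConst n δ p * (1 +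
    ENNReal.ofReal (1 - (1 + a) ^ (-δ))⁻¹ * ENNReal.ofReal ((16 * c / a) ^ n) ^ p⁻¹ +
    ENNReal.ofReal (1 - (1 + a) ^ (-(n / p - δ)))⁻¹ *
      (ENNReal.ofReal (a ^ n) * volume (ball (0 : Eucl n) 1))⁻¹ ^ p⁻¹)

theorem hedbergConst_ne_top (ha : 0 < a) (hp : 0 ≤ p) : hedbergConst n c a δ p ≠ ⊤ := by
  have hball : ENNReal.ofReal (a ^ n) * volume (ball (0 : Eucl n) 1) ≠ 0 :=
    mul_ne_zero (ENNReal.ofReal_pos.2 (pow_pos ha n)).ne' (measure_ball_pos _ _ one_pos).ne'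
  have hosc := oscConst_ne_top (n := n) (δ := δ) hp
  rw [hedbergConst]
  finiteness [inv_nonneg.2 hp, ENNReal.inv_ne_top.2 hball]

theorem IsJohnChain.enorm_le_hedbergConst_mul_add (hw : IsJohnChain n τ c a ρ D x J w)
    (hδ : 0 < δ) (hp : 1 ≤ p) (hδp : δ * p < n) (hu : Measurable u) (hc : 0 < c) (ha : 0 < a)
    (ha1 : a ≤ 1 / 2) (hR : 0 < R) (hρ : 0 < ρ) (hρR : ρ = min (infDist x (frontier D)) R) :
    ‖u x‖ₑ ≤ hedbergConst n c a δ p *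
        (ENNReal.ofReal (R ^ δ) * sweptEnergy n c δ τ p D u x ^ p⁻¹ +
          ENNReal.ofReal (R ^ (-(n / p - δ))) * fracEnergyTau n δ τ p D u ^ p⁻¹) +
      ∫⁻ z, ‖u z‖ₑ ∂volume[|ball (w J) (a * (ρ * (1 + a) ^ J))] := by
  have hp0 : 0 < p := one_pos.trans_le hp
  set X := ENNReal.ofReal (R ^ δ) * sweptEnergy n c δ τ p D u x ^ p⁻¹ with hX
  set Y := ENNReal.ofReal (R ^ (-(n / p - δ))) * fracEnergyTau n δ τ p D u ^ p⁻¹ with hY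
  have hstart : ENNReal.ofReal ((a * ρ) ^ δ) * energyDensity n δ τ p D u x ^ p⁻¹ ≤ X := by
    have haρ : a * ρ ≤ R := by
      nlinarith [hρR.trans_le (min_le_right _ R)]
    rw [hX]
    gcongr
    exact le_self_add
  have hsum := hw.sum_le (u := u) hδ hp0 hδp hc ha ha1 hR hρ hρR
  rw [ENNReal.mul_rpow_of_nonneg _ _ (inv_nonneg.2 hp0.le), ENNReal.ofReal_mul' (by positivity),
    ENNReal.ofReal_mul' (by positivity), mul_mul_mul_comm _ (ENNReal.ofReal (R ^ δ)),
    mul_mul_mul_comm _ (ENNReal.ofReal (R ^ (-(n / p - δ)))), ← hX, ← hY] at hsum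
  refine (hw.enorm_le_sum_add hδ.le hp hu ha hρ).trans (add_le_add_left ?_ _)
  rw [hedbergConst, mul_assoc]
  gcongr
  refine (add_le_add hstart hsum).trans ?_
  generalize ENNReal.ofReal _ * _ = t, ENNReal.ofReal _ * _ = s
  calc X + (s * X + t * Y) ≤ X + (s * X + t * Y) + (Y + s * Y + t * X) := le_self_add
    _ = (1 + s + t) * (X + Y) := by ring

theorem tendsto_const_div_volume_ball (hn : n ≠ 0) {I : ℝ≥0∞} (hI : I ≠ ⊤) {r : ℕ → ℝ}
    (hr : Tendsto r atTop atTop) (w : ℕ → Eucl n) :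
    Tendsto (fun J ↦ I / volume (ball (w J) (r J))) atTop (𝓝 0) := by
  have hvol : Tendsto (fun J ↦ volume (ball (w J) (r J))) atTop (𝓝 ⊤) := by
    have hpow := ENNReal.tendsto_ofReal_nhds_top.2 ((tendsto_pow_atTop hn).comp hr)
    have hmul := ENNReal.Tendsto.mul_const (b := volume (ball (0 : Eucl n) 1)) hpow
      (Or.inl ENNReal.top_ne_zero)
    rw [ENNReal.top_mul (measure_ball_pos _ _ one_pos).ne'] at hmul
    refine hmul.congr' ?_
    filter_upwards [hr.eventually_gt_atTop 0] with J hJ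
    exact (volume_ball_eq (w J) hJ).symm
  simpa only [ENNReal.div_top] using ENNReal.Tendsto.const_div hvol (Or.inr hI)

namespace IsJohnDomain

theorem enorm_le_hedbergConst_mul (hD : IsJohnDomain n c D) (hub : ¬ Bornology.IsBounded D)
    (hc : 1 ≤ c) (ha : 0 < a) (hac : 24 * a * c ≤ 1) (haτ : 24 * a * c ≤ τ) (hδ : 0 < δ)
    (hp : 1 ≤ p) (hδp : δ * p < n) (hu : Measurable u) (hint : ∫⁻ y in D, ‖u y‖ₑ ≠ ⊤)
    (hx : x ∈ D) (hR : 0 < R) :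
    ‖u x‖ₑ ≤ hedbergConst n c a δ p *
      (ENNReal.ofReal (R ^ δ) * sweptEnergy n c δ τ p D u x ^ p⁻¹ +
        ENNReal.ofReal (R ^ (-(n / p - δ))) * fracEnergyTau n δ τ p D u ^ p⁻¹) := by
  have hn : n ≠ 0 := by
    rintro rfl
    have : 0 < δ * p := mul_pos hδ (one_pos.trans_le hp)
    exact this.not_gt (by simpa using hδp)
  set ρ := min (infDist x (frontier D)) R with hρR
  have hρ : 0 < ρ := lt_min (infDist_frontier_pos hD.1 (hD.frontier_nonempty hub hc) hx) hR
  choose w hw using hD.exists_isJohnChain hub hc ha hac haτ hx hρ (min_le_left _ R)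
  have hradius : Tendsto (fun J ↦ a * (ρ * (1 + a) ^ J)) atTop atTop :=
    ((tendsto_pow_atTop_atTop_of_one_lt (by linarith)).const_mul_atTop hρ).const_mul_atTop ha
  have htail := tendsto_const_div_volume_ball hn hint hradius fun J ↦ w J J
  refine ge_of_tendsto' (add_zero (hedbergConst n c a δ p * _) ▸ htail.const_add _) fun J ↦ ?_
  exact ((hw J).enorm_le_hedbergConst_mul_add hδ hp hδp hu (by linarith) ha (by nlinarith) hR hρ
    hρR).trans (add_le_add_right ((hw J).lintegral_cond_ball_le_div le_rfl _) _)

theorem enorm_rpow_le (hD : IsJohnDomain n c D) (hub : ¬ Bornology.IsBounded D)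
    (hc : 1 ≤ c) (ha : 0 < a) (hac : 24 * a * c ≤ 1) (haτ : 24 * a * c ≤ τ) (hδ : 0 < δ)
    (hp : 1 ≤ p) (hδp : δ * p < n) (hu : Measurable u) (hint : ∫⁻ y in D, ‖u y‖ₑ ≠ ⊤)
    (hE : fracEnergyTau n δ τ p D u ≠ ⊤) (hx : x ∈ D) (hP : sweptEnergy n c δ τ p D u x ≠ ⊤) :
    ‖u x‖ₑ ^ (n * p / (n - δ * p)) ≤
      (2 * hedbergConst n c a δ p) ^ (n * p / (n - δ * p)) *
        (sweptEnergy n c δ τ p D u x *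
          fracEnergyTau n δ τ p D u ^ (δ * p / (n - δ * p))) := by
  have hp0 : 0 < p := one_pos.trans_le hp
  have hn : (0 : ℝ) < n := (mul_pos hδ hp0).trans hδp
  have hgap : 0 < n - δ * p := sub_pos.2 hδp
  have hq : 0 ≤ n * p / (n - δ * p) := by positivity
  have hβ_eq : n / p - δ = (n - δ * p) / p := by field_simp
  have hβ : 0 < n / p - δ := hβ_eq ▸ div_pos hgap hp0
  have hp_inv : 0 ≤ p⁻¹ := inv_nonneg.2 hp0.le
  have hopt := enn_le_rpow_mul_rpow_of_forall_le hδ hβ (hedbergConst_ne_top ha hp0.le)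
    (ENNReal.rpow_ne_top_of_nonneg hp_inv hP) (ENNReal.rpow_ne_top_of_nonneg hp_inv hE)
    fun R hR ↦ hD.enorm_le_hedbergConst_mul hub hc ha hac haτ hδ hp hδp hu hint hx hR
  have hexpP : p⁻¹ * ((n / p - δ) / (δ + (n / p - δ))) * (n * p / (n - δ * p)) = 1 := by
    rw [add_sub_cancel, hβ_eq]
    field_simp
    exact div_self (mul_comm δ p ▸ hgap.ne')
  have hexpE : p⁻¹ * (δ / (δ + (n / p - δ))) * (n * p / (n - δ * p)) = δ * p / (n - δ * p) := by
    rw [add_sub_cancel]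
    field_simp
  refine (ENNReal.rpow_le_rpow hopt hq).trans_eq ?_
  rw [ENNReal.mul_rpow_of_nonneg (2 * _) _ hq, ENNReal.mul_rpow_of_nonneg (_ ^ _) _ hq]
  simp only [← ENNReal.rpow_mul]
  rw [hexpP, hexpE, ENNReal.rpow_one]

theorem setLIntegral_enorm_rpow_le (hD : IsJohnDomain n c D) (hub : ¬ Bornology.IsBounded D)
    (hc : 1 ≤ c) (ha : 0 < a) (hac : 24 * a * c ≤ 1) (haτ : 24 * a * c ≤ τ) (hδ : 0 < δ)
    (hp : 1 ≤ p) (hδp : δ * p < n) (hu : Measurable u) (hint : ∫⁻ y in D, ‖u y‖ₑ ≠ ⊤)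
    (hE : fracEnergyTau n δ τ p D u ≠ ⊤) :
    ∫⁻ x in D, ‖u x‖ₑ ^ (n * p / (n - δ * p)) ≤
      (2 * hedbergConst n c a δ p) ^ (n * p / (n - δ * p)) * 2 *
        fracEnergyTau n δ τ p D u ^ (n / (n - δ * p)) := by
  have hc0 : 0 < c := one_pos.trans_le hc
  have hgap : 0 < n - δ * p := sub_pos.2 hδp
  set E := fracEnergyTau n δ τ p D u
  set K := (2 * hedbergConst n c a δ p) ^ (n * p / (n - δ * p))
  have hswept := setLIntegral_sweptEnergy_le (δ := δ) (τ := τ) (p := p) hc0 hD.1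
    (hD.frontier_nonempty hub hc) hu
  have hfinite : ∀ᵐ x ∂volume.restrict D, sweptEnergy n c δ τ p D u x < ⊤ :=
    ae_lt_top (measurable_sweptEnergy hu)
      (ne_top_of_le_ne_top (ENNReal.mul_ne_top ENNReal.ofNat_ne_top hE) hswept)
  have hexp : n / (n - δ * p) = 1 + δ * p / (n - δ * p) := by
    field_simp
    ring
  calc ∫⁻ x in D, ‖u x‖ₑ ^ (n * p / (n - δ * p))
      ≤ ∫⁻ x in D, K * (sweptEnergy n c δ τ p D u x * E ^ (δ * p / (n - δ * p))) := by
        refine lintegral_mono_ae ?_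
        filter_upwards [hfinite, ae_restrict_mem hD.1.measurableSet] with x hP hx
        exact hD.enorm_rpow_le hub hc ha hac haτ hδ hp hδp hu hint hE hx hP.ne
    _ = K * ((∫⁻ x in D, sweptEnergy n c δ τ p D u x) * E ^ (δ * p / (n - δ * p))) := by
        rw [lintegral_const_mul _ ((measurable_sweptEnergy hu).mul_const _),
          lintegral_mul_const _ (measurable_sweptEnergy hu)]
    _ ≤ K * (2 * E * E ^ (δ * p / (n - δ * p))) := by gcongr
    _ = K * 2 * E ^ (n / (n - δ * p)) := by
        rw [hexp, ENNReal.rpow_add_of_nonneg _ _ zero_le_one (by positivity), ENNReal.rpow_one]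
        ring

end IsJohnDomain

end HedbergEstimate

section Clipping

open Filter Topology

/-- The clipping of `|s|` to heights between `1/(k+1)` and `k + 1/(k+1)`, shifted down to start at
`0`. Composing with it turns a function whose superlevel sets have finite measure into an integrable
one without increasing the fractional energy. -/
noncomputable def clip (k : ℕ) (s : ℝ) : ℝ :=
  max 0 (min (|s| - 1 / (k + 1)) k)

theorem clip_nonneg (k : ℕ) (s : ℝ) : 0 ≤ clip k s :=
  le_max_left _ _

theorem lipschitzWith_clip (k : ℕ) : LipschitzWith 1 (clip k) := by
  have habs : LipschitzWith 1 fun s : ℝ ↦ |s| := lipschitzWith_one_norm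
  have hshift : LipschitzWith 1 fun s : ℝ ↦ |s| - 1 / (k + 1) := by
    simpa only [add_zero] using habs.sub (LipschitzWith.const _)
  exact (hshift.min_const _).const_max 0

theorem tendsto_clip (s : ℝ) : Tendsto (fun k ↦ clip k s) atTop (𝓝 |s|) := by
  have hshift : Tendsto (fun k : ℕ ↦ max 0 (|s| - 1 / ((k : ℝ) + 1))) atTop
      (𝓝 |s|) := by
    have hsub := tendsto_const_nhds (x := |s|) |>.sub
      (tendsto_one_div_add_atTop_nhds_zero_nat (𝕜 := ℝ))
    simpa using tendsto_const_nhds (x := (0 : ℝ)) |>.max hsub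
  refine hshift.congr' ?_
  filter_upwards [tendsto_natCast_atTop_atTop.eventually_ge_atTop |s|] with k hk
  have : (0 : ℝ) ≤ 1 / (k + 1) := by positivity
  rw [clip, min_eq_left (by linarith)]

theorem enorm_clip_le_indicator (k : ℕ) (s : ℝ) :
    ‖clip k s‖ₑ ≤ {t : ℝ | 1 / (k + 1) < |t|}.indicator (fun _ ↦ (k : ℝ≥0∞)) s := by
  rw [Real.enorm_of_nonneg (clip_nonneg k s)]
  by_cases hs : s ∈ {t : ℝ | 1 / (k + 1) < |t|}
  · rw [indicator_of_mem hs]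
    exact ENNReal.ofReal_le_of_le_toReal (by simp [clip])
  · rw [indicator_of_notMem hs, nonpos_iff_eq_zero, ENNReal.ofReal_eq_zero]
    exact max_le le_rfl ((min_le_left _ _).trans (sub_nonpos.2 (not_lt.1 hs)))

variable {α : Type*} [MeasurableSpace α] {μ : Measure α} {u : α → ℝ}

theorem lintegral_enorm_clip_ne_top (hu : Measurable u)
    (hfin : ∀ t : ℝ, 0 < t → μ {x | t < |u x|} ≠ ⊤) (k : ℕ) :
    ∫⁻ x, ‖clip k (u x)‖ₑ ∂μ ≠ ⊤ := by
  have hset : MeasurableSet {t : ℝ | 1 / ((k : ℝ) + 1) < |t|} :=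
    measurableSet_lt measurable_const measurable_norm
  refine ne_top_of_le_ne_top ?_ (lintegral_mono fun x ↦ enorm_clip_le_indicator k (u x))
  change ∫⁻ x, (u ⁻¹' {t | 1 / ((k : ℝ) + 1) < |t|}).indicator (fun _ ↦ (k : ℝ≥0∞)) x ∂μ ≠ ⊤
  rw [lintegral_indicator_const (hu hset)]
  exact ENNReal.mul_ne_top (ENNReal.natCast_ne_top k) (hfin _ (by positivity))

theorem lintegral_enorm_rpow_le_of_forall_clip (hu : Measurable u) {q : ℝ} {B : ℝ≥0∞}
    (h : ∀ k, ∫⁻ x, ‖clip k (u x)‖ₑ ^ q ∂μ ≤ B) : ∫⁻ x, ‖u x‖ₑ ^ q ∂μ ≤ B := by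
  have hlim (x : α) : Tendsto (fun k ↦ ‖clip k (u x)‖ₑ ^ q) atTop
      (𝓝 (‖u x‖ₑ ^ q)) := by
    have henorm := (tendsto_clip (u x)).enorm
    rw [← Real.norm_eq_abs, enorm_norm] at henorm
    exact (ENNReal.continuous_rpow_const.tendsto _).comp henorm
  calc ∫⁻ x, ‖u x‖ₑ ^ q ∂μ
      = ∫⁻ x, liminf (fun k ↦ ‖clip k (u x)‖ₑ ^ q) atTop ∂μ :=
        lintegral_congr fun x ↦ (hlim x).liminf_eq.symm
    _ ≤ liminf (fun k ↦ ∫⁻ x, ‖clip k (u x)‖ₑ ^ q ∂μ) atTop :=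
        lintegral_liminf_le fun k ↦
          (((lipschitzWith_clip k).continuous.measurable.comp hu).enorm.pow_const q)
    _ ≤ B := liminf_le_of_frequently_le' (Frequently.of_forall h)

end Clipping

theorem IsJohnDomain.setLIntegral_enorm_rpow_le_of_measure_ne_top {n : ℕ} {c a τ δ p : ℝ}
    {D : Set (Eucl n)} {u : Eucl n → ℝ} (hD : IsJohnDomain n c D) (hub : ¬ Bornology.IsBounded D)
    (hc : 1 ≤ c) (ha : 0 < a) (hac : 24 * a * c ≤ 1) (haτ : 24 * a * c ≤ τ) (hδ : 0 < δ)
    (hp : 1 ≤ p) (hδp : δ * p < n) (hu : Measurable u)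
    (hfin : ∀ t : ℝ, 0 < t → volume.restrict D {x | t < |u x|} ≠ ⊤)
    (hE : fracEnergyTau n δ τ p D u ≠ ⊤) :
    ∫⁻ x in D, ‖u x‖ₑ ^ (n * p / (n - δ * p)) ≤
      (2 * hedbergConst n c a δ p) ^ (n * p / (n - δ * p)) * 2 *
        fracEnergyTau n δ τ p D u ^ (n / (n - δ * p)) := by
  refine lintegral_enorm_rpow_le_of_forall_clip hu fun k ↦ ?_
  have hclip : fracEnergyTau n δ τ p D (clip k ∘ u) ≤ fracEnergyTau n δ τ p D u :=
    fracEnergyTau_comp_le (zero_le_one.trans hp) (lipschitzWith_clip k)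
  calc ∫⁻ x in D, ‖clip k (u x)‖ₑ ^ (n * p / (n - δ * p))
      ≤ (2 * hedbergConst n c a δ p) ^ (n * p / (n - δ * p)) * 2 *
          fracEnergyTau n δ τ p D (clip k ∘ u) ^ (n / (n - δ * p)) :=
        hD.setLIntegral_enorm_rpow_le hub hc ha hac haτ hδ hp hδp
          ((lipschitzWith_clip k).continuous.measurable.comp hu)
          (lintegral_enorm_clip_ne_top hu hfin k) (ne_top_of_le_ne_top hE hclip)
    _ ≤ _ := by gcongr

theorem statement2_general {n : ℕ} {c τ δ p : ℝ} (hc : 1 ≤ c) (hτ : 0 < τ) (hδ : 0 < δ)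
    (hp : 1 ≤ p) (hδp : δ * p < n) :
    ∃ C : ℝ, 0 < C ∧
      ∀ D : Set (Eucl n), IsJohnDomain n c D → ¬ Bornology.IsBounded D →
        ∀ u : Eucl n → ℝ, Measurable u →
          (∀ t : ℝ, 0 < t → volume.restrict D {x | t < |u x|} ≠ ⊤) →
          ∫⁻ x in D, ENNReal.ofReal (|u x| ^ (n * p / (n - δ * p))) ≤
            ENNReal.ofReal C * fracEnergyTau n δ τ p D u ^ (n / (n - δ * p)) := by
  have hn : (0 : ℝ) < n := by nlinarith
  have hq : 0 ≤ n * p / (n - δ * p) := by positivity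
  obtain ⟨a, ha, hac, haτ⟩ : ∃ a : ℝ, 0 < a ∧ 24 * a * c ≤ 1 ∧ 24 * a * c ≤ τ := by
    have hmin : 24 * (min 1 τ / (24 * c)) * c = min 1 τ := by field_simp
    exact ⟨min 1 τ / (24 * c), by positivity, hmin.trans_le (min_le_left _ _),
      hmin.trans_le (min_le_right _ _)⟩
  set K := (2 * hedbergConst n c a δ p) ^ (n * p / (n - δ * p)) * 2
  have hK : K ≠ ⊤ := by
    have hH := hedbergConst_ne_top (n := n) (c := c) (δ := δ) ha (zero_le_one.trans hp)
    finiteness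
  refine ⟨K.toReal + 1, by positivity, fun D hD hub u hu hfin ↦ ?_⟩
  rcases eq_or_ne (fracEnergyTau n δ τ p D u) ⊤ with hE | hE
  · rw [hE, ENNReal.top_rpow_of_pos (by positivity),
      ENNReal.mul_top (ENNReal.ofReal_pos.2 (by positivity)).ne']
    exact le_top
  simp only [← ENNReal.ofReal_rpow_of_nonneg (abs_nonneg _) hq, ← Real.enorm_eq_ofReal_abs]
  refine (hD.setLIntegral_enorm_rpow_le_of_measure_ne_top hub hc ha hac haτ hδ hp hδp hu hfin
    hE).trans ?_
  gcongr
  exact (ENNReal.le_ofReal_iff_toReal_le hK (by positivity)).2 (by linarith)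

/-- Fractional Sobolev inequality in unbounded John domains:
for an unbounded `c`-John domain `D ⊆ ℝⁿ`, `n ≥ 2`, `τ, δ ∈ (0,1)`, `1 ≤ p < n/δ`,
there is `C = C(δ,τ,p,n,c) > 0` with
`∫_D |u|^{np/(n-δp)} ≤ C (|u|_{W^{δ,p}_τ(D)}^p)^{n/(n-δp)}` for each
`u ∈ Ẇ^{δ,p}_τ(D)` with compact support in `D`. -/
theorem statement2 (n : ℕ) (hn : 2 ≤ n) (c : ℝ) (hc : 1 ≤ c)
    (τ δ p : ℝ) (hτ : τ ∈ Ioo (0:ℝ) 1) (hδ : δ ∈ Ioo (0:ℝ) 1)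
    (hp : 1 ≤ p) (hpn : p < n / δ) :
    ∃ C : ℝ, 0 < C ∧
      ∀ D : Set (Eucl n), IsJohnDomain n c D → ¬ Bornology.IsBounded D →
        ∀ u : Eucl n → ℝ, Measurable u → fracEnergyTau n δ τ p D u < ⊤ →
          HasCompactSupport u → tsupport u ⊆ D →
          (∫⁻ x in D, ENNReal.ofReal
              (|u x| ^ ((n:ℝ) * p / ((n:ℝ) - δ * p))) ∂volume)
            ≤ ENNReal.ofReal C * fracEnergyTau n δ τ p D u ^ ((n:ℝ) / ((n:ℝ) - δ * p)) := by
  obtain ⟨C, hC, hsobolev⟩ := statement2_general hc hτ.1 hδ.1 hp ((lt_div_iff₀' hδ.1).1 hpn)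
  refine ⟨C, hC, fun D hD hub u hu _ hcompact _ ↦ hsobolev D hD hub u hu fun t ht ↦ ?_⟩
  exact measure_ne_top_of_subset (fun x hx ↦ subset_tsupport u (abs_pos.1 (ht.trans hx)))
    hcompact.isCompact.measure_ne_top
end

section
/- Suppose D is a bounded c-John domain in ℝⁿ, n ≥ 2, and let κ ≥ 1 be fixed. Let δ ∈ [0,1] and 1 ≤ p with δp < n be given, and set q = np/(n−δp). Then there exists a constant C = C(n, κ, p, δ, c) such that the inequality inf_{a∈ℝ} sup_{t>0} |{x ∈ D : |u(x) − a| > t}| · t^q ≤ C |u|_{A^{δ,p}_κ(D)}^q holds for every u ∈ L¹(D). -/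
open MeasureTheory Metric Set
open scoped ENNReal NNReal BigOperators

/-!
A bounded John domain has a center `x₀` such that every `x ∈ D` is joined to `x₀` by a path each of
whose points `y` lies at distance `≲ dist(y, ∂D)` from `x`. Cubes are handled as balls of the sup
norm.

Fix a measurable `A ⊆ D`. By Markov's inequality the weak type estimate with exponent `q` follows
from `∫_A |u - a| ≲ |u|_{A^{δ,p}_κ} |A|^{1 - 1/q}`, where `1 - 1/q = 1 - 1/p + δ/n`, uniformly in
`A`. Let `a` be the average of `u` over the Whitney cube of `x₀`, and split the integral by
subtracting the average of `u` over the Whitney cube of `x`.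

For the local part, take the maximal dyadic cubes inside Whitney cubes in which `A` has density
greater than a small `θ`, the stopping cubes. Up to a null set they cover `A`, and their union `A'`
has measure at most `|A| / θ`. The sum of the oscillations over these cubes is bounded by Hölder's inequality, which
produces the power of `|A|`. Passing from the average over a stopping cube to the one over its
Whitney cube costs at most `2ⁿ θ` times the original integral with `A'` in place of `A`, because the
parent of the stopping cube is sparse. As `1 - 1/q < 1`, for small `θ` the gain `2ⁿ θ` outweighs the
growth `θ^{-(1 - 1/q)}` of the power of the measure, so the estimate can be iterated.

For the remaining part, the Whitney cubes met by the path from `x` to `x₀` form a chain, and `x`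
lies in a fixed dilate of each of them. Integrating over `A` leaves the sum of
`(⨍_{Q*} |u - u_{Q*}|) |A ∩ NQ|` over the Whitney cubes `Q`, where `Q*` and `NQ` are dilates of `Q`.
Group the cubes by the dyadic size of the density of `A` in `NQ`. By Vitali covering, the cubes with
density greater than `t` fill a set of measure `≲ |A| / t`, and by a weighted Vitali selection the
oscillations over the overlapping cubes `Q*` are controlled by those over a disjoint subfamily. The
resulting bounds form a convergent geometric series because `1 - 1/q < 1`.
-/

section WeakType

open Filter Topology

section Sums

theorem one_sub_one_div_add_nonneg {α p : ℝ} (hα : 0 ≤ α) (hp : 1 ≤ p) : 0 ≤ 1 - 1 / p + α := by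
  have : 1 / p ≤ 1 := (div_le_one (by linarith)).2 hp
  linarith

theorem tsum_le_rpow_mul_rpow_of_weights {β : Type*} {α p : ℝ} (hα : 0 ≤ α) (hp : 1 ≤ p)
    (o v : β → ℝ≥0∞) (hv₀ : ∀ i, v i ≠ 0) (hv : ∀ i, v i ≠ ∞) :
    ∑' i, o i ≤
      (∑' i, (v i ^ (-1 - α) * o i) ^ p * v i) ^ (1 / p) * (∑' i, v i) ^ (1 - 1 / p + α) := by
  rw [ENNReal.tsum_eq_iSup_sum]
  refine iSup_le fun F ↦ ?_
  have hsplit (i : β) : o i = v i ^ α * (v i * (v i ^ (-1 - α) * o i)) := by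
    calc o i = v i ^ (α + 1 + (-1 - α)) * o i := by
          rw [show α + 1 + (-1 - α) = 0 by ring, ENNReal.rpow_zero, one_mul]
      _ = v i ^ α * (v i * (v i ^ (-1 - α) * o i)) := by
        rw [ENNReal.rpow_add _ _ (hv₀ i) (hv i), ENNReal.rpow_add _ _ (hv₀ i) (hv i),
          ENNReal.rpow_one]
        ring
  have hp' : p⁻¹ ≤ 1 := inv_le_one_of_one_le₀ hp
  calc ∑ i ∈ F, o i = ∑ i ∈ F, v i ^ α * (v i * (v i ^ (-1 - α) * o i)) :=
        Finset.sum_congr rfl fun i _ ↦ hsplit i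
    _ ≤ ∑ i ∈ F, (∑' j, v j) ^ α * (v i * (v i ^ (-1 - α) * o i)) := by
        gcongr with i; exact ENNReal.le_tsum i
    _ = (∑' j, v j) ^ α * ∑ i ∈ F, v i * (v i ^ (-1 - α) * o i) := by rw [Finset.mul_sum]
    _ ≤ (∑' j, v j) ^ α * ((∑ i ∈ F, v i) ^ (1 - p⁻¹) *
          (∑ i ∈ F, v i * (v i ^ (-1 - α) * o i) ^ p) ^ p⁻¹) := by
        gcongr; exact ENNReal.inner_le_weight_mul_Lp_of_nonneg F hp v _
    _ ≤ (∑' j, v j) ^ α * ((∑' i, v i) ^ (1 - p⁻¹) *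
          (∑' i, v i * (v i ^ (-1 - α) * o i) ^ p) ^ p⁻¹) := by
        gcongr <;> exact ENNReal.sum_le_tsum F
    _ = _ := by
        simp_rw [mul_comm (v _) ((_ : ℝ≥0∞) ^ p)]
        rw [one_div, ENNReal.rpow_add_of_nonneg _ _ (by linarith) hα]
        ring

theorem le_tsum_dyadic_layers {r : ℝ≥0∞} (hr : r ≤ 1) :
    r ≤ ∑' k : ℕ, if 2⁻¹ ^ (k + 1) < r then 2⁻¹ ^ k else 0 := by
  rcases eq_or_ne r 0 with rfl | hr₀
  · exact zero_le
  have hex : ∃ k : ℕ, (2⁻¹ : ℝ≥0∞) ^ (k + 1) < r := by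
    have hlim := ENNReal.tendsto_pow_atTop_nhds_zero_of_lt_one
      (ENNReal.inv_lt_one.2 ENNReal.one_lt_two)
    exact ((hlim.comp (tendsto_add_atTop_nat 1)).eventually_lt_const (pos_iff_ne_zero.2 hr₀)).exists
  classical
  have hle : r ≤ 2⁻¹ ^ Nat.find hex := by
    rcases h : Nat.find hex with _ | k
    · simpa using hr
    · exact not_lt.1 (Nat.find_min hex (h ▸ k.lt_succ_self))
  calc r ≤ if 2⁻¹ ^ (Nat.find hex + 1) < r then 2⁻¹ ^ Nat.find hex else 0 := by
        rwa [if_pos (Nat.find_spec hex)]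
    _ ≤ _ := ENNReal.le_tsum (Nat.find hex)

theorem inv_two_pow_mul_inv_rpow (e : ℝ) (k : ℕ) :
    (2⁻¹ : ℝ≥0∞) ^ k * (2⁻¹ ^ k)⁻¹ ^ e = (2 ^ (e - 1)) ^ k := by
  rw [← ENNReal.inv_pow, inv_inv, ENNReal.rpow_sub _ _ two_ne_zero ENNReal.ofNat_ne_top,
    ENNReal.rpow_one, div_eq_mul_inv, mul_pow, ENNReal.inv_pow, ← ENNReal.rpow_natCast 2 k,
    ← ENNReal.rpow_mul, mul_comm (k : ℝ), ENNReal.rpow_mul, ENNReal.rpow_natCast, mul_comm]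

/-- The sum `2 ^ e / (1 - 2 ^ (e - 1))` of the geometric series produced by summing over the dyadic
layers of a weight whose superlevel sets carry mass `O(t ^ (-e))`. -/
noncomputable def layerConst (e : ℝ) : ℝ≥0∞ := 2 ^ e * (1 - 2 ^ (e - 1))⁻¹

theorem layerConst_ne_top {e : ℝ} (he : e < 1) : layerConst e ≠ ∞ := by
  have h : (2 : ℝ≥0∞) ^ (e - 1) < 1 :=
    ENNReal.rpow_lt_one_of_one_lt_of_neg ENNReal.one_lt_two (by linarith)
  exact ENNReal.mul_ne_top (ENNReal.rpow_ne_top_of_ne_zero two_ne_zero ENNReal.ofNat_ne_top)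
    (ENNReal.inv_ne_top.2 (tsub_pos_of_lt h).ne')

theorem tsum_mul_le_of_superlevel {β : Type*} {o ρ : β → ℝ≥0∞} {A : ℝ≥0∞} {e : ℝ}
    (hρ : ∀ i, ρ i ≤ 1) (h : ∀ t ≠ 0, t ≠ ∞ → ∑' i : {i | t < ρ i}, o i ≤ A * t⁻¹ ^ e) :
    ∑' i, o i * ρ i ≤ layerConst e * A := by
  have hpow (k : ℕ) : (2⁻¹ : ℝ≥0∞) ^ (k + 1) ≠ 0 ∧ (2⁻¹ : ℝ≥0∞) ^ (k + 1) ≠ ∞ :=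
    ⟨pow_ne_zero _ (by simp), ENNReal.pow_ne_top (by simp)⟩
  have hgeom (k : ℕ) :
      2⁻¹ ^ k * (A * ((2⁻¹ : ℝ≥0∞) ^ (k + 1))⁻¹ ^ e) = 2 ^ e * A * (2 ^ (e - 1)) ^ k := by
    rw [pow_succ, ENNReal.mul_inv (by simp) (by simp), inv_inv,
      ENNReal.mul_rpow_of_ne_top (by simp) (by simp), ← inv_two_pow_mul_inv_rpow]
    ring
  calc ∑' i, o i * ρ i
      ≤ ∑' i, o i * ∑' k : ℕ, if 2⁻¹ ^ (k + 1) < ρ i then 2⁻¹ ^ k else 0 := by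
        gcongr with i; exact le_tsum_dyadic_layers (hρ i)
    _ = ∑' k : ℕ, 2⁻¹ ^ k * ∑' i : {i | 2⁻¹ ^ (k + 1) < ρ i}, o i := by
        simp_rw [← ENNReal.tsum_mul_left]
        rw [ENNReal.tsum_comm]
        refine tsum_congr fun k ↦ ?_
        rw [tsum_subtype {i | 2⁻¹ ^ (k + 1) < ρ i} fun i ↦ 2⁻¹ ^ k * o i]
        refine tsum_congr fun i ↦ ?_
        by_cases hi : (2⁻¹ : ℝ≥0∞) ^ (k + 1) < ρ i <;> simp [hi, mul_comm]
    _ ≤ ∑' k : ℕ, 2⁻¹ ^ k * (A * ((2⁻¹ : ℝ≥0∞) ^ (k + 1))⁻¹ ^ e) := by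
        gcongr with k; exact h _ (hpow k).1 (hpow k).2
    _ = layerConst e * A := by
        simp_rw [hgeom, ENNReal.tsum_mul_left, ENNReal.tsum_geometric, layerConst]
        ring

theorem exists_pairwiseDisjoint_sum_le {β X : Type*} (F : Finset β) {s : β → Set X}
    {v w : β → ℝ≥0∞} {M : ℝ≥0∞} (hs : ∀ i ∈ F, (s i).Nonempty) (hw : ∀ i ∈ F, w i ≠ ∞)
    (hov : ∀ j ∈ F, ∑' i : {i | i ∈ F ∧ (s i ∩ s j).Nonempty}, v i ≤ M * v j) :
    ∃ T ⊆ F, (T : Set β).PairwiseDisjoint s ∧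
      ∑ i ∈ F, w i * v i ≤ 2 * M * ∑ i ∈ T, w i * v i := by
  classical
  obtain ⟨R, hR⟩ : ∃ R : ℝ, ∀ i ∈ (F : Set β), (w i).toReal ≤ R := by
    obtain ⟨R, hR⟩ := (F.image fun i ↦ (w i).toReal).bddAbove
    exact ⟨R, fun i hi ↦ hR (by simpa using ⟨i, hi, rfl⟩)⟩
  obtain ⟨T, hTF, hdisj, hcov⟩ := Vitali.exists_disjoint_subfamily_covering_enlargement s
    (F : Set β) (fun i ↦ (w i).toReal) 2 one_lt_two (fun _ _ ↦ ENNReal.toReal_nonneg) R hR hs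
  lift T to Finset β using F.finite_toSet.subset hTF
  rw [Finset.coe_subset] at hTF
  choose! φ hφT hφ hφw using hcov
  have hw₂ {i : β} (hi : i ∈ F) : w i ≤ 2 * w (φ i) := by
    rw [← ENNReal.toReal_le_toReal (hw i hi)
      (ENNReal.mul_ne_top ENNReal.ofNat_ne_top (hw _ (hTF (hφT i hi)))), ENNReal.toReal_mul]
    simpa using hφw i hi
  have hfiber (j : β) (hj : j ∈ F) : ∑ i ∈ F with φ i = j, v i ≤ M * v j := by
    refine le_trans ?_ (hov j hj)
    rw [tsum_subtype {i | i ∈ F ∧ (s i ∩ s j).Nonempty} v]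
    refine le_trans (Finset.sum_le_sum fun i hi ↦ ?_) (ENNReal.sum_le_tsum (F.filter (φ · = j)))
    obtain ⟨hiF, rfl⟩ := Finset.mem_filter.1 hi
    exact (indicator_of_mem (s := {i' | i' ∈ F ∧ _}) ⟨hiF, hφ i hiF⟩ v).ge
  refine ⟨T, hTF, hdisj, ?_⟩
  calc ∑ i ∈ F, w i * v i ≤ ∑ i ∈ F, 2 * w (φ i) * v i := by
        gcongr with i hi; exact hw₂ hi
    _ = ∑ j ∈ T, ∑ i ∈ F with φ i = j, 2 * w (φ i) * v i :=
        (Finset.sum_fiberwise_of_maps_to (fun i hi ↦ hφT i hi) _).symm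
    _ = ∑ j ∈ T, 2 * w j * ∑ i ∈ F with φ i = j, v i := by
        refine Finset.sum_congr rfl fun j _ ↦ ?_
        rw [Finset.mul_sum]
        exact Finset.sum_congr rfl fun i hi ↦ by rw [(Finset.mem_filter.1 hi).2]
    _ ≤ ∑ j ∈ T, 2 * w j * (M * v j) := by
        gcongr with j hj; exact hfiber j (hTF hj)
    _ = 2 * M * ∑ i ∈ T, w i * v i := by
        rw [Finset.mul_sum]; exact Finset.sum_congr rfl fun j _ ↦ by ring

theorem edist_le_of_reachable {α X : Type*} [PseudoEMetricSpace X] {G : SimpleGraph α} {f : α → X}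
    {b : α → ℝ≥0∞} (hadj : ∀ i j, G.Adj i j → edist (f i) (f j) ≤ b i + b j) {i j : α}
    (h : G.Reachable i j) : edist (f i) (f j) ≤ 2 * ∑' k, b k := by
  classical
  have hwalk {i j : α} (w : G.Walk i j) :
      b i + edist (f i) (f j) ≤ 2 * (w.support.map b).sum := by
    induction w with
    | nil => simp [two_mul]
    | @cons i k j hik w ih =>
      rw [SimpleGraph.Walk.support_cons, List.map_cons, List.sum_cons]
      calc b i + edist (f i) (f j) ≤ b i + (edist (f i) (f k) + edist (f k) (f j)) := by
            gcongr; exact edist_triangle _ _ _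
        _ ≤ b i + (b i + b k + edist (f k) (f j)) := by gcongr; exact hadj i k hik
        _ = 2 * b i + (b k + edist (f k) (f j)) := by ring
        _ ≤ 2 * b i + 2 * (w.support.map b).sum := by gcongr
        _ = _ := by ring
  obtain ⟨w, hw⟩ := h.exists_isPath
  calc edist (f i) (f j) ≤ 2 * (w.support.map b).sum := le_add_self.trans (hwalk w)
    _ = 2 * ∑ k ∈ w.support.toFinset, b k := by
        rw [List.sum_toFinset _ hw.support_nodup]
    _ ≤ 2 * ∑' k, b k := by gcongr; exact ENNReal.sum_le_tsum _

theorem edist_le_two_mul_tsum_of_preconnectedSpace {T α X : Type*} [TopologicalSpace T]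
    [PreconnectedSpace T] [PseudoEMetricSpace X] {f : α → X} {b : α → ℝ≥0∞} {W : T → α}
    (hW : ∀ t, ∀ᶠ s in 𝓝 t, edist (f (W t)) (f (W s)) ≤ b (W t) + b (W s)) (s t : T) :
    edist (f (W s)) (f (W t)) ≤ 2 * ∑' k, b k := by
  set G := SimpleGraph.fromRel fun i j ↦ edist (f i) (f j) ≤ b i + b j
  have hadj (i j : α) (h : G.Adj i j) : edist (f i) (f j) ≤ b i + b j := by
    rcases ((SimpleGraph.fromRel_adj _ i j).1 h).2 with h | h
    · exact h
    · rwa [edist_comm, add_comm]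
  refine edist_le_of_reachable hadj ?_
  refine isPreconnected_univ.induction₂ (fun t s ↦ G.Reachable (W t) (W s)) (fun t _ ↦ ?_)
    (fun _ _ _ _ _ _ h h' ↦ h.trans h') (fun _ _ _ _ h ↦ h.symm) (mem_univ s) (mem_univ t)
  rw [nhdsWithin_univ]
  filter_upwards [hW t] with s hs
  by_cases heq : W t = W s
  · rw [heq]
  · exact SimpleGraph.Adj.reachable ((SimpleGraph.fromRel_adj _ _ _).2 ⟨heq, Or.inl hs⟩)

theorem exists_lt_one_mul_inv_rpow_le {A : ℝ≥0∞} (hA : A ≠ ∞) {e : ℝ} (he : e < 1) :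
    ∃ θ : ℝ≥0∞, θ ≠ 0 ∧ θ < 1 ∧ A * θ * θ⁻¹ ^ e ≤ 1 := by
  have hlim : Tendsto (fun m : ℕ ↦ A * ((2 : ℝ≥0∞) ^ (e - 1)) ^ m) atTop (𝓝 0) := by
    simpa using ENNReal.Tendsto.const_mul (ENNReal.tendsto_pow_atTop_nhds_zero_of_lt_one
      (ENNReal.rpow_lt_one_of_one_lt_of_neg ENNReal.one_lt_two (by linarith))) (Or.inr hA)
  obtain ⟨m, hm, hm₁⟩ :=
    ((hlim.eventually_lt_const one_pos).and (eventually_ge_atTop 1)).exists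
  refine ⟨2⁻¹ ^ m, pow_ne_zero _ (by simp),
    pow_lt_one₀ zero_le (ENNReal.inv_lt_one.2 ENNReal.one_lt_two) (by lia), le_of_eq_of_le ?_ hm.le⟩
  rw [mul_assoc, inv_two_pow_mul_inv_rpow]

end Sums

section Oscillation

variable {X E : Type*} [MeasurableSpace X] {μ : Measure X} [NormedAddCommGroup E]
  {u : X → E} {A B : Set X}

theorem setLIntegral_enorm_sub_le (u : X → E) (a b : E) (A : Set X) :
    ∫⁻ x in A, ‖u x - b‖ₑ ∂μ ≤ ∫⁻ x in A, ‖u x - a‖ₑ ∂μ + ‖a - b‖ₑ * μ A := by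
  calc ∫⁻ x in A, ‖u x - b‖ₑ ∂μ ≤ ∫⁻ x in A, ‖u x - a‖ₑ + ‖a - b‖ₑ ∂μ := by
        gcongr with x
        rw [← sub_add_sub_cancel (u x) a b]
        exact enorm_add_le _ _
    _ = _ := by rw [lintegral_add_right _ measurable_const, setLIntegral_const]

variable [NormedSpace ℝ E]

/-- The oscillation `∫_A |u - u_A|` of `u` over `A`, where `u_A` is the average of `u` over `A`. -/
noncomputable def oscOn (μ : Measure X) (u : X → E) (A : Set X) : ℝ≥0∞ :=
  ∫⁻ x in A, ‖u x - ⨍ y in A, u y ∂μ‖ₑ ∂μ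

/-- The contribution `(|A|^(-1-α) ∫_A |u - u_A|)^p |A|` of a cube `A` to the `p`-th power of the
seminorm of `A^{δ,p}_κ`, where `α = δ / n`. -/
noncomputable def oscEnergy (μ : Measure X) (α p : ℝ) (u : X → E) (A : Set X) : ℝ≥0∞ :=
  (μ A ^ (-1 - α) * oscOn μ u A) ^ p * μ A

theorem oscOn_congr (h : A =ᵐ[μ] B) : oscOn μ u A = oscOn μ u B := by
  simp_rw [oscOn, setAverage_congr h, Measure.restrict_congr_set h]

theorem oscEnergy_congr {α p : ℝ} (h : A =ᵐ[μ] B) : oscEnergy μ α p u A = oscEnergy μ α p u B := by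
  rw [oscEnergy, oscEnergy, oscOn_congr h, measure_congr h]

theorem tsum_oscOn_le {β : Type*} {α p : ℝ} (hα : 0 ≤ α) (hp : 1 ≤ p) (s : β → Set X)
    (hs₀ : ∀ i, μ (s i) ≠ 0) (hs : ∀ i, μ (s i) ≠ ∞) :
    ∑' i, oscOn μ u (s i) ≤
      (∑' i, oscEnergy μ α p u (s i)) ^ (1 / p) * (∑' i, μ (s i)) ^ (1 - 1 / p + α) :=
  tsum_le_rpow_mul_rpow_of_weights hα hp _ _ hs₀ hs

theorem measure_mul_enorm_setAverage_sub_le [CompleteSpace E] (hu : IntegrableOn u A μ)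
    (hA : μ A ≠ ∞) (a : E) : μ A * ‖⨍ x in A, u x ∂μ - a‖ₑ ≤ ∫⁻ x in A, ‖u x - a‖ₑ ∂μ := by
  have hmean : μ.real A • (⨍ x in A, u x ∂μ - a) = ∫ x in A, (u x - a) ∂μ := by
    rw [integral_sub hu (integrableOn_const hA), setIntegral_const, smul_sub,
      measure_smul_setAverage _ hA]
  calc μ A * ‖⨍ x in A, u x ∂μ - a‖ₑ = ‖∫ x in A, (u x - a) ∂μ‖ₑ := by
        rw [← hmean, enorm_smul, measureReal_def, Real.enorm_of_nonneg ENNReal.toReal_nonneg,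
          ENNReal.ofReal_toReal hA]
    _ ≤ _ := enorm_integral_le_lintegral_enorm _

theorem measure_mul_enorm_setAverage_sub_setAverage_le [CompleteSpace E] (hAB : A ⊆ B)
    (hu : IntegrableOn u B μ) (hB : μ B ≠ ∞) :
    μ A * ‖⨍ x in A, u x ∂μ - ⨍ x in B, u x ∂μ‖ₑ ≤ oscOn μ u B :=
  (measure_mul_enorm_setAverage_sub_le (hu.mono_set hAB) (measure_ne_top_of_subset hAB hB) _).trans
    (lintegral_mono_set hAB)

theorem oscOn_ne_top (hu : IntegrableOn u A μ) (hA : μ A ≠ ∞) : oscOn μ u A ≠ ∞ :=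
  (hu.sub (integrableOn_const hA)).2.ne

theorem oscOn_le_two_mul [CompleteSpace E] (hu : IntegrableOn u A μ) (hA : μ A ≠ ∞) (a : E) :
    oscOn μ u A ≤ 2 * ∫⁻ x in A, ‖u x - a‖ₑ ∂μ := by
  calc oscOn μ u A ≤ ∫⁻ x in A, ‖u x - a‖ₑ ∂μ + ‖a - ⨍ x in A, u x ∂μ‖ₑ * μ A :=
        setLIntegral_enorm_sub_le u a _ A
    _ ≤ ∫⁻ x in A, ‖u x - a‖ₑ ∂μ + ∫⁻ x in A, ‖u x - a‖ₑ ∂μ := by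
        gcongr
        rw [mul_comm, ← edist_eq_enorm_sub, edist_comm, edist_eq_enorm_sub]
        exact measure_mul_enorm_setAverage_sub_le hu hA a
    _ = _ := (two_mul _).symm

section Monotone

variable {s : ℕ → Set X}

theorem tendsto_setAverage_iUnion (hs : Monotone s) (hsm : ∀ m, MeasurableSet (s m))
    (hu : IntegrableOn u (⋃ m, s m) μ) (h₀ : μ (⋃ m, s m) ≠ 0) (h : μ (⋃ m, s m) ≠ ∞) :
    Tendsto (fun m ↦ ⨍ x in s m, u x ∂μ) atTop (𝓝 (⨍ x in ⋃ m, s m, u x ∂μ)) := by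
  simp_rw [setAverage_eq]
  exact (((ENNReal.tendsto_toReal h).comp (tendsto_measure_iUnion_atTop hs)).inv₀
    (ENNReal.toReal_ne_zero.2 ⟨h₀, h⟩)).smul (tendsto_setIntegral_of_monotone hsm hs hu)

theorem tendsto_oscOn_iUnion (hs : Monotone s) (hsm : ∀ m, MeasurableSet (s m))
    (hu : IntegrableOn u (⋃ m, s m) μ) (h₀ : μ (⋃ m, s m) ≠ 0) (h : μ (⋃ m, s m) ≠ ∞) :
    Tendsto (fun m ↦ oscOn μ u (s m)) atTop (𝓝 (oscOn μ u (⋃ m, s m))) := by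
  set V := ⋃ m, s m
  set a := ⨍ x in V, u x ∂μ with ha
  set ε : ℕ → ℝ≥0∞ := fun m ↦ ‖a - ⨍ x in s m, u x ∂μ‖ₑ * μ V
  have hsV (m : ℕ) : μ (s m) ≤ μ V := measure_mono (subset_iUnion s m)
  have hI : Tendsto (fun m ↦ ∫⁻ x in s m, ‖u x - a‖ₑ ∂μ) atTop (𝓝 (oscOn μ u V)) := by
    rw [oscOn, setLIntegral_iUnion_of_directed _ hs.directed_le]
    exact tendsto_atTop_iSup fun i j hij ↦ lintegral_mono_set (hs hij)
  have hε : Tendsto ε atTop (𝓝 0) := by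
    have := ((tendsto_setAverage_iUnion hs hsm hu h₀ h).const_sub a).enorm
    rw [← ha, sub_self, enorm_zero] at this
    simpa using ENNReal.Tendsto.mul_const this (Or.inr h)
  refine tendsto_of_tendsto_of_tendsto_of_le_of_le (g := fun m ↦ ∫⁻ x in s m, ‖u x - a‖ₑ ∂μ - ε m)
    (h := fun m ↦ ∫⁻ x in s m, ‖u x - a‖ₑ ∂μ + ε m) ?_ ?_ (fun m ↦ ?_) (fun m ↦ ?_)
  · simpa using ENNReal.Tendsto.sub hI hε (Or.inr ENNReal.zero_ne_top)
  · simpa using hI.add hε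
  · refine tsub_le_iff_right.2 ((setLIntegral_enorm_sub_le u (⨍ x in s m, u x ∂μ) a _).trans ?_)
    rw [← edist_eq_enorm_sub, edist_comm, edist_eq_enorm_sub]
    exact add_le_add_right (mul_le_mul_right (hsV m) _) _
  · exact (setLIntegral_enorm_sub_le u a _ _).trans
      (add_le_add_right (mul_le_mul_right (hsV m) _) _)

theorem tendsto_oscEnergy_iUnion {α p : ℝ} (hp : 0 ≤ p) (hs : Monotone s)
    (hsm : ∀ m, MeasurableSet (s m)) (hu : IntegrableOn u (⋃ m, s m) μ)
    (h₀ : μ (⋃ m, s m) ≠ 0) (h : μ (⋃ m, s m) ≠ ∞) :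
    Tendsto (fun m ↦ oscEnergy μ α p u (s m)) atTop (𝓝 (oscEnergy μ α p u (⋃ m, s m))) := by
  have hμ : Tendsto (fun m ↦ μ (s m)) atTop (𝓝 (μ (⋃ m, s m))) := tendsto_measure_iUnion_atTop hs
  have hpow : μ (⋃ m, s m) ^ (-1 - α) ≠ ∞ := ENNReal.rpow_ne_top_of_ne_zero h₀ h
  have hosc := oscOn_ne_top hu h
  exact ENNReal.Tendsto.mul
    ((ENNReal.Tendsto.mul (hμ.ennrpow_const _) (Or.inr hosc) (tendsto_oscOn_iUnion hs hsm hu h₀ h)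
      (Or.inr hpow)).ennrpow_const p) (Or.inr h) hμ
    (Or.inr (ENNReal.rpow_ne_top_of_nonneg hp (ENNReal.mul_ne_top hpow hosc)))

end Monotone

theorem rpow_mul_measure_lt_le {D : Set X} (hD : MeasurableSet D) (hD_fin : μ D ≠ ∞)
    {f : X → ℝ≥0∞} (hf : AEMeasurable f (μ.restrict D)) {M : ℝ≥0∞} {e q : ℝ} (hq : 0 < q)
    (heq : (1 - e) * q = 1)
    (h : ∀ A ⊆ D, MeasurableSet A → ∫⁻ x in A, f x ∂μ ≤ M * μ A ^ e) (t : ℝ≥0∞) :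
    μ {x ∈ D | t < f x} * t ^ q ≤ M ^ q := by
  have hnull : NullMeasurableSet {x ∈ D | t < f x} μ := by
    rw [ofPred_and, inter_comm]
    exact (nullMeasurableSet_restrict hD.nullMeasurableSet).1
      (nullMeasurableSet_lt aemeasurable_const hf)
  obtain ⟨A, hAD, hA, hAe⟩ := hnull.exists_measurable_subset_ae_eq
  rw [← measure_congr hAe]
  have hAfin : μ A ≠ ∞ := measure_ne_top_of_subset (hAD.trans fun _ hx ↦ hx.1) hD_fin
  rcases eq_or_ne (μ A) 0 with h0 | h0
  · simp [h0]
  have hmarkov : t * μ A ≤ M * μ A ^ e := by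
    rw [← setLIntegral_const]
    exact (setLIntegral_mono' hA fun x hx ↦ (hAD hx).2.le).trans (h A (fun x hx ↦ (hAD hx).1) hA)
  have hroot : t * μ A ^ (1 - e) ≤ M := by
    rw [ENNReal.rpow_sub _ _ h0 hAfin, ENNReal.rpow_one, ← mul_div_assoc]
    exact ENNReal.div_le_of_le_mul hmarkov
  calc μ A * t ^ q = (t * μ A ^ (1 - e)) ^ q := by
        rw [ENNReal.mul_rpow_of_nonneg _ _ hq.le, ← ENNReal.rpow_mul, heq, ENNReal.rpow_one,
          mul_comm]
    _ ≤ M ^ q := by gcongr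

end Oscillation

/-- A dyadic cube of side length `2 ^ level` in `ι → ℝ`, encoded by its level and by the integer
position of its lower corner on the grid of that level. -/
@[ext]
structure DyadicCube (ι : Type*) where
  /-- The binary logarithm of the side length. -/
  level : ℤ
  /-- The lower corner in units of the side length. -/
  index : ι → ℤ

namespace DyadicCube

section Geometry

variable {ι : Type*} {Q R : DyadicCube ι} {x y : ι → ℝ}

instance [Finite ι] : Countable (DyadicCube ι) :=
  Function.Injective.countable (f := fun Q : DyadicCube ι ↦ (Q.level, Q.index)) fun _ _ h ↦
    DyadicCube.ext (congr_arg Prod.fst h) (congr_arg Prod.snd h)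

/-- The side length of a dyadic cube. -/
noncomputable def side (Q : DyadicCube ι) : ℝ := 2 ^ Q.level

/-- The dyadic cube of level `k` that contains `x`. -/
noncomputable def ofPoint (k : ℤ) (x : ι → ℝ) : DyadicCube ι := ⟨k, fun l ↦ ⌊x l / 2 ^ k⌋⟩

/-- The half-open cube `∏ [m_l 2^k, (m_l + 1) 2^k)` with level `k` and index `m`. -/
def toSet (Q : DyadicCube ι) : Set (ι → ℝ) := {x | ofPoint Q.level x = Q}

/-- The midpoint of a dyadic cube. -/
noncomputable def center (Q : DyadicCube ι) : ι → ℝ := fun l ↦ (Q.index l + 1 / 2) * Q.side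

/-- The dyadic cube of twice the side length that contains a given one. -/
def parent (Q : DyadicCube ι) : DyadicCube ι := ⟨Q.level + 1, fun l ↦ Q.index l / 2⟩

theorem side_pos (Q : DyadicCube ι) : 0 < Q.side := zpow_pos two_pos _

theorem side_parent (Q : DyadicCube ι) : Q.parent.side = 2 * Q.side := by
  rw [side, side, parent, zpow_add_one₀ two_ne_zero, mul_comm]

theorem mem_toSet_ofPoint (k : ℤ) (x : ι → ℝ) : x ∈ (ofPoint k x).toSet := rfl

theorem mem_toSet_iff :
    x ∈ Q.toSet ↔ ∀ l, Q.index l * Q.side ≤ x l ∧ x l < (Q.index l + 1) * Q.side := by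
  have h := Q.side_pos
  rw [side] at h
  simp only [toSet, ofPoint, mem_ofPred_eq, DyadicCube.ext_iff, funext_iff, Int.floor_eq_iff,
    le_div_iff₀ h, div_lt_iff₀ h, true_and, side]

theorem center_mem (Q : DyadicCube ι) : Q.center ∈ Q.toSet := by
  have h := Q.side_pos
  refine mem_toSet_iff.2 fun l ↦ ?_
  rw [center]
  constructor <;> nlinarith

theorem ofPoint_succ (k : ℤ) (x : ι → ℝ) : ofPoint (k + 1) x = (ofPoint k x).parent := by
  refine DyadicCube.ext rfl (funext fun l ↦ ?_)
  change ⌊x l / 2 ^ (k + 1)⌋ = _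
  rw [zpow_add_one₀ two_ne_zero, ← div_div]
  exact_mod_cast Int.floor_div_natCast (x l / (2 : ℝ) ^ k) 2

theorem ofPoint_eq_of_le {k m : ℤ} (h : k ≤ m) (hxy : ofPoint k x = ofPoint k y) :
    ofPoint m x = ofPoint m y := by
  induction m, h using Int.leInduction with
  | base => exact hxy
  | succ m _ ih => rw [ofPoint_succ, ofPoint_succ, ih]

theorem toSet_subset_toSet (h : Q.level ≤ R.level) (hQ : x ∈ Q.toSet) (hR : x ∈ R.toSet) :
    Q.toSet ⊆ R.toSet := fun y hy ↦
  (ofPoint_eq_of_le h ((show ofPoint Q.level y = Q from hy).trans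
    (show ofPoint Q.level x = Q from hQ).symm)).trans hR

theorem eq_of_level_eq (h : Q.level = R.level) (hQ : x ∈ Q.toSet) (hR : x ∈ R.toSet) : Q = R := by
  rw [← show ofPoint Q.level x = Q from hQ, ← show ofPoint R.level x = R from hR, h]

theorem toSet_subset_toSet_parent (Q : DyadicCube ι) : Q.toSet ⊆ Q.parent.toSet := fun y hy ↦ by
  rw [← show ofPoint Q.level y = Q from hy, ← ofPoint_succ]
  exact mem_toSet_ofPoint _ _

/-- Inclusion of dyadic cubes. The comparison of levels is redundant unless `ι` is empty, when all
dyadic cubes have the same underlying set. -/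
instance : PartialOrder (DyadicCube ι) where
  le Q R := Q.level ≤ R.level ∧ Q.toSet ⊆ R.toSet
  le_refl _ := ⟨le_rfl, subset_rfl⟩
  le_trans _ _ _ h h' := ⟨h.1.trans h'.1, h.2.trans h'.2⟩
  le_antisymm Q _ h h' := eq_of_level_eq (h.1.antisymm h'.1) Q.center_mem (h.2 Q.center_mem)

theorem le_parent (Q : DyadicCube ι) : Q ≤ Q.parent :=
  ⟨(lt_add_one _).le, Q.toSet_subset_toSet_parent⟩

theorem not_parent_of_maximal {P : DyadicCube ι → Prop} (hQ : Maximal P Q) : ¬ P Q.parent :=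
  fun h ↦ (lt_add_one Q.level).not_ge (hQ.2 h Q.le_parent).1

theorem pairwiseDisjoint_maximal (P : DyadicCube ι → Prop) :
    {Q | Maximal P Q}.PairwiseDisjoint toSet := by
  have hle {Q R : DyadicCube ι} (hQ : Maximal P Q) (hR : Maximal P R) (h : Q.level ≤ R.level)
      {x : ι → ℝ} (hxQ : x ∈ Q.toSet) (hxR : x ∈ R.toSet) : Q = R :=
    hQ.eq_of_le hR.1 ⟨h, toSet_subset_toSet h hxQ hxR⟩
  intro Q hQ R hR hQR
  refine Set.disjoint_left.2 fun x hxQ hxR ↦ hQR ?_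
  rcases le_total Q.level R.level with h | h
  · exact hle hQ hR h hxQ hxR
  · exact (hle hR hQ h hxR hxQ).symm

theorem exists_le_maximal {P : DyadicCube ι → Prop} {B : ℤ} (hB : ∀ Q, P Q → Q.level ≤ B)
    (hQ : P Q) : ∃ R, Maximal P R ∧ Q ≤ R := by
  obtain ⟨_, ⟨R, ⟨hR, hQR⟩, rfl⟩, hmax⟩ := Int.exists_greatest_of_bdd
    (P := fun k ↦ ∃ R, (P R ∧ Q ≤ R) ∧ R.level = k)
    ⟨B, by rintro _ ⟨R, hR, rfl⟩; exact hB R hR.1⟩ ⟨_, Q, ⟨hQ, le_rfl⟩, rfl⟩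
  refine ⟨R, ⟨hR, fun R' hR' hle ↦ ⟨hmax _ ⟨R', ⟨hR', hQR.trans hle⟩, rfl⟩, ?_⟩⟩, hQR⟩
  exact toSet_subset_toSet (hmax _ ⟨R', ⟨hR', hQR.trans hle⟩, rfl⟩) (hle.2 R.center_mem)
    R.center_mem

theorem measurableSet_toSet [Countable ι] (Q : DyadicCube ι) : MeasurableSet Q.toSet := by
  have : Q.toSet = univ.pi fun l ↦ Ico (Q.index l * Q.side) ((Q.index l + 1) * Q.side) := by
    ext x
    simp only [mem_toSet_iff, Set.mem_univ_pi, mem_Ico]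
  rw [this]
  exact MeasurableSet.univ_pi fun _ ↦ measurableSet_Ico

end Geometry

section Measure

variable {ι : Type*} [Fintype ι] {Q R : DyadicCube ι} {x y : ι → ℝ}

theorem toSet_subset_closedBall (Q : DyadicCube ι) :
    Q.toSet ⊆ closedBall Q.center (Q.side / 2) := by
  intro x hx
  rw [mem_closedBall, dist_pi_le_iff (half_pos Q.side_pos).le]
  intro l
  have := mem_toSet_iff.1 hx l
  rw [Real.dist_eq, abs_le, center]
  constructor <;> linarith

theorem ball_subset_toSet (Q : DyadicCube ι) : ball Q.center (Q.side / 2) ⊆ Q.toSet := by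
  intro x hx
  rw [mem_ball, dist_pi_lt_iff (half_pos Q.side_pos)] at hx
  refine mem_toSet_iff.2 fun l ↦ ?_
  have := hx l
  rw [Real.dist_eq, abs_lt, center] at this
  constructor <;> linarith

theorem dist_le_side (hx : x ∈ Q.toSet) (hy : y ∈ Q.toSet) : dist x y ≤ Q.side := by
  have hx' := mem_closedBall.1 (Q.toSet_subset_closedBall hx)
  have hy' := mem_closedBall.1 (Q.toSet_subset_closedBall hy)
  linarith [dist_triangle_right x y Q.center]

theorem toSet_ae_eq_closedBall (Q : DyadicCube ι) :
    Q.toSet =ᵐ[volume] closedBall Q.center (Q.side / 2) := by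
  refine ae_eq_of_subset_of_measure_ge Q.toSet_subset_closedBall
    (le_trans (le_of_eq ?_) (measure_mono Q.ball_subset_toSet))
    Q.measurableSet_toSet.nullMeasurableSet measure_closedBall_lt_top.ne
  rw [Real.volume_pi_closedBall _ (half_pos Q.side_pos).le,
    Real.volume_pi_ball _ (half_pos Q.side_pos)]

theorem volume_toSet (Q : DyadicCube ι) :
    volume Q.toSet = ENNReal.ofReal Q.side ^ Fintype.card ι := by
  rw [measure_congr Q.toSet_ae_eq_closedBall,
    Real.volume_pi_closedBall _ (half_pos Q.side_pos).le, mul_div_cancel₀ _ two_ne_zero,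
    ENNReal.ofReal_pow Q.side_pos.le]

theorem volume_toSet_ne_zero (Q : DyadicCube ι) : volume Q.toSet ≠ 0 := by
  rw [volume_toSet]
  exact pow_ne_zero _ (ENNReal.ofReal_pos.2 Q.side_pos).ne'

theorem volume_toSet_ne_top (Q : DyadicCube ι) : volume Q.toSet ≠ ∞ := by
  rw [volume_toSet]
  exact ENNReal.pow_ne_top ENNReal.ofReal_ne_top

/-- The cube concentric with `Q` whose radius in the sup norm is `s` side lengths of `Q`. -/
def dilate (s : ℝ) (Q : DyadicCube ι) : Set (ι → ℝ) := closedBall Q.center (s * Q.side)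

theorem toSet_subset_dilate {s : ℝ} (hs : 1 / 2 ≤ s) (Q : DyadicCube ι) : Q.toSet ⊆ Q.dilate s :=
  Q.toSet_subset_closedBall.trans
    (closedBall_subset_closedBall (by nlinarith [Q.side_pos]))

theorem measurableSet_dilate (s : ℝ) (Q : DyadicCube ι) : MeasurableSet (Q.dilate s) :=
  measurableSet_closedBall

theorem volume_dilate {s : ℝ} (hs : 0 ≤ s) (Q : DyadicCube ι) :
    volume (Q.dilate s) = ENNReal.ofReal (2 * s) ^ Fintype.card ι * volume Q.toSet := by
  have hside := Q.side_pos
  rw [dilate, volume_toSet, Real.volume_pi_closedBall _ (by positivity), ← mul_pow,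
    ← ENNReal.ofReal_mul (by positivity), ENNReal.ofReal_pow (by positivity), mul_assoc]

theorem volume_dilate_ne_zero {s : ℝ} (hs : 0 < s) (Q : DyadicCube ι) :
    volume (Q.dilate s) ≠ 0 :=
  (measure_closedBall_pos volume _ (mul_pos hs Q.side_pos)).ne'

theorem volume_dilate_ne_top (s : ℝ) (Q : DyadicCube ι) : volume (Q.dilate s) ≠ ∞ :=
  measure_closedBall_lt_top.ne

theorem volume_toSet_parent (Q : DyadicCube ι) :
    volume Q.parent.toSet = 2 ^ Fintype.card ι * volume Q.toSet := by
  rw [volume_toSet, volume_toSet, side_parent, ENNReal.ofReal_mul two_pos.le, mul_pow,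
    ENNReal.ofReal_ofNat]

theorem volume_biUnion_toSet {J : Set (DyadicCube ι)} (hJ : J.PairwiseDisjoint toSet) :
    volume (⋃ Q ∈ J, Q.toSet) = ∑' Q : J, volume Q.1.toSet :=
  measure_biUnion J.to_countable hJ fun Q _ ↦ Q.measurableSet_toSet

end Measure

end DyadicCube

section Seminorm

variable {ι E : Type*} [Fintype ι] [NormedAddCommGroup E] [NormedSpace ℝ E] {u : (ι → ℝ) → E}
  {κ α p : ℝ} {D : Set (ι → ℝ)}

/-- The seminorm `|u|_{A^{δ,p}_κ(D)}` with `α = δ / n`, computed from finite disjoint families of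
cubes, which are the closed balls of the sup norm. -/
noncomputable def cubeSeminorm (κ α p : ℝ) (D : Set (ι → ℝ)) (u : (ι → ℝ) → E) : ℝ≥0∞ :=
  ⨆ (T : Finset ((ι → ℝ) × ℝ)) (_ : ∀ c ∈ T, 0 < c.2 ∧ closedBall c.1 (κ * c.2) ⊆ D)
    (_ : (T : Set ((ι → ℝ) × ℝ)).PairwiseDisjoint fun c ↦ closedBall c.1 c.2),
    (∑ c ∈ T, oscEnergy volume α p u (closedBall c.1 c.2)) ^ (1 / p)

theorem sum_oscEnergy_closedBall_le (hp : 0 < p) {β : Type*} (T : Finset β) {z : β → ι → ℝ}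
    {r : β → ℝ} (hr : ∀ i ∈ T, 0 < r i) (hD : ∀ i ∈ T, closedBall (z i) (κ * r i) ⊆ D)
    (hT : (T : Set β).PairwiseDisjoint fun i ↦ closedBall (z i) (r i)) :
    ∑ i ∈ T, oscEnergy volume α p u (closedBall (z i) (r i)) ≤ cubeSeminorm κ α p D u ^ p := by
  classical
  have hinj : InjOn (fun i ↦ (z i, r i)) (T : Set β) := fun i hi j hj hij ↦ by
    obtain ⟨hz, _⟩ := Prod.mk.inj hij
    refine hT.elim_set hi hj (z i) (mem_closedBall_self (hr i hi).le) ?_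
    rw [hz]
    exact mem_closedBall_self (hr j hj).le
  rw [← ENNReal.rpow_inv_le_iff hp, ← one_div, cubeSeminorm]
  refine le_iSup_of_le (T.image fun i ↦ (z i, r i)) (le_iSup₂_of_le ?_ ?_ ?_)
  · simpa using fun i hi ↦ ⟨hr i hi, hD i hi⟩
  · rw [Finset.coe_image]
    exact hinj.pairwiseDisjoint_image.2 hT
  · rw [Finset.sum_image hinj]

theorem iUnion_closedBall_one_sub_mul {X : Type*} [PseudoMetricSpace X] (z : X) {r : ℝ}
    (hr : 0 < r) : ⋃ m : ℕ, closedBall z ((1 - 1 / ((m : ℝ) + 2)) * r) = ball z r := by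
  refine Subset.antisymm (iUnion_subset fun m ↦ closedBall_subset_ball ?_) fun x hx ↦ ?_
  · have : 0 < 1 / ((m : ℝ) + 2) := by positivity
    nlinarith
  · have hinv : Tendsto (fun m : ℕ ↦ 1 / ((m : ℝ) + 2)) atTop (𝓝 0) :=
      tendsto_const_nhds.div_atTop (tendsto_natCast_atTop_atTop.atTop_add tendsto_const_nhds)
    have hlim : Tendsto (fun m : ℕ ↦ (1 - 1 / ((m : ℝ) + 2)) * r) atTop (𝓝 r) := by
      simpa using (hinv.const_sub 1).mul_const r
    obtain ⟨m, hm⟩ := (hlim.eventually_const_lt (mem_ball.1 hx)).exists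
    exact mem_iUnion.2 ⟨m, hm.le⟩

theorem tendsto_oscEnergy_closedBall_one_sub_mul (hp : 0 ≤ p) {z : ι → ℝ} {r : ℝ} (hr : 0 < r)
    (hu : IntegrableOn u (closedBall z r)) :
    Tendsto (fun m : ℕ ↦ oscEnergy volume α p u (closedBall z ((1 - 1 / ((m : ℝ) + 2)) * r))) atTop
      (𝓝 (oscEnergy volume α p u (closedBall z r))) := by
  have hae : closedBall z r =ᵐ[volume] ball z r := by
    refine (ae_eq_of_subset_of_measure_ge ball_subset_closedBall ?_
      measurableSet_ball.nullMeasurableSet measure_closedBall_lt_top.ne).symm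
    rw [Real.volume_pi_closedBall _ hr.le, Real.volume_pi_ball _ hr]
  rw [oscEnergy_congr hae, ← iUnion_closedBall_one_sub_mul z hr]
  refine tendsto_oscEnergy_iUnion hp (fun i j hij ↦ closedBall_subset_closedBall ?_)
    (fun _ ↦ measurableSet_closedBall) ?_ ?_ ?_ <;> try rw [iUnion_closedBall_one_sub_mul z hr]
  · gcongr
  · exact hu.mono_set ball_subset_closedBall
  · exact (measure_ball_pos volume z hr).ne'
  · exact measure_ball_lt_top.ne

theorem tsum_oscEnergy_dyadicCube_le (hκ : 1 ≤ κ) (hp : 0 < p) (hu : IntegrableOn u D)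
    {J : Set (DyadicCube ι)} (hJ : J.PairwiseDisjoint DyadicCube.toSet)
    (hJD : ∀ Q ∈ J, closedBall Q.center (κ * (Q.side / 2)) ⊆ D) :
    ∑' Q : J, oscEnergy volume α p u Q.1.toSet ≤ cubeSeminorm κ α p D u ^ p := by
  simp_rw [ENNReal.tsum_eq_iSup_sum, fun Q : DyadicCube ι ↦ oscEnergy_congr (μ := volume) (u := u)
    (α := α) (p := p) Q.toSet_ae_eq_closedBall]
  refine iSup_le fun T ↦ ?_
  have hside (Q : DyadicCube ι) : 0 < Q.side / 2 := half_pos Q.side_pos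
  have hshrink (m : ℕ) : 0 < 1 - 1 / ((m : ℝ) + 2) ∧ 1 - 1 / ((m : ℝ) + 2) < 1 := by
    have : 0 < 1 / ((m : ℝ) + 2) := by positivity
    have : 1 / ((m : ℝ) + 2) < 1 := by
      rw [div_lt_one (by positivity)]
      linarith [m.cast_nonneg (α := ℝ)]
    constructor <;> linarith
  refine le_of_tendsto (tendsto_finsetSum T fun Q _ ↦
    tendsto_oscEnergy_closedBall_one_sub_mul hp.le (hside Q.1) (hu.mono_set ?_))
    (Eventually.of_forall fun m ↦ sum_oscEnergy_closedBall_le (κ := κ) hp T ?_ ?_ ?_)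
  · exact (closedBall_subset_closedBall (le_mul_of_one_le_left (hside Q.1).le hκ)).trans
      (hJD Q.1 Q.2)
  · exact fun Q _ ↦ mul_pos (hshrink m).1 (hside Q.1)
  · refine fun Q _ ↦ (closedBall_subset_closedBall ?_).trans (hJD Q.1 Q.2)
    gcongr
    exact mul_le_of_le_one_left (hside Q.1).le (hshrink m).2.le
  · have hsub (Q : DyadicCube ι) :
        closedBall Q.center ((1 - 1 / ((m : ℝ) + 2)) * (Q.side / 2)) ⊆ Q.toSet :=
      (closedBall_subset_ball (mul_lt_of_lt_one_left (hside Q) (hshrink m).2)).trans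
        Q.ball_subset_toSet
    exact fun Q _ R _ hQR ↦
      (hJ Q.2 R.2 (Subtype.coe_injective.ne hQR)).mono (hsub Q.1) (hsub R.1)

theorem tsum_oscOn_dyadicCube_le (hκ : 1 ≤ κ) (hα : 0 ≤ α) (hp : 1 ≤ p) (hu : IntegrableOn u D)
    {J : Set (DyadicCube ι)} (hJ : J.PairwiseDisjoint DyadicCube.toSet)
    (hJD : ∀ Q ∈ J, closedBall Q.center (κ * (Q.side / 2)) ⊆ D) :
    ∑' Q : J, oscOn volume u Q.1.toSet ≤
      cubeSeminorm κ α p D u * volume (⋃ Q ∈ J, Q.toSet) ^ (1 - 1 / p + α) := by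
  rw [DyadicCube.volume_biUnion_toSet hJ]
  refine (tsum_oscOn_le hα hp (fun Q : J ↦ Q.1.toSet) (fun Q ↦ Q.1.volume_toSet_ne_zero)
    fun Q ↦ Q.1.volume_toSet_ne_top).trans ?_
  gcongr
  rw [one_div, ENNReal.rpow_inv_le_iff (by linarith)]
  exact tsum_oscEnergy_dyadicCube_le hκ (by linarith) hu hJ hJD

end Seminorm

section Whitney

variable {ι : Type*} [Fintype ι] {K : ℝ} {D : Set (ι → ℝ)} {Q R : DyadicCube ι} {x y : ι → ℝ}

/-- All points of the cube `Q` lie at distance at least `K` side lengths from the complement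
of `D`. -/
def DyadicCube.IsDeep (K : ℝ) (D : Set (ι → ℝ)) (Q : DyadicCube ι) : Prop :=
  ∀ y ∈ Q.toSet, K * Q.side ≤ infDist y Dᶜ

theorem mem_of_infDist_compl_pos {X : Type*} [PseudoMetricSpace X] {D : Set X} {y : X}
    (h : 0 < infDist y Dᶜ) : y ∈ D :=
  notMem_compl_iff.1 fun hy ↦ h.ne' (infDist_zero_of_mem hy)

theorem infDist_compl_pos {X : Type*} [PseudoMetricSpace X] {D : Set X} (hD : IsOpen D)
    (hne : Dᶜ.Nonempty) {y : X} (hy : y ∈ D) : 0 < infDist y Dᶜ :=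
  (hD.isClosed_compl.notMem_iff_infDist_pos hne).1 (notMem_compl_iff.2 hy)

theorem DyadicCube.IsDeep.subset (hK : 0 < K) (hQ : Q.IsDeep K D) : Q.toSet ⊆ D := fun y hy ↦
  mem_of_infDist_compl_pos ((mul_pos hK Q.side_pos).trans_le (hQ y hy))

theorem DyadicCube.IsDeep.closedBall_subset (hQ : Q.IsDeep K D) {r : ℝ} (hr : r < K * Q.side) :
    closedBall Q.center r ⊆ D := fun y hy ↦ by
  have hdist := hQ _ Q.center_mem
  have htri : infDist Q.center Dᶜ ≤ infDist y Dᶜ + dist Q.center y := infDist_le_infDist_add_dist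
  rw [mem_closedBall'] at hy
  exact mem_of_infDist_compl_pos (by linarith)

theorem DyadicCube.IsDeep.anti (hK : 0 ≤ K) (hQR : Q ≤ R) (hR : R.IsDeep K D) :
    Q.IsDeep K D := fun y hy ↦
  (mul_le_mul_of_nonneg_left (zpow_le_zpow_right₀ one_le_two hQR.1) hK).trans (hR y (hQR.2 hy))

theorem DyadicCube.isDeep_ofPoint {k : ℤ} (h : (K + 1) * 2 ^ k ≤ infDist x Dᶜ) :
    (ofPoint k x).IsDeep K D := fun y hy ↦ by
  have hdist : dist x y ≤ 2 ^ k := dist_le_side (mem_toSet_ofPoint k x) hy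
  have htri : infDist x Dᶜ ≤ infDist y Dᶜ + dist x y := infDist_le_infDist_add_dist
  change K * 2 ^ k ≤ _
  linarith

theorem tendsto_two_zpow_neg : Tendsto (fun m : ℕ ↦ (2 : ℝ) ^ (-(m : ℤ))) atTop (𝓝 0) := by
  simp_rw [zpow_neg, zpow_natCast, ← inv_pow]
  exact tendsto_pow_atTop_nhds_zero_of_lt_one (by norm_num) (by norm_num)

theorem DyadicCube.eventually_isDeep_ofPoint (hD : IsOpen D) (hne : Dᶜ.Nonempty) (hx : x ∈ D)
    (K : ℝ) : ∀ᶠ m : ℕ in atTop, (ofPoint (-(m : ℤ)) x).IsDeep K D := by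
  have hlim : Tendsto (fun m : ℕ ↦ (K + 1) * (2 : ℝ) ^ (-(m : ℤ))) atTop (𝓝 0) := by
    simpa using tendsto_two_zpow_neg.const_mul (K + 1)
  filter_upwards [hlim.eventually_lt_const (infDist_compl_pos hD hne hx)] with m hm
  exact isDeep_ofPoint hm.le

theorem DyadicCube.exists_level_le_of_isDeep (hK : 1 ≤ K) (hb : Bornology.IsBounded D)
    (hne : Dᶜ.Nonempty) : ∃ B : ℤ, ∀ Q : DyadicCube ι, Q.IsDeep K D → Q.level ≤ B := by
  obtain ⟨w, hw⟩ := hne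
  obtain ⟨R, hR⟩ := hb.subset_closedBall w
  obtain ⟨b, hb⟩ := pow_unbounded_of_one_lt R one_lt_two
  refine ⟨b, fun Q hQ ↦ not_lt.1 fun hlt ↦ ?_⟩
  have hside : (2 : ℝ) ^ b ≤ Q.side := by
    rw [← zpow_natCast]
    exact zpow_le_zpow_right₀ one_le_two hlt.le
  have hupper : infDist Q.center Dᶜ ≤ R :=
    (infDist_le_dist_of_mem hw).trans (hR (hQ.subset (by linarith) Q.center_mem))
  linarith [hQ _ Q.center_mem, le_mul_of_one_le_left Q.side_pos.le hK]

/-- The Whitney cubes of `D` with parameter `K`: the maximal dyadic cubes whose distance to the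
complement of `D` is at least `K` times their side length. -/
def whitney (K : ℝ) (D : Set (ι → ℝ)) : Set (DyadicCube ι) :=
  {Q | Maximal (DyadicCube.IsDeep K D) Q}

theorem pairwiseDisjoint_whitney (K : ℝ) (D : Set (ι → ℝ)) :
    (whitney K D).PairwiseDisjoint DyadicCube.toSet :=
  DyadicCube.pairwiseDisjoint_maximal _

theorem eq_of_mem_whitney (hQ : Q ∈ whitney K D) (hR : R ∈ whitney K D) (hxQ : x ∈ Q.toSet)
    (hxR : x ∈ R.toSet) : Q = R :=
  (pairwiseDisjoint_whitney K D).elim_set hQ hR x hxQ hxR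

theorem exists_mem_whitney_ge (hK : 1 ≤ K) (hb : Bornology.IsBounded D) (hne : Dᶜ.Nonempty)
    (hQ : Q.IsDeep K D) : ∃ W ∈ whitney K D, Q ≤ W := by
  obtain ⟨B, hB⟩ := DyadicCube.exists_level_le_of_isDeep hK hb hne
  exact DyadicCube.exists_le_maximal hB hQ

theorem biUnion_whitney (hK : 1 ≤ K) (hD : IsOpen D) (hb : Bornology.IsBounded D)
    (hne : Dᶜ.Nonempty) : ⋃ Q ∈ whitney K D, Q.toSet = D := by
  refine Subset.antisymm (iUnion₂_subset fun Q hQ ↦ hQ.1.subset (by linarith)) fun x hx ↦ ?_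
  obtain ⟨m, hm⟩ := (DyadicCube.eventually_isDeep_ofPoint hD hne hx K).exists
  obtain ⟨W, hW, hle⟩ := exists_mem_whitney_ge hK hb hne hm
  exact mem_iUnion₂.2 ⟨W, hW, hle.2 (DyadicCube.mem_toSet_ofPoint _ x)⟩

theorem infDist_compl_le_of_mem_whitney (hQ : Q ∈ whitney K D) (hx : x ∈ Q.toSet) :
    infDist x Dᶜ ≤ (2 * K + 2) * Q.side := by
  obtain ⟨y, hy, hlt⟩ : ∃ y ∈ Q.parent.toSet, infDist y Dᶜ < K * Q.parent.side := by
    simpa only [DyadicCube.IsDeep, not_forall, not_le, exists_prop] using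
      DyadicCube.not_parent_of_maximal hQ
  have hdist := DyadicCube.dist_le_side (Q.toSet_subset_toSet_parent hx) hy
  have htri : infDist x Dᶜ ≤ infDist y Dᶜ + dist x y := infDist_le_infDist_add_dist
  rw [DyadicCube.side_parent] at hlt hdist
  linarith

variable {E : Type*} [NormedAddCommGroup E] [NormedSpace ℝ E] {u : (ι → ℝ) → E}

/-- The function that is constant on each Whitney cube of `D`, with value the average of `u` over
that cube. -/
noncomputable def whitneyAverage (K : ℝ) (D : Set (ι → ℝ)) (u : (ι → ℝ) → E) (x : ι → ℝ) : E :=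
  ⨍ y in ⋃ Q ∈ {Q | Q ∈ whitney K D ∧ x ∈ Q.toSet}, Q.toSet, u y

theorem whitneyAverage_eq (hQ : Q ∈ whitney K D) (hx : x ∈ Q.toSet) :
    whitneyAverage K D u x = ⨍ y in Q.toSet, u y := by
  have : {R | R ∈ whitney K D ∧ x ∈ R.toSet} = {Q} :=
    eq_singleton_iff_unique_mem.2 ⟨⟨hQ, hx⟩, fun R hR ↦ eq_of_mem_whitney hR.1 hQ hR.2 hx⟩
  rw [whitneyAverage, this, biUnion_singleton]

theorem setLIntegral_whitneyAverage (hQ : Q ∈ whitney K D) {A : Set (ι → ℝ)} (hA : MeasurableSet A)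
    (hAQ : A ⊆ Q.toSet) :
    ∫⁻ x in A, ‖u x - whitneyAverage K D u x‖ₑ = ∫⁻ x in A, ‖u x - ⨍ y in Q.toSet, u y‖ₑ :=
  setLIntegral_congr_fun hA fun x hx ↦ by rw [whitneyAverage_eq hQ (hAQ hx)]

variable [CompleteSpace E]

theorem setLIntegral_enorm_sub_whitneyAverage_le (hK : 1 ≤ K) (hD : IsOpen D)
    (hb : Bornology.IsBounded D) (hne : Dᶜ.Nonempty) (hu : IntegrableOn u D) :
    ∫⁻ x in D, ‖u x - whitneyAverage K D u x‖ₑ ≤ 2 * ∫⁻ x in D, ‖u x‖ₑ := by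
  have hsum (f : (ι → ℝ) → ℝ≥0∞) : ∫⁻ x in D, f x = ∑' Q : whitney K D, ∫⁻ x in Q.1.toSet, f x := by
    rw [← lintegral_biUnion (whitney K D).to_countable (fun Q _ ↦ Q.measurableSet_toSet)
      (pairwiseDisjoint_whitney K D), biUnion_whitney hK hD hb hne]
  rw [hsum, hsum, ← ENNReal.tsum_mul_left]
  gcongr with Q
  rw [setLIntegral_whitneyAverage Q.2 Q.1.measurableSet_toSet subset_rfl]
  change oscOn volume u Q.1.toSet ≤ _
  simpa using oscOn_le_two_mul (hu.mono_set (Q.2.1.subset (by linarith))) Q.1.volume_toSet_ne_top 0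

end Whitney

section CalderonZygmund

variable {ι : Type*} [Fintype ι] {K : ℝ} {θ : ℝ≥0∞} {D A : Set (ι → ℝ)} {Q : DyadicCube ι}

/-- The set `A` fills more than the fraction `θ` of the cube `Q`. -/
def DyadicCube.IsDense (θ : ℝ≥0∞) (A : Set (ι → ℝ)) (Q : DyadicCube ι) : Prop :=
  θ * volume Q.toSet < volume (A ∩ Q.toSet)

theorem DyadicCube.ae_eventually_isDense (hθ : θ < 1) (hA : MeasurableSet A) :
    ∀ᵐ x, x ∈ A → ∀ᶠ m : ℕ in atTop, (ofPoint (-(m : ℤ)) x).IsDense θ A := by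
  have hdensity :=
    IsUnifLocDoublingMeasure.ae_tendsto_measure_inter_div (volume : Measure (ι → ℝ)) A 1
  rw [ae_restrict_iff' hA] at hdensity
  filter_upwards [hdensity] with x hx hxA
  have hradius : Tendsto (fun m : ℕ ↦ (2 : ℝ) ^ (-(m : ℤ)) / 2) atTop (𝓝[>] 0) :=
    tendsto_nhdsWithin_iff.2 ⟨by simpa using tendsto_two_zpow_neg.div_const 2,
      Eventually.of_forall fun m ↦ mem_Ioi.2 (by positivity)⟩
  have hmem (m : ℕ) := (ofPoint (-(m : ℤ)) x).toSet_subset_closedBall (mem_toSet_ofPoint _ x)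
  filter_upwards [(hx hxA (fun m : ℕ ↦ (ofPoint (-(m : ℤ)) x).center) _ hradius
    (Eventually.of_forall fun m ↦ by rw [one_mul]; exact hmem m)).eventually_const_lt hθ]
    with m hm
  have hae := (ofPoint (-(m : ℤ)) x).toSet_ae_eq_closedBall
  rw [IsDense, ← ENNReal.lt_div_iff_mul_lt (Or.inl (volume_toSet_ne_zero _))
    (Or.inl (volume_toSet_ne_top _)), measure_congr hae, measure_congr ((ae_eq_refl A).inter hae)]
  exact hm

/-- The cubes at which the Calderón-Zygmund decomposition of `A` relative to the Whitney cubes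
of `D` stops: the maximal ones among the deep cubes in which `A` has density greater than `θ`. -/
def stoppingCubes (K : ℝ) (θ : ℝ≥0∞) (D A : Set (ι → ℝ)) : Set (DyadicCube ι) :=
  {Q | Maximal (fun Q ↦ Q.IsDeep K D ∧ Q.IsDense θ A) Q}

theorem pairwiseDisjoint_stoppingCubes (K : ℝ) (θ : ℝ≥0∞) (D A : Set (ι → ℝ)) :
    (stoppingCubes K θ D A).PairwiseDisjoint DyadicCube.toSet :=
  DyadicCube.pairwiseDisjoint_maximal _

theorem ae_le_biUnion_stoppingCubes (hK : 1 ≤ K) (hD : IsOpen D) (hb : Bornology.IsBounded D)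
    (hne : Dᶜ.Nonempty) (hθ : θ < 1) (hA : MeasurableSet A) (hAD : A ⊆ D) :
    A ≤ᵐ[volume] ⋃ Q ∈ stoppingCubes K θ D A, A ∩ Q.toSet := by
  filter_upwards [DyadicCube.ae_eventually_isDense hθ hA] with x hx hxA
  obtain ⟨m, hdense, hdeep⟩ := ((hx hxA).and
    (DyadicCube.eventually_isDeep_ofPoint hD hne (hAD hxA) K)).exists
  obtain ⟨B, hB⟩ := DyadicCube.exists_level_le_of_isDeep (ι := ι) hK hb hne
  obtain ⟨R, hR, hle⟩ := DyadicCube.exists_le_maximal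
    (P := fun Q ↦ Q.IsDeep K D ∧ Q.IsDense θ A) (fun Q hQ ↦ hB Q hQ.1) ⟨hdeep, hdense⟩
  exact mem_iUnion₂.2 ⟨R, hR, hxA, hle.2 (DyadicCube.mem_toSet_ofPoint _ x)⟩

theorem volume_biUnion_stoppingCubes_le (hθ₀ : θ ≠ 0) (hθ : θ ≠ ∞) (hA : MeasurableSet A) :
    volume (⋃ Q ∈ stoppingCubes K θ D A, Q.toSet) ≤ θ⁻¹ * volume A := by
  have hdisj := pairwiseDisjoint_stoppingCubes K θ D A
  rw [← ENNReal.mul_le_iff_le_inv hθ₀ hθ, DyadicCube.volume_biUnion_toSet hdisj,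
    ← ENNReal.tsum_mul_left]
  calc ∑' Q : stoppingCubes K θ D A, θ * volume Q.1.toSet
      ≤ ∑' Q : stoppingCubes K θ D A, volume (A ∩ Q.1.toSet) := by
        gcongr with Q; exact Q.2.1.2.le
    _ = volume (⋃ Q ∈ stoppingCubes K θ D A, A ∩ Q.toSet) :=
        (measure_biUnion (to_countable _) (hdisj.mono fun _ ↦ inter_subset_right)
          fun Q _ ↦ hA.inter Q.measurableSet_toSet).symm
    _ ≤ volume A := measure_mono (iUnion₂_subset fun _ _ ↦ inter_subset_left)

variable {E : Type*} [NormedAddCommGroup E] [NormedSpace ℝ E] [CompleteSpace E] {u : (ι → ℝ) → E}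

theorem setLIntegral_enorm_sub_whitneyAverage_inter_le (hK : 1 ≤ K) (hb : Bornology.IsBounded D)
    (hne : Dᶜ.Nonempty) (hu : IntegrableOn u D) (hA : MeasurableSet A)
    (hQ : Q ∈ stoppingCubes K θ D A) :
    ∫⁻ x in A ∩ Q.toSet, ‖u x - whitneyAverage K D u x‖ₑ ≤ oscOn volume u Q.toSet +
      2 ^ Fintype.card ι * θ * ∫⁻ x in Q.toSet, ‖u x - whitneyAverage K D u x‖ₑ := by
  obtain ⟨W, hW, hQW⟩ := exists_mem_whitney_ge hK hb hne hQ.1.1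
  have huQ : IntegrableOn u Q.toSet := hu.mono_set (hQ.1.1.subset (by linarith))
  set a := ⨍ y in Q.toSet, u y
  set b := ⨍ y in W.toSet, u y
  rw [setLIntegral_whitneyAverage hW (hA.inter Q.measurableSet_toSet)
    (inter_subset_right.trans hQW.2), setLIntegral_whitneyAverage hW Q.measurableSet_toSet hQW.2]
  refine (setLIntegral_enorm_sub_le u a b _).trans
    (add_le_add (lintegral_mono_set inter_subset_right) ?_)
  by_cases hdeep : Q.parent.IsDeep K D
  · have hmax : Maximal (fun Q : DyadicCube ι ↦ Q.IsDeep K D ∧ Q.IsDense θ A) Q := hQ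
    have hsparse : volume (A ∩ Q.parent.toSet) ≤ θ * volume Q.parent.toSet :=
      not_lt.1 fun h ↦ DyadicCube.not_parent_of_maximal hmax ⟨hdeep, h⟩
    calc ‖a - b‖ₑ * volume (A ∩ Q.toSet)
        ≤ ‖a - b‖ₑ * (θ * volume Q.parent.toSet) := by
          gcongr
          exact (measure_mono (inter_subset_inter_right _ Q.toSet_subset_toSet_parent)).trans
            hsparse
      _ = 2 ^ Fintype.card ι * θ * (volume Q.toSet * ‖a - b‖ₑ) := by
          rw [DyadicCube.volume_toSet_parent]; ring
      _ ≤ _ := by gcongr; exact measure_mul_enorm_setAverage_sub_le huQ Q.volume_toSet_ne_top b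
  · have hlevel : W.level ≤ Q.level := not_lt.1 fun hlt ↦ hdeep <|
      hW.1.anti (by linarith) ⟨hlt, DyadicCube.toSet_subset_toSet hlt
        (Q.toSet_subset_toSet_parent Q.center_mem) (hQW.2 Q.center_mem)⟩
    obtain rfl : Q = W :=
      DyadicCube.eq_of_level_eq (hQW.1.antisymm hlevel) Q.center_mem (hQW.2 Q.center_mem)
    simp [a, b]

theorem setLIntegral_enorm_sub_whitneyAverage_le_stoppingCubes (hK : 1 ≤ K) (hD : IsOpen D)
    (hb : Bornology.IsBounded D) (hne : Dᶜ.Nonempty) (hu : IntegrableOn u D) (hθ : θ < 1)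
    (hA : MeasurableSet A) (hAD : A ⊆ D) :
    ∫⁻ x in A, ‖u x - whitneyAverage K D u x‖ₑ ≤
      ∑' Q : stoppingCubes K θ D A, oscOn volume u Q.1.toSet + 2 ^ Fintype.card ι * θ *
        ∫⁻ x in ⋃ Q ∈ stoppingCubes K θ D A, Q.toSet, ‖u x - whitneyAverage K D u x‖ₑ := by
  have hdisj := pairwiseDisjoint_stoppingCubes K θ D A
  calc ∫⁻ x in A, ‖u x - whitneyAverage K D u x‖ₑ
      ≤ ∫⁻ x in ⋃ Q ∈ stoppingCubes K θ D A, A ∩ Q.toSet, ‖u x - whitneyAverage K D u x‖ₑ :=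
        lintegral_mono' (Measure.restrict_mono_ae
          (ae_le_biUnion_stoppingCubes hK hD hb hne hθ hA hAD)) le_rfl
    _ = ∑' Q : stoppingCubes K θ D A, ∫⁻ x in A ∩ Q.1.toSet, ‖u x - whitneyAverage K D u x‖ₑ :=
        lintegral_biUnion (to_countable _) (fun Q _ ↦ hA.inter Q.measurableSet_toSet)
          (hdisj.mono fun _ ↦ inter_subset_right) _
    _ ≤ ∑' Q : stoppingCubes K θ D A, (oscOn volume u Q.1.toSet +
          2 ^ Fintype.card ι * θ * ∫⁻ x in Q.1.toSet, ‖u x - whitneyAverage K D u x‖ₑ) := by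
        gcongr with Q
        exact setLIntegral_enorm_sub_whitneyAverage_inter_le hK hb hne hu hA Q.2
    _ = _ := by
        rw [ENNReal.tsum_add, ENNReal.tsum_mul_left, lintegral_biUnion (to_countable _)
          (fun Q _ ↦ Q.measurableSet_toSet) hdisj]

variable {κ α p : ℝ}

theorem setLIntegral_enorm_sub_whitneyAverage_le_add_pow (hκ : 1 ≤ κ) (hα : 0 ≤ α) (hp : 1 ≤ p)
    (hκK : κ ≤ K) (hD : IsOpen D) (hb : Bornology.IsBounded D) (hne : Dᶜ.Nonempty)
    (hu : IntegrableOn u D) (hθ₀ : θ ≠ 0) (hθ : θ < 1)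
    (hθ_small : 2 * 2 ^ Fintype.card ι * θ * θ⁻¹ ^ (1 - 1 / p + α) ≤ 1) (m : ℕ)
    (hA : MeasurableSet A) (hAD : A ⊆ D) :
    ∫⁻ x in A, ‖u x - whitneyAverage K D u x‖ₑ ≤
      2 * cubeSeminorm κ α p D u * (θ⁻¹ * volume A) ^ (1 - 1 / p + α) +
        (2 ^ Fintype.card ι * θ) ^ m * ∫⁻ x in D, ‖u x - whitneyAverage K D u x‖ₑ := by
  have hK : 1 ≤ K := hκ.trans hκK
  induction m generalizing A with
  | zero =>
    rw [pow_zero, one_mul]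
    exact le_add_left (lintegral_mono_set hAD)
  | succ m ih =>
    set S := cubeSeminorm κ α p D u
    set e := 1 - 1 / p + α
    set ρ := 2 ^ Fintype.card ι * θ
    set G := ∫⁻ x in D, ‖u x - whitneyAverage K D u x‖ₑ
    set F := stoppingCubes K θ D A
    set A' := ⋃ Q ∈ F, Q.toSet
    have he₀ : 0 ≤ e := one_sub_one_div_add_nonneg hα hp
    have hvol : volume A' ≤ θ⁻¹ * volume A :=
      volume_biUnion_stoppingCubes_le hθ₀ hθ.ne_top hA
    have hosc : ∑' Q : F, oscOn volume u Q.1.toSet ≤ S * volume A' ^ e :=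
      tsum_oscOn_dyadicCube_le hκ hα hp hu (pairwiseDisjoint_stoppingCubes K θ D A) fun Q hQ ↦
        hQ.1.1.closedBall_subset (by nlinarith [Q.side_pos])
    have hA' := ih (A := A') (.biUnion (to_countable F) fun Q _ ↦ Q.measurableSet_toSet)
      (iUnion₂_subset fun Q hQ ↦ hQ.1.1.subset (by linarith))
    calc ∫⁻ x in A, ‖u x - whitneyAverage K D u x‖ₑ
        ≤ S * volume A' ^ e + ρ * (2 * S * (θ⁻¹ * volume A') ^ e + ρ ^ m * G) :=
          (setLIntegral_enorm_sub_whitneyAverage_le_stoppingCubes hK hD hb hne hu hθ hA hAD).trans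
            (add_le_add hosc (mul_le_mul_right hA' _))
      _ ≤ S * (θ⁻¹ * volume A) ^ e +
            ρ * (2 * S * (θ⁻¹ * (θ⁻¹ * volume A)) ^ e + ρ ^ m * G) := by gcongr
      _ = S * (θ⁻¹ * volume A) ^ e + 2 * 2 ^ Fintype.card ι * θ * θ⁻¹ ^ e *
            (S * (θ⁻¹ * volume A) ^ e) + ρ ^ (m + 1) * G := by
          rw [ENNReal.mul_rpow_of_nonneg θ⁻¹ (θ⁻¹ * volume A) he₀]; ring
      _ ≤ S * (θ⁻¹ * volume A) ^ e + 1 * (S * (θ⁻¹ * volume A) ^ e) + ρ ^ (m + 1) * G := by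
          gcongr
      _ = _ := by ring

theorem setLIntegral_enorm_sub_whitneyAverage_le_cubeSeminorm (hκ : 1 ≤ κ) (hα : 0 ≤ α)
    (hp : 1 ≤ p) (hκK : κ ≤ K) (hD : IsOpen D) (hb : Bornology.IsBounded D) (hne : Dᶜ.Nonempty)
    (hu : IntegrableOn u D) (hθ₀ : θ ≠ 0) (hθ : θ < 1)
    (hθ_small : 2 * 2 ^ Fintype.card ι * θ * θ⁻¹ ^ (1 - 1 / p + α) ≤ 1)
    (hA : MeasurableSet A) (hAD : A ⊆ D) :
    ∫⁻ x in A, ‖u x - whitneyAverage K D u x‖ₑ ≤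
      2 * cubeSeminorm κ α p D u * (θ⁻¹ * volume A) ^ (1 - 1 / p + α) := by
  have hratio : 2 ^ Fintype.card ι * θ < 1 := by
    have hone : 1 ≤ θ⁻¹ ^ (1 - 1 / p + α) := by
      simpa using ENNReal.rpow_le_rpow (ENNReal.one_le_inv.2 hθ.le)
        (one_sub_one_div_add_nonneg hα hp)
    have hhalf : 2 * (2 ^ Fintype.card ι * θ) ≤ 1 := by
      rw [← mul_assoc]
      exact (le_mul_of_one_le_right zero_le hone).trans hθ_small
    rw [mul_comm, ← ENNReal.le_div_iff_mul_le (by simp) (by simp)] at hhalf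
    exact hhalf.trans_lt (by norm_num)
  have hfin : ∫⁻ x in D, ‖u x - whitneyAverage K D u x‖ₑ ≠ ∞ :=
    ne_top_of_le_ne_top (ENNReal.mul_ne_top ENNReal.ofNat_ne_top hu.2.ne)
      (setLIntegral_enorm_sub_whitneyAverage_le (hκ.trans hκK) hD hb hne hu)
  set M := 2 * cubeSeminorm κ α p D u * (θ⁻¹ * volume A) ^ (1 - 1 / p + α)
  have hlim : Tendsto (fun m : ℕ ↦ M + (2 ^ Fintype.card ι * θ) ^ m *
      ∫⁻ x in D, ‖u x - whitneyAverage K D u x‖ₑ) atTop (𝓝 M) := by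
    simpa using (ENNReal.Tendsto.mul_const (ENNReal.tendsto_pow_atTop_nhds_zero_of_lt_one hratio)
      (Or.inr hfin)).const_add M
  exact ge_of_tendsto' hlim fun m ↦ setLIntegral_enorm_sub_whitneyAverage_le_add_pow hκ hα hp hκK
    hD hb hne hu hθ₀ hθ hθ_small m hA hAD

end CalderonZygmund

section Neighbours

variable {ι : Type*} [Fintype ι] {K : ℝ} {D A : Set (ι → ℝ)} {Q R : DyadicCube ι} {x y : ι → ℝ}

theorem mul_side_le_of_mem_whitney (hQ : Q.IsDeep K D) (hR : R ∈ whitney K D) (hx : x ∈ Q.toSet)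
    (hy : y ∈ R.toSet) : K * Q.side ≤ (2 * K + 2) * R.side + dist x y :=
  calc K * Q.side ≤ infDist x Dᶜ := hQ x hx
    _ ≤ infDist y Dᶜ + dist x y := infDist_le_infDist_add_dist
    _ ≤ _ := by gcongr; exact infDist_compl_le_of_mem_whitney hR hy

theorem toSet_subset_dilate_of_inter_dilate (hK : 22 ≤ K) (hQ : Q ∈ whitney K D)
    (hR : R ∈ whitney K D) (h : (R.dilate 5 ∩ Q.dilate 5).Nonempty) : R.toSet ⊆ Q.dilate 22 := by
  obtain ⟨z, hzR, hzQ⟩ := h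
  have hcenter : dist R.center Q.center ≤ 5 * R.side + 5 * Q.side :=
    (dist_triangle_left _ _ z).trans (add_le_add hzR hzQ)
  have hside : R.side ≤ 3 * Q.side := by
    have := mul_side_le_of_mem_whitney hR.1 hQ R.center_mem Q.center_mem
    nlinarith [Q.side_pos, R.side_pos]
  intro x hx
  have hxR := mem_closedBall.1 (R.toSet_subset_closedBall hx)
  rw [DyadicCube.dilate, mem_closedBall]
  linarith [dist_triangle x R.center Q.center, Q.side_pos]

theorem toSet_subset_dilate_of_dist_le_side (hK : 22 ≤ K) (hQ : Q ∈ whitney K D)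
    (hR : R ∈ whitney K D) (hx : x ∈ Q.toSet) (hy : y ∈ R.toSet) (hxy : dist x y ≤ Q.side) :
    R.toSet ⊆ Q.dilate 5 := by
  have hside : R.side ≤ 3 * Q.side := by
    have := mul_side_le_of_mem_whitney hR.1 hQ hy hx
    rw [dist_comm] at this
    nlinarith [Q.side_pos]
  intro z hz
  have hxQ := mem_closedBall.1 (Q.toSet_subset_closedBall hx)
  rw [DyadicCube.dilate, mem_closedBall]
  linarith [dist_triangle z y Q.center, dist_triangle_left y Q.center x,
    DyadicCube.dist_le_side hz hy, Q.side_pos]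

theorem volume_toSet_le_of_dist_le_side (hK : 22 ≤ K) (hQ : Q ∈ whitney K D)
    (hR : R ∈ whitney K D) (hx : x ∈ Q.toSet) (hy : y ∈ R.toSet) (hxy : dist x y ≤ Q.side) :
    volume Q.toSet ≤ 3 ^ Fintype.card ι * volume R.toSet := by
  have hside : Q.side ≤ 3 * R.side := by
    nlinarith [mul_side_le_of_mem_whitney hQ.1 hR hx hy, Q.side_pos, R.side_pos]
  rw [DyadicCube.volume_toSet, DyadicCube.volume_toSet, ← mul_pow, ← ENNReal.ofReal_ofNat,
    ← ENNReal.ofReal_mul (by norm_num)]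
  gcongr

theorem tsum_volume_dilate_le_of_inter_dilate (hK : 22 ≤ K) {J : Set (DyadicCube ι)}
    (hJ : J ⊆ whitney K D) (hQ : Q ∈ whitney K D) :
    ∑' R : {R | R ∈ J ∧ (R.dilate 5 ∩ Q.dilate 5).Nonempty}, volume (R.1.dilate 5) ≤
      44 ^ Fintype.card ι * volume (Q.dilate 5) := by
  set V := {R | R ∈ J ∧ (R.dilate 5 ∩ Q.dilate 5).Nonempty}
  have hV : V.PairwiseDisjoint DyadicCube.toSet :=
    (pairwiseDisjoint_whitney K D).subset fun R hR ↦ hJ hR.1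
  have hsub : ⋃ R ∈ V, R.toSet ⊆ Q.dilate 22 :=
    iUnion₂_subset fun R hR ↦ toSet_subset_dilate_of_inter_dilate hK hQ (hJ hR.1) hR.2
  have hvol (R : DyadicCube ι) := R.volume_dilate (s := 5) (by norm_num)
  calc ∑' R : V, volume (R.1.dilate 5)
      = ENNReal.ofReal (2 * 5) ^ Fintype.card ι * volume (⋃ R ∈ V, R.toSet) := by
        simp_rw [hvol, ENNReal.tsum_mul_left, DyadicCube.volume_biUnion_toSet hV]
    _ ≤ ENNReal.ofReal (2 * 5) ^ Fintype.card ι * volume (Q.dilate 22) := by gcongr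
    _ = 44 ^ Fintype.card ι * volume (Q.dilate 5) := by
        rw [hvol, Q.volume_dilate (by norm_num)]; norm_num; ring

variable {E : Type*} [NormedAddCommGroup E] [NormedSpace ℝ E] {u : (ι → ℝ) → E} {κ α p : ℝ}

theorem tsum_oscEnergy_dilate_le (hκ : 1 ≤ κ) (hκK : 5 * κ < K) (hK : 22 ≤ K) (hp : 0 < p)
    (hu : IntegrableOn u D) {J : Set (DyadicCube ι)} (hJ : J ⊆ whitney K D) :
    ∑' Q : J, oscEnergy volume α p u (Q.1.dilate 5) ≤
      2 * 44 ^ Fintype.card ι * cubeSeminorm κ α p D u ^ p := by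
  rw [ENNReal.tsum_eq_iSup_sum]
  refine iSup_le fun F ↦ ?_
  have hside (Q : DyadicCube ι) : 0 < 5 * Q.side := mul_pos (by norm_num) Q.side_pos
  have hsub (Q : J) : closedBall Q.1.center (κ * (5 * Q.1.side)) ⊆ D :=
    (hJ Q.2).1.closedBall_subset (by nlinarith [Q.1.side_pos])
  have hfin (Q : J) : (volume (Q.1.dilate 5) ^ (-1 - α) * oscOn volume u (Q.1.dilate 5)) ^ p ≠ ∞ :=
    ENNReal.rpow_ne_top_of_nonneg hp.le <| ENNReal.mul_ne_top
      (ENNReal.rpow_ne_top_of_ne_zero (Q.1.volume_dilate_ne_zero (by norm_num))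
        (Q.1.volume_dilate_ne_top 5))
      (oscOn_ne_top (hu.mono_set ((closedBall_subset_closedBall
        (le_mul_of_one_le_left (hside Q.1).le hκ)).trans (hsub Q))) (Q.1.volume_dilate_ne_top 5))
  have hoverlap (R : J) : ∑' Q : {Q | Q ∈ F ∧ (Q.1.dilate 5 ∩ R.1.dilate 5).Nonempty},
      volume (Q.1.1.dilate 5) ≤ 44 ^ Fintype.card ι * volume (R.1.dilate 5) := by
    refine le_trans ?_ (tsum_volume_dilate_le_of_inter_dilate hK hJ (hJ R.2))
    exact ENNReal.tsum_comp_le_tsum_of_injective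
      (f := fun Q : {Q | Q ∈ F ∧ (Q.1.dilate 5 ∩ R.1.dilate 5).Nonempty} ↦
        (⟨Q.1.1, Q.1.2, Q.2.2⟩ : {Q | Q ∈ J ∧ (Q.dilate 5 ∩ R.1.dilate 5).Nonempty}))
      (fun Q Q' h ↦ Subtype.ext (Subtype.ext (Subtype.mk.inj h)))
      fun Q ↦ volume (Q.1.dilate 5)
  obtain ⟨T, -, hdisj, hsum⟩ := exists_pairwiseDisjoint_sum_le F
    (fun Q _ ↦ ⟨Q.1.center, mem_closedBall_self (hside Q.1).le⟩) (fun Q _ ↦ hfin Q)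
    fun R _ ↦ hoverlap R
  refine hsum.trans ?_
  gcongr
  exact sum_oscEnergy_closedBall_le hp T (fun Q _ ↦ hside Q.1) (fun Q _ ↦ hsub Q) hdisj

theorem tsum_oscOn_dilate_le (hκ : 1 ≤ κ) (hκK : 5 * κ < K) (hK : 22 ≤ K) (hα : 0 ≤ α)
    (hp : 1 ≤ p) (hu : IntegrableOn u D) {J : Set (DyadicCube ι)} (hJ : J ⊆ whitney K D) :
    ∑' Q : J, oscOn volume u (Q.1.dilate 5) ≤
      (2 * 44 ^ Fintype.card ι) ^ (1 / p) * cubeSeminorm κ α p D u *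
        (10 ^ Fintype.card ι * volume (⋃ Q ∈ J, Q.toSet)) ^ (1 - 1 / p + α) := by
  have hp₀ : 0 < p := by linarith
  have hvol : ∑' Q : J, volume (Q.1.dilate 5) =
      10 ^ Fintype.card ι * volume (⋃ Q ∈ J, Q.toSet) := by
    simp_rw [fun Q : DyadicCube ι ↦ Q.volume_dilate (s := 5) (by norm_num), ENNReal.tsum_mul_left,
      DyadicCube.volume_biUnion_toSet ((pairwiseDisjoint_whitney K D).subset hJ)]
    norm_num
  rw [← hvol]
  refine (tsum_oscOn_le hα hp (fun Q : J ↦ Q.1.dilate 5)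
    (fun Q ↦ Q.1.volume_dilate_ne_zero (by norm_num)) fun Q ↦ Q.1.volume_dilate_ne_top 5).trans ?_
  gcongr
  calc (∑' Q : J, oscEnergy volume α p u (Q.1.dilate 5)) ^ (1 / p)
      ≤ (2 * 44 ^ Fintype.card ι * cubeSeminorm κ α p D u ^ p) ^ (1 / p) := by
        gcongr; exact tsum_oscEnergy_dilate_le hκ hκK hK hp₀ hu hJ
    _ = (2 * 44 ^ Fintype.card ι) ^ (1 / p) * cubeSeminorm κ α p D u := by
        rw [ENNReal.mul_rpow_of_nonneg _ _ (by positivity), ← ENNReal.rpow_mul,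
          mul_one_div_cancel hp₀.ne', ENNReal.rpow_one]

/-- The oscillation of `u` over the enlargement `Q.dilate 5`, normalized by the volume of `Q`; it
controls the change of the averages of `u` from a Whitney cube `Q` to its neighbours. -/
noncomputable def starOsc (u : (ι → ℝ) → E) (Q : DyadicCube ι) : ℝ≥0∞ :=
  oscOn volume u (Q.dilate 5) / volume Q.toSet

theorem edist_setAverage_le_starOsc [CompleteSpace E] (hK : 22 ≤ K) (hu : IntegrableOn u D)
    (hQ : Q ∈ whitney K D) (hR : R ∈ whitney K D) (hx : x ∈ Q.toSet) (hy : y ∈ R.toSet)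
    (hxy : dist x y ≤ Q.side) :
    edist (⨍ z in Q.toSet, u z) (⨍ z in R.toSet, u z) ≤
      (1 + 3 ^ Fintype.card ι) * starOsc u Q := by
  have huB : IntegrableOn u (Q.dilate 5) :=
    hu.mono_set (hQ.1.closedBall_subset (by nlinarith [Q.side_pos]))
  set B := Q.dilate 5
  have havg {A : Set (ι → ℝ)} (hA : A ⊆ B) :
      volume A * edist (⨍ z in A, u z) (⨍ z in B, u z) ≤ oscOn volume u B := by
    rw [edist_eq_enorm_sub]
    exact measure_mul_enorm_setAverage_sub_setAverage_le hA huB (Q.volume_dilate_ne_top 5)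
  rw [starOsc, ← mul_div_assoc,
    ENNReal.le_div_iff_mul_le (Or.inl Q.volume_toSet_ne_zero) (Or.inl Q.volume_toSet_ne_top)]
  calc edist (⨍ z in Q.toSet, u z) (⨍ z in R.toSet, u z) * volume Q.toSet
      ≤ (edist (⨍ z in Q.toSet, u z) (⨍ z in B, u z) +
          edist (⨍ z in R.toSet, u z) (⨍ z in B, u z)) * volume Q.toSet := by
        gcongr; exact edist_triangle_right _ _ _
    _ ≤ volume Q.toSet * edist (⨍ z in Q.toSet, u z) (⨍ z in B, u z) +
          3 ^ Fintype.card ι *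
            (volume R.toSet * edist (⨍ z in R.toSet, u z) (⨍ z in B, u z)) := by
        rw [add_mul, mul_comm, ← mul_assoc, mul_comm _ (volume Q.toSet)]
        gcongr
        exact volume_toSet_le_of_dist_le_side hK hQ hR hx hy hxy
    _ ≤ oscOn volume u B + 3 ^ Fintype.card ι * oscOn volume u B := by
        gcongr
        · exact havg (Q.toSet_subset_dilate (by norm_num))
        · exact havg (toSet_subset_dilate_of_dist_le_side hK hQ hR hx hy hxy)
    _ = _ := by ring

end Neighbours

section Chain

variable {ι : Type*} [Fintype ι] {K M : ℝ} {D : Set (ι → ℝ)} {x x₀ : ι → ℝ}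

/-- Every point `x` of `D` can be joined to `x₀` inside `D` by a path that moves away from `x` at
most `M` times as far as its current distance from the complement of `D`. -/
def IsJohnCenter {X : Type*} [PseudoMetricSpace X] (M : ℝ) (D : Set X) (x₀ : X) : Prop :=
  ∀ x ∈ D, ∃ γ : Path x x₀, ∀ t, γ t ∈ D ∧ dist x (γ t) ≤ M * infDist (γ t) Dᶜ

variable {E : Type*} [NormedAddCommGroup E] [NormedSpace ℝ E] [CompleteSpace E] {u : (ι → ℝ) → E}

theorem edist_whitneyAverage_le (hK : 22 ≤ K) (hM : 0 ≤ M) (hD : IsOpen D)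
    (hb : Bornology.IsBounded D) (hne : Dᶜ.Nonempty) (hu : IntegrableOn u D)
    (hx₀ : IsJohnCenter M D x₀) (hx : x ∈ D) :
    edist (whitneyAverage K D u x) (whitneyAverage K D u x₀) ≤
      2 * (1 + 3 ^ Fintype.card ι) * ∑' Q : whitney K D,
        starOsc u Q.1 * (Q.1.dilate (M * (2 * K + 2) + 1)).indicator 1 x := by
  obtain ⟨γ, hγ⟩ := hx₀ x hx
  have hcover (t : unitInterval) : ∃ Q : whitney K D, γ t ∈ Q.1.toSet := by
    have ht := (hγ t).1
    rw [← biUnion_whitney (K := K) (by linarith) hD hb hne] at ht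
    obtain ⟨Q, hQ, htQ⟩ := mem_iUnion₂.1 ht
    exact ⟨⟨Q, hQ⟩, htQ⟩
  choose W hW using hcover
  set b : whitney K D → ℝ≥0∞ := fun Q ↦ (1 + 3 ^ Fintype.card ι) *
    (starOsc u Q.1 * (Q.1.dilate (M * (2 * K + 2) + 1)).indicator 1 x)
  have hmem (t : unitInterval) : x ∈ (W t).1.dilate (M * (2 * K + 2) + 1) := by
    have hcenter := mem_closedBall.1 ((W t).1.toSet_subset_closedBall (hW t))
    have hdepth := mul_le_mul_of_nonneg_left (infDist_compl_le_of_mem_whitney (W t).2 (hW t)) hM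
    rw [DyadicCube.dilate, mem_closedBall]
    linarith [dist_triangle x (γ t) (W t).1.center, (hγ t).2, (W t).1.side_pos]
  have hstep (t : unitInterval) : ∀ᶠ s in 𝓝 t,
      edist (⨍ z in (W t).1.toSet, u z) (⨍ z in (W s).1.toSet, u z) ≤ b (W t) + b (W s) := by
    filter_upwards [γ.continuous.continuousAt.eventually
      (closedBall_mem_nhds (γ t) (W t).1.side_pos)] with s hs
    refine (edist_setAverage_le_starOsc hK hu (W t).2 (W s).2 (hW t) (hW s)
      (mem_closedBall'.1 hs)).trans (le_add_right (le_of_eq ?_))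
    simp only [b, indicator_of_mem (hmem t), Pi.one_apply, mul_one]
  have hchain := edist_le_two_mul_tsum_of_preconnectedSpace
    (f := fun Q : whitney K D ↦ ⨍ z in Q.1.toSet, u z) hstep 0 1
  rw [← whitneyAverage_eq (W 0).2 (hW 0), ← whitneyAverage_eq (W 1).2 (hW 1), γ.source, γ.target,
    ENNReal.tsum_mul_left, ← mul_assoc] at hchain
  exact hchain

end Chain

section GlobalSum

variable {ι : Type*} [Fintype ι] {K N : ℝ} {D A : Set (ι → ℝ)}

theorem volume_biUnion_toSet_le_of_dense_dilate {J : Set (DyadicCube ι)} {B : ℤ}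
    (hJ : ∀ Q ∈ J, Q.level ≤ B) (hN : 1 / 2 ≤ N) (hA : MeasurableSet A) {t : ℝ≥0∞} (ht₀ : t ≠ 0)
    (ht : t ≠ ∞) (hdense : ∀ Q ∈ J, t * volume (Q.dilate N) ≤ volume (A ∩ Q.dilate N)) :
    volume (⋃ Q ∈ J, Q.toSet) ≤ 5 ^ Fintype.card ι * (t⁻¹ * volume A) := by
  obtain ⟨T, hTJ, hdisj, hcov⟩ := Vitali.exists_disjoint_subfamily_covering_enlargement_closedBall
    J (fun Q ↦ Q.center) (fun Q ↦ N * Q.side) (N * 2 ^ B)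
    (fun Q hQ ↦ mul_le_mul_of_nonneg_left (zpow_le_zpow_right₀ one_le_two (hJ Q hQ))
      (by linarith)) 5 (by norm_num)
  have hsub : ⋃ Q ∈ J, Q.toSet ⊆ ⋃ R ∈ T, R.dilate (5 * N) := iUnion₂_subset fun Q hQ ↦ by
    obtain ⟨R, hR, hQR⟩ := hcov Q hQ
    rw [← mul_assoc] at hQR
    exact ((Q.toSet_subset_dilate hN).trans hQR).trans
      (subset_biUnion_of_mem (u := DyadicCube.dilate (5 * N)) hR)
  have hdisj_inter : T.PairwiseDisjoint fun R ↦ A ∩ R.dilate N :=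
    hdisj.mono fun _ ↦ inter_subset_right
  have hvol (Q : DyadicCube ι) :
      volume (Q.dilate (5 * N)) = 5 ^ Fintype.card ι * volume (Q.dilate N) := by
    rw [Q.volume_dilate (by linarith), Q.volume_dilate (by linarith), mul_left_comm,
      ENNReal.ofReal_mul (by norm_num), mul_pow, mul_assoc, ENNReal.ofReal_ofNat]
  calc volume (⋃ Q ∈ J, Q.toSet) ≤ ∑' R : T, volume (R.1.dilate (5 * N)) :=
        (measure_mono hsub).trans (measure_biUnion_le _ T.to_countable _)
    _ ≤ ∑' R : T, 5 ^ Fintype.card ι * (t⁻¹ * volume (A ∩ R.1.dilate N)) := by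
        gcongr with R
        rw [hvol]
        gcongr
        exact (ENNReal.mul_le_iff_le_inv ht₀ ht).1 (hdense R.1 (hTJ R.2))
    _ = 5 ^ Fintype.card ι * (t⁻¹ * volume (⋃ R ∈ T, A ∩ R.dilate N)) := by
        rw [ENNReal.tsum_mul_left, ENNReal.tsum_mul_left, measure_biUnion T.to_countable
          hdisj_inter fun R _ ↦ hA.inter (R.measurableSet_dilate N)]
    _ ≤ _ := by gcongr; exact iUnion₂_subset fun _ _ ↦ inter_subset_left

variable {E : Type*} [NormedAddCommGroup E] [NormedSpace ℝ E] {u : (ι → ℝ) → E} {κ α p : ℝ}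

/-- The constant in the bound for the sum of `starOsc` against the measure of dilated Whitney
cubes, with `d` the dimension, `N` the dilation factor and `e` the exponent. -/
noncomputable def starSumConst (d : ℕ) (N p e : ℝ) : ℝ≥0∞ :=
  ENNReal.ofReal (2 * N) ^ d * (layerConst e * ((2 * 44 ^ d) ^ (1 / p) * (50 ^ d) ^ e))

theorem tsum_oscOn_dilate_le_of_dense_dilate (hκ : 1 ≤ κ) (hκK : 5 * κ < K) (hK : 22 ≤ K)
    (hα : 0 ≤ α) (hp : 1 ≤ p) (hb : Bornology.IsBounded D) (hne : Dᶜ.Nonempty)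
    (hu : IntegrableOn u D) (hN : 1 / 2 ≤ N) (hA : MeasurableSet A) {t : ℝ≥0∞} (ht₀ : t ≠ 0)
    (ht : t ≠ ∞) {J : Set (DyadicCube ι)} (hJ : J ⊆ whitney K D)
    (hdense : ∀ Q ∈ J, t * volume (Q.dilate N) ≤ volume (A ∩ Q.dilate N)) :
    ∑' Q : J, oscOn volume u (Q.1.dilate 5) ≤
      (2 * 44 ^ Fintype.card ι) ^ (1 / p) * (50 ^ Fintype.card ι) ^ (1 - 1 / p + α) *
        cubeSeminorm κ α p D u * volume A ^ (1 - 1 / p + α) * t⁻¹ ^ (1 - 1 / p + α) := by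
  obtain ⟨B, hB⟩ := DyadicCube.exists_level_le_of_isDeep (ι := ι) (K := K) (by linarith) hb hne
  have he : 0 ≤ 1 - 1 / p + α := one_sub_one_div_add_nonneg hα hp
  refine (tsum_oscOn_dilate_le hκ hκK hK hα hp hu hJ).trans ?_
  calc _ ≤ (2 * 44 ^ Fintype.card ι) ^ (1 / p) * cubeSeminorm κ α p D u *
          (10 ^ Fintype.card ι * (5 ^ Fintype.card ι * (t⁻¹ * volume A))) ^ (1 - 1 / p + α) := by
        gcongr
        exact volume_biUnion_toSet_le_of_dense_dilate (fun Q hQ ↦ hB Q (hJ hQ).1) hN hA ht₀ ht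
          hdense
    _ = _ := by
        rw [← mul_assoc, ← mul_pow, ENNReal.mul_rpow_of_nonneg _ _ he,
          ENNReal.mul_rpow_of_nonneg t⁻¹ _ he, show (10 * 5 : ℝ≥0∞) = 50 by norm_num]
        ring

theorem tsum_starOsc_mul_volume_le (hκ : 1 ≤ κ) (hκK : 5 * κ < K) (hK : 22 ≤ K)
    (hα : 0 ≤ α) (hp : 1 ≤ p) (hb : Bornology.IsBounded D) (hne : Dᶜ.Nonempty)
    (hu : IntegrableOn u D) (hN : 1 / 2 ≤ N) (hA : MeasurableSet A) :
    ∑' Q : whitney K D, starOsc u Q.1 * volume (A ∩ Q.1.dilate N) ≤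
      starSumConst (Fintype.card ι) N p (1 - 1 / p + α) *
        cubeSeminorm κ α p D u * volume A ^ (1 - 1 / p + α) := by
  set ρ : whitney K D → ℝ≥0∞ := fun Q ↦ volume (A ∩ Q.1.dilate N) / volume (Q.1.dilate N)
  have hvol₀ (Q : DyadicCube ι) := Q.volume_dilate_ne_zero (s := N) (by linarith)
  have hvol (Q : DyadicCube ι) := Q.volume_dilate_ne_top N
  have hterm (Q : whitney K D) : starOsc u Q.1 * volume (A ∩ Q.1.dilate N) =
      ENNReal.ofReal (2 * N) ^ Fintype.card ι * (oscOn volume u (Q.1.dilate 5) * ρ Q) := by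
    have hL₀ : ENNReal.ofReal (2 * N) ^ Fintype.card ι ≠ 0 :=
      pow_ne_zero _ (ENNReal.ofReal_pos.2 (by linarith)).ne'
    have hL : ENNReal.ofReal (2 * N) ^ Fintype.card ι ≠ ∞ :=
      ENNReal.pow_ne_top ENNReal.ofReal_ne_top
    simp only [ρ, starOsc, Q.1.volume_dilate (s := N) (by linarith), ENNReal.div_eq_inv_mul]
    rw [ENNReal.mul_inv (Or.inl hL₀) (Or.inl hL)]
    calc _ = 1 * (volume Q.1.toSet)⁻¹ * oscOn volume u (Q.1.dilate 5) *
          volume (A ∩ Q.1.dilate N) := by ring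
      _ = _ := by rw [← ENNReal.mul_inv_cancel hL₀ hL]; ring
  have hlayer (t : ℝ≥0∞) (ht₀ : t ≠ 0) (ht : t ≠ ∞) :
      ∑' Q : {Q | t < ρ Q}, oscOn volume u (Q.1.1.dilate 5) ≤
        (2 * 44 ^ Fintype.card ι) ^ (1 / p) * (50 ^ Fintype.card ι) ^ (1 - 1 / p + α) *
          cubeSeminorm κ α p D u * volume A ^ (1 - 1 / p + α) * t⁻¹ ^ (1 - 1 / p + α) := by
    rw [← tsum_image (fun Q : DyadicCube ι ↦ oscOn volume u (Q.dilate 5)) (s := {Q | t < ρ Q})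
      Subtype.val_injective.injOn]
    refine tsum_oscOn_dilate_le_of_dense_dilate hκ hκK hK hα hp hb hne hu hN hA ht₀ ht
      (by rintro _ ⟨Q, -, rfl⟩; exact Q.2) ?_
    rintro _ ⟨Q, hQ, rfl⟩
    exact (ENNReal.le_div_iff_mul_le (Or.inl (hvol₀ Q.1)) (Or.inl (hvol Q.1))).1 (le_of_lt hQ)
  have hρ (Q) : ρ Q ≤ 1 :=
    ENNReal.div_le_of_le_mul ((measure_mono inter_subset_right).trans_eq (one_mul _).symm)
  have hsum := tsum_mul_le_of_superlevel (o := fun Q : whitney K D ↦ oscOn volume u (Q.1.dilate 5))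
    hρ hlayer
  simp_rw [hterm, ENNReal.tsum_mul_left]
  refine (mul_le_mul_right hsum _).trans (le_of_eq ?_)
  rw [starSumConst]
  ring

end GlobalSum

section JohnCenter

variable {ι : Type*} [Fintype ι] {κ α p M : ℝ}

theorem starSumConst_ne_top {d : ℕ} {N e : ℝ} (hp : 1 ≤ p) (he₀ : 0 ≤ e) (he : e < 1) :
    starSumConst d N p e ≠ ∞ := by
  have hp₀ : 0 ≤ 1 / p := by positivity
  have h44 : (2 * 44 ^ d : ℝ≥0∞) ≠ ∞ :=
    ENNReal.mul_ne_top ENNReal.ofNat_ne_top (ENNReal.pow_ne_top ENNReal.ofNat_ne_top)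
  exact ENNReal.mul_ne_top (ENNReal.pow_ne_top ENNReal.ofReal_ne_top) <|
    ENNReal.mul_ne_top (layerConst_ne_top he) <|
      ENNReal.mul_ne_top (ENNReal.rpow_ne_top_of_nonneg hp₀ h44)
        (ENNReal.rpow_ne_top_of_nonneg he₀ (ENNReal.pow_ne_top ENNReal.ofNat_ne_top))

theorem setLIntegral_tsum_mul_indicator {X I : Type*} [MeasurableSpace X] {μ : Measure X}
    [Countable I] (b : I → ℝ≥0∞) {B : I → Set X} (hB : ∀ i, MeasurableSet (B i)) (A : Set X) :
    ∫⁻ x in A, ∑' i, b i * (B i).indicator 1 x ∂μ = ∑' i, b i * μ (A ∩ B i) := by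
  have hind (i : I) : Measurable ((B i).indicator (1 : X → ℝ≥0∞)) := measurable_one.indicator (hB i)
  rw [lintegral_tsum fun i ↦ ((hind i).const_mul _).aemeasurable]
  refine tsum_congr fun i ↦ ?_
  rw [lintegral_const_mul _ (hind i), lintegral_indicator_one (hB i),
    Measure.restrict_apply (hB i), inter_comm]

variable {E : Type*} [NormedAddCommGroup E] [NormedSpace ℝ E] [CompleteSpace E]

/-- The constant in the strong-type estimate on domains with an `M`-John center, with `d` the
dimension, `θ` the Calderón–Zygmund threshold and `e` the exponent. -/
noncomputable def johnConst (d : ℕ) (θ : ℝ≥0∞) (κ M p e : ℝ) : ℝ≥0∞ :=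
  2 * θ⁻¹ ^ e + 2 * (1 + 3 ^ d) * starSumConst d (M * (2 * (22 * κ) + 2) + 1) p e

theorem johnConst_ne_top {d : ℕ} {θ : ℝ≥0∞} {e : ℝ} (hθ : θ ≠ 0) (hp : 1 ≤ p) (he₀ : 0 ≤ e)
    (he : e < 1) : johnConst d θ κ M p e ≠ ∞ := by
  refine ENNReal.add_ne_top.2 ⟨ENNReal.mul_ne_top ENNReal.ofNat_ne_top
    (ENNReal.rpow_ne_top_of_nonneg he₀ (ENNReal.inv_ne_top.2 hθ)), ?_⟩
  refine ENNReal.mul_ne_top (ENNReal.mul_ne_top ENNReal.ofNat_ne_top ?_)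
    (starSumConst_ne_top hp he₀ he)
  exact ENNReal.add_ne_top.2 ⟨ENNReal.one_ne_top, ENNReal.pow_ne_top ENNReal.ofNat_ne_top⟩

theorem setLIntegral_enorm_sub_whitneyAverage_center_le {D A : Set (ι → ℝ)} {u : (ι → ℝ) → E}
    {x₀ : ι → ℝ} {θ : ℝ≥0∞} (hκ : 1 ≤ κ) (hα : 0 ≤ α) (hp : 1 ≤ p) (hM : 0 ≤ M)
    (hD : IsOpen D) (hb : Bornology.IsBounded D) (hne : Dᶜ.Nonempty) (hu : IntegrableOn u D)
    (hx₀ : IsJohnCenter M D x₀) (hθ₀ : θ ≠ 0) (hθ : θ < 1)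
    (hθ_small : 2 * 2 ^ Fintype.card ι * θ * θ⁻¹ ^ (1 - 1 / p + α) ≤ 1)
    (hA : MeasurableSet A) (hAD : A ⊆ D) :
    ∫⁻ x in A, ‖u x - whitneyAverage (22 * κ) D u x₀‖ₑ ≤
      johnConst (Fintype.card ι) θ κ M p (1 - 1 / p + α) * cubeSeminorm κ α p D u *
        volume A ^ (1 - 1 / p + α) := by
  set K := 22 * κ with hK_def
  set N := M * (2 * K + 2) + 1 with hN_def
  have hK : 22 ≤ K := by linarith
  have hN : 1 / 2 ≤ N := by
    have : 0 ≤ M * (2 * K + 2) := by positivity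
    linarith
  let F (x : ι → ℝ) : ℝ≥0∞ :=
    ∑' Q : whitney K D, starOsc u Q.1 * (Q.1.dilate N).indicator 1 x
  have hpointwise : ∀ x ∈ A, ‖u x - whitneyAverage K D u x₀‖ₑ ≤
      ‖u x - whitneyAverage K D u x‖ₑ + 2 * (1 + 3 ^ Fintype.card ι) * F x := fun x hx ↦ by
    simp only [← edist_eq_enorm_sub]
    refine (edist_triangle _ (whitneyAverage K D u x) _).trans ?_
    gcongr
    exact edist_whitneyAverage_le hK hM hD hb hne hu hx₀ (hAD hx)
  have hF : Measurable F := Measurable.tsum fun Q ↦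
    (measurable_one.indicator (Q.1.measurableSet_dilate N)).const_mul _
  have hsum : ∫⁻ x in A, F x ≤ starSumConst (Fintype.card ι) N p (1 - 1 / p + α) *
      cubeSeminorm κ α p D u * volume A ^ (1 - 1 / p + α) :=
    (setLIntegral_tsum_mul_indicator _ (fun Q ↦ Q.1.measurableSet_dilate N) A).trans_le
      (tsum_starOsc_mul_volume_le hκ (by linarith) hK hα hp hb hne hu hN hA)
  calc ∫⁻ x in A, ‖u x - whitneyAverage K D u x₀‖ₑ
      ≤ (∫⁻ x in A, ‖u x - whitneyAverage K D u x‖ₑ) +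
          2 * (1 + 3 ^ Fintype.card ι) * ∫⁻ x in A, F x := by
        rw [← lintegral_const_mul _ hF, ← lintegral_add_right _ (hF.const_mul _)]
        exact setLIntegral_mono' hA hpointwise
    _ ≤ 2 * cubeSeminorm κ α p D u * (θ⁻¹ * volume A) ^ (1 - 1 / p + α) +
          2 * (1 + 3 ^ Fintype.card ι) * (starSumConst (Fintype.card ι) N p (1 - 1 / p + α) *
            cubeSeminorm κ α p D u * volume A ^ (1 - 1 / p + α)) := by
        gcongr
        exact setLIntegral_enorm_sub_whitneyAverage_le_cubeSeminorm hκ hα hp (by linarith) hD hb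
          hne hu hθ₀ hθ hθ_small hA hAD
    _ = _ := by
        rw [ENNReal.mul_rpow_of_nonneg _ _ (one_sub_one_div_add_nonneg hα hp), johnConst,
          ← hK_def, ← hN_def]
        ring

theorem exists_weakType_const {q : ℝ} (hκ : 1 ≤ κ) (hα : 0 ≤ α) (hp : 1 ≤ p) (hM : 0 ≤ M)
    (hq : 0 < q) (hpq : (1 / p - α) * q = 1) :
    ∃ C : ℝ≥0∞, C ≠ ∞ ∧ ∀ (D : Set (ι → ℝ)) (u : (ι → ℝ) → E) (x₀ : ι → ℝ), IsOpen D →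
      Bornology.IsBounded D → Dᶜ.Nonempty → IntegrableOn u D → IsJohnCenter M D x₀ →
      ∃ a : E, ∀ t : ℝ≥0∞, volume {x ∈ D | t < ‖u x - a‖ₑ} * t ^ q ≤
        C * cubeSeminorm κ α p D u ^ q := by
  have he : 1 - 1 / p + α < 1 := by
    linarith [(pos_iff_pos_of_mul_pos (hpq ▸ one_pos)).2 hq]
  obtain ⟨θ, hθ₀, hθ, hθ_small⟩ := exists_lt_one_mul_inv_rpow_le
    (A := 2 * 2 ^ Fintype.card ι)
    (ENNReal.mul_ne_top ENNReal.ofNat_ne_top (ENNReal.pow_ne_top ENNReal.ofNat_ne_top)) he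
  set C := johnConst (Fintype.card ι) θ κ M p (1 - 1 / p + α)
  have hC : C ≠ ∞ := johnConst_ne_top hθ₀ hp (one_sub_one_div_add_nonneg hα hp) he
  refine ⟨C ^ q, ENNReal.rpow_ne_top_of_nonneg hq.le hC, fun D u x₀ hD hb hne hu hx₀ ↦
    ⟨whitneyAverage (22 * κ) D u x₀, fun t ↦ ?_⟩⟩
  rw [← ENNReal.mul_rpow_of_nonneg _ _ hq.le]
  refine rpow_mul_measure_lt_le (f := fun x ↦ ‖u x - whitneyAverage (22 * κ) D u x₀‖ₑ)
    (e := 1 - 1 / p + α) hD.measurableSet hb.measure_lt_top.ne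
    (hu.aestronglyMeasurable.sub aestronglyMeasurable_const).enorm hq (by linarith)
    (fun A hAD hA ↦ ?_) t
  exact setLIntegral_enorm_sub_whitneyAverage_center_le hκ hα hp hM hD hb hne hu hx₀ hθ₀ hθ
    hθ_small hA hAD

end JohnCenter

section JohnDomain

theorem infDist_image_le_of_lipschitzWith {X Y : Type*} [PseudoMetricSpace X]
    [PseudoMetricSpace Y] {L : ℝ≥0} {φ : X → Y} (hφ : LipschitzWith L φ) (s : Set X) (x : X) :
    infDist (φ x) (φ '' s) ≤ L * infDist x s := by
  rcases s.eq_empty_or_nonempty with rfl | hs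
  · simp only [image_empty, infDist_empty, mul_zero, le_refl]
  have : Nonempty s := hs.to_subtype
  rw [infDist_eq_iInf (x := x), Real.mul_iInf_of_nonneg L.coe_nonneg]
  exact le_ciInf fun y ↦
    (infDist_le_dist_of_mem (mem_image_of_mem φ y.2)).trans (hφ.dist_le_mul _ _)

theorem IsJohnCenter.preimage {X Y : Type*} [PseudoMetricSpace X] [PseudoMetricSpace Y]
    {L₁ L₂ : ℝ≥0} {φ : X → Y} {ψ : Y → X} {M : ℝ} {D : Set Y} {y₀ : Y}
    (h : IsJohnCenter M D y₀) (hM : 0 ≤ M) (hφ : LipschitzWith L₁ φ) (hψ : LipschitzWith L₂ ψ)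
    (hψφ : Function.LeftInverse ψ φ) (hφψ : Function.RightInverse ψ φ) :
    IsJohnCenter (L₂ * M * L₁) (φ ⁻¹' D) (ψ y₀) := fun x hx ↦ by
  obtain ⟨γ, hγ⟩ := h (φ x) hx
  refine ⟨(γ.map hψ.continuous).cast (hψφ x).symm rfl, fun t ↦ ⟨?_, ?_⟩⟩
  · change φ (ψ (γ t)) ∈ D
    rw [hφψ]
    exact (hγ t).1
  change dist x (ψ (γ t)) ≤ _ * infDist (ψ (γ t)) (φ ⁻¹' D)ᶜ
  have hdepth := infDist_image_le_of_lipschitzWith hφ (φ ⁻¹' Dᶜ) (ψ (γ t))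
  rw [image_preimage_eq _ hφψ.surjective, hφψ] at hdepth
  calc dist x (ψ (γ t)) = dist (ψ (φ x)) (ψ (γ t)) := by rw [hψφ]
    _ ≤ L₂ * dist (φ x) (γ t) := hψ.dist_le_mul _ _
    _ ≤ L₂ * (M * (L₁ * infDist (ψ (γ t)) (φ ⁻¹' Dᶜ))) := by
        gcongr
        exact (hγ t).2.trans (by gcongr)
    _ = L₂ * M * L₁ * infDist (ψ (γ t)) (φ ⁻¹' D)ᶜ := by rw [preimage_compl]; ring

variable {n : ℕ} {c : ℝ} {D : Set (Eucl n)}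

theorem IsJohnDomain.exists_diam_le_infDist (hJ : IsJohnDomain n c D) (hc : 0 < c) :
    ∃ x₀ ∈ D, diam D ≤ 4 * c * infDist x₀ (frontier D) := by
  obtain ⟨-, ⟨hne, -⟩, hcurve⟩ := hJ
  obtain ⟨a, ha, b, hb, hab⟩ : ∃ a ∈ D, ∃ b ∈ D, diam D / 2 ≤ dist a b := by
    by_contra! hlt
    have hpos : 0 < diam D / 2 := (dist_nonneg.trans_lt (hlt _ hne.some_mem _ hne.some_mem))
    have := diam_le_of_forall_dist_le hpos.le fun x hx y hy ↦ (hlt x hx y hy).le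
    linarith
  obtain ⟨ℓ, hℓ, γ, rfl, rfl, hγD, hlip, hdepth⟩ := hcurve a ha b hb
  have hmid : ℓ / 2 ∈ Icc 0 ℓ := ⟨by linarith, by linarith⟩
  have hdist := hlip.dist_le_mul 0 (left_mem_Icc.2 hℓ) ℓ (right_mem_Icc.2 hℓ)
  rw [NNReal.coe_one, one_mul, dist_zero_left, Real.norm_of_nonneg hℓ] at hdist
  have hmin := hdepth _ hmid
  rw [sub_half, min_self, div_le_iff₀ hc] at hmin
  exact ⟨γ (ℓ / 2), hγD _ hmid, by linarith⟩

/-- A curve leaving `x` is close to `x` on its first half, while on its second half its depth is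
comparable to the depth of its endpoint `x₀`, hence to the diameter of `D`. -/
theorem IsJohnDomain.isJohnCenter (hJ : IsJohnDomain n c D) (hc : 0 < c)
    (hb : Bornology.IsBounded D) (hne : Dᶜ.Nonempty) {x₀ : Eucl n} (hx₀ : x₀ ∈ D)
    (hdeep : diam D ≤ 4 * c * infDist x₀ (frontier D)) :
    IsJohnCenter (4 * c * (1 + c)) D x₀ := fun x hx ↦ by
  obtain ⟨ℓ, hℓ, γ, rfl, rfl, hγD, hlip, hdepth⟩ := hJ.2.2 x hx x₀ hx₀
  have hmaps (t : unitInterval) : ℓ * t ∈ Icc 0 ℓ :=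
    ⟨mul_nonneg hℓ t.2.1, mul_le_of_le_one_right hℓ t.2.2⟩
  refine ⟨⟨⟨fun t ↦ γ (ℓ * t), hlip.continuousOn.comp_continuous (by fun_prop) hmaps⟩,
    by simp, by simp⟩, fun t ↦ ⟨hγD _ (hmaps t), ?_⟩⟩
  change dist (γ 0) (γ (ℓ * t)) ≤ 4 * c * (1 + c) * infDist (γ (ℓ * t)) Dᶜ
  generalize ℓ * (t : ℝ) = s, hmaps t = hs
  have hfrontier : infDist (γ s) (frontier D) ≤ infDist (γ s) Dᶜ := by
    obtain ⟨y, hy, hdist⟩ :=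
      exists_mem_frontier_infDist_compl_eq_dist (hγD s hs) (nonempty_compl.1 hne)
    exact hdist ▸ infDist_le_dist_of_mem hy
  have hstart := hlip.dist_le_mul 0 (left_mem_Icc.2 hℓ) s hs
  have hend := hlip.dist_le_mul ℓ (right_mem_Icc.2 hℓ) s hs
  rw [NNReal.coe_one, one_mul, dist_zero_left, Real.norm_of_nonneg hs.1] at hstart
  rw [NNReal.coe_one, one_mul, Real.dist_eq, abs_of_nonneg (by linarith [hs.2])] at hend
  have hdiam := dist_le_diam_of_mem hb hx (hγD s hs)
  have hmin := hdepth s hs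
  rw [div_le_iff₀ hc] at hmin
  refine le_trans ?_ (mul_le_mul_of_nonneg_left hfrontier (by positivity))
  have hnonneg := mul_nonneg hc.le (infDist_nonneg (x := γ s) (s := frontier D))
  rcases le_total s (ℓ - s) with hle | hle
  · rw [min_eq_left hle] at hmin
    nlinarith
  · rw [min_eq_right hle] at hmin
    have hxs := infDist_le_infDist_add_dist (s := frontier D) (x := γ ℓ) (y := γ s)
    nlinarith

theorem exists_isJohnCenter_preimage_toLp (n : ℕ) (hc : 0 < c) :
    ∃ M : ℝ, 0 ≤ M ∧ ∀ D : Set (Eucl n), IsJohnDomain n c D → Bornology.IsBounded D →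
      Dᶜ.Nonempty → ∃ x₀, IsJohnCenter M (WithLp.toLp 2 ⁻¹' D) x₀ := by
  have hM : 0 ≤ 4 * c * (1 + c) := by positivity
  exact ⟨_, by positivity, fun D hJ hb hne ↦
    have ⟨_, hx₀, hdeep⟩ := hJ.exists_diam_le_infDist hc
    ⟨_, (hJ.isJohnCenter hc hb hne hx₀ hdeep).preimage hM (PiLp.lipschitzWith_toLp 2 _)
      (PiLp.lipschitzWith_ofLp 2 _) (fun _ ↦ rfl) fun _ ↦ rfl⟩⟩

end JohnDomain

section EuclideanCubes

variable {n : ℕ} {D : Set (Eucl n)} {u : Eucl n → ℝ} {κ δ p : ℝ}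

theorem toLp_preimage_cube (z : Fin n → ℝ) {r : ℝ} (hr : 0 ≤ r) :
    WithLp.toLp 2 ⁻¹' cube n (WithLp.toLp 2 z) r = closedBall z r := by
  ext y
  rw [mem_closedBall, dist_pi_le_iff hr]
  rfl

theorem measurableSet_cube (z : Eucl n) (r : ℝ) : MeasurableSet (cube n z r) := by
  have : cube n z r = ⋂ i, {x | |x i - z i| ≤ r} := by ext; simp [cube]
  rw [this]
  exact MeasurableSet.iInter fun i ↦ measurableSet_le (by fun_prop) measurable_const

theorem volume_preimage_toLp (A : Set (Eucl n)) :
    volume (WithLp.toLp 2 ⁻¹' A : Set (Fin n → ℝ)) = volume A :=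
  (PiLp.volume_preserving_toLp (Fin n)).measure_preimage_emb
    (MeasurableEquiv.toLp 2 _).measurableEmbedding A

theorem setIntegral_preimage_toLp (A : Set (Eucl n)) (f : Eucl n → ℝ) :
    ∫ y in WithLp.toLp 2 ⁻¹' A, f (WithLp.toLp 2 y) = ∫ x in A, f x :=
  (PiLp.volume_preserving_toLp (Fin n)).setIntegral_preimage_emb
    (MeasurableEquiv.toLp 2 _).measurableEmbedding f A

theorem setAverage_preimage_toLp (A : Set (Eucl n)) (f : Eucl n → ℝ) :
    ⨍ y in WithLp.toLp 2 ⁻¹' A, f (WithLp.toLp 2 y) = ⨍ x in A, f x := by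
  rw [setAverage_eq, setAverage_eq, setIntegral_preimage_toLp, measureReal_def, measureReal_def,
    volume_preimage_toLp]

theorem integrableOn_preimage_toLp_iff {A : Set (Eucl n)} :
    IntegrableOn (u ∘ WithLp.toLp 2) (WithLp.toLp 2 ⁻¹' A) ↔ IntegrableOn u A :=
  (PiLp.volume_preserving_toLp (Fin n)).integrableOn_comp_preimage
    (MeasurableEquiv.toLp 2 _).measurableEmbedding

theorem ofReal_aTerm_rpow_mul_volume (z : Fin n → ℝ) {r : ℝ} (hr : 0 < r)
    (hu : IntegrableOn u (cube n (WithLp.toLp 2 z) r)) :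
    ENNReal.ofReal (aTerm n δ u (WithLp.toLp 2 z) r) ^ p * volume (cube n (WithLp.toLp 2 z) r) =
      oscEnergy volume (δ / n) p (u ∘ WithLp.toLp 2) (closedBall z r) := by
  set Q := cube n (WithLp.toLp 2 z) r
  have hQ : volume (closedBall z r) = volume Q := by
    rw [← toLp_preimage_cube z hr.le, volume_preimage_toLp]
  have hQ₀ : volume Q ≠ 0 := hQ ▸ (measure_closedBall_pos volume z hr).ne'
  have hQtop : volume Q ≠ ∞ := hQ ▸ measure_closedBall_lt_top.ne
  have hosc : ENNReal.ofReal (∫ x in Q, |u x - ⨍ y in Q, u y|) =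
      oscOn volume (u ∘ WithLp.toLp 2) (closedBall z r) := by
    rw [← toLp_preimage_cube z hr.le, oscOn, ← setIntegral_preimage_toLp,
      ← setAverage_preimage_toLp]
    refine ofReal_integral_norm_eq_lintegral_enorm
      ((integrableOn_preimage_toLp_iff.2 hu).sub (integrableOn_const ?_))
    rwa [volume_preimage_toLp]
  rw [oscEnergy, hQ, ← hosc, aTerm, ENNReal.ofReal_mul (by positivity),
    ← ENNReal.ofReal_rpow_of_pos (ENNReal.toReal_pos hQ₀ hQtop), ENNReal.ofReal_toReal hQtop]

theorem sum_rpow_mul_measure_le_lintegral_tsum_indicator {X β : Type*} [MeasurableSpace X]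
    {μ : Measure X} {D : Set X} {A : β → Set X} {T : Finset β} (hp : 0 ≤ p)
    (hA : ∀ i ∈ T, MeasurableSet (A i)) (hAD : ∀ i ∈ T, A i ⊆ D)
    (hdisj : (T : Set β).PairwiseDisjoint A) (a : β → ℝ≥0∞) :
    ∑ i ∈ T, a i ^ p * μ (A i) ≤
      ∫⁻ x in D, (∑' i : (T : Set β), (A i).indicator (fun _ ↦ a i) x) ^ p ∂μ := by
  refine le_trans ?_ (lintegral_mono_set (iUnion₂_subset hAD))
  rw [lintegral_biUnion_finset hdisj hA]
  refine Finset.sum_le_sum fun i hi ↦ ?_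
  rw [← setLIntegral_const]
  refine setLIntegral_mono' (hA i hi) fun x hx ↦ ENNReal.rpow_le_rpow ?_ hp
  calc a i = (A i).indicator (fun _ ↦ a i) x := (indicator_of_mem hx fun _ ↦ a i).symm
    _ ≤ _ := ENNReal.le_tsum (f := fun i : (T : Set β) ↦ (A i).indicator (fun _ ↦ a i) x) ⟨i, hi⟩

theorem cubeSeminorm_comp_toLp_le_aSeminorm (hκ : 1 ≤ κ) (hp : 0 ≤ p) (hu : IntegrableOn u D) :
    cubeSeminorm κ (δ / n) p (WithLp.toLp 2 ⁻¹' D) (u ∘ WithLp.toLp 2) ≤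
      ASeminorm n κ δ p D u := by
  refine iSup_le fun T ↦ iSup₂_le fun hT hdisj ↦ ?_
  let Φ : (Fin n → ℝ) × ℝ ≃ Eucl n × ℝ := (WithLp.equiv 2 _).symm.prodCongr (Equiv.refl ℝ)
  let 𝒬 : Finset (Eucl n × ℝ) := T.map Φ.toEmbedding
  have hQ : ∀ c ∈ 𝒬, 0 < c.2 ∧ cube n c.1 (κ * c.2) ⊆ D := Finset.forall_mem_map.2 fun c hc ↦ by
    obtain ⟨hpos, hsub⟩ := hT c hc
    rw [← toLp_preimage_cube _ (by positivity)] at hsub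
    exact ⟨hpos, (WithLp.toLp_surjective 2).preimage_subset_preimage_iff.1 hsub⟩
  have hQD : ∀ c ∈ 𝒬, cube n c.1 c.2 ⊆ D := fun c hc x hx ↦
    (hQ c hc).2 fun i ↦ (hx i).trans (le_mul_of_one_le_left (hQ c hc).1.le hκ)
  have hQdisj : (𝒬 : Set (Eucl n × ℝ)).PairwiseDisjoint fun c ↦ cube n c.1 c.2 := by
    rw [Finset.coe_map, Φ.toEmbedding.injective.injOn.pairwiseDisjoint_image]
    refine fun c hc c' hc' hne ↦ (disjoint_preimage_iff (WithLp.toLp_surjective 2)).1 ?_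
    exact toLp_preimage_cube c.1 (hT c hc).1.le ▸ toLp_preimage_cube c'.1 (hT c' hc').1.le ▸
      hdisj hc hc' hne
  refine le_iSup_of_le 𝒬 (le_iSup₂_of_le hQ (fun c hc c' hc' hne ↦
    disjoint_iff_inter_eq_empty.1 (hQdisj hc hc' hne)) ?_)
  gcongr
  calc ∑ c ∈ T, oscEnergy volume (δ / n) p (u ∘ WithLp.toLp 2) (closedBall c.1 c.2)
      = ∑ c ∈ 𝒬, ENNReal.ofReal (aTerm n δ u c.1 c.2) ^ p * volume (cube n c.1 c.2) := by
        rw [Finset.sum_map]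
        exact Finset.sum_congr rfl fun c hc ↦ (ofReal_aTerm_rpow_mul_volume c.1 (hT c hc).1
          (hu.mono_set (hQD _ (Finset.mem_map_of_mem _ hc)))).symm
    _ ≤ _ := sum_rpow_mul_measure_le_lintegral_tsum_indicator hp
        (fun c _ ↦ measurableSet_cube c.1 c.2) hQD hQdisj _

end EuclideanCubes

end WeakType

theorem volume_lt_abs_sub_mul_rpow {n : ℕ} (D : Set (Eucl n)) (u : Eucl n → ℝ) (a q : ℝ) {t : ℝ}
    (ht : 0 < t) :
    volume {x ∈ D | t < |u x - a|} * ENNReal.ofReal (t ^ q) =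
      volume {y ∈ WithLp.toLp 2 ⁻¹' D | ENNReal.ofReal t < ‖(u ∘ WithLp.toLp 2) y - a‖ₑ} *
        ENNReal.ofReal t ^ q := by
  rw [← volume_preimage_toLp, ENNReal.ofReal_rpow_of_pos ht]
  simp only [Real.enorm_eq_ofReal_abs, ENNReal.ofReal_lt_ofReal_iff_of_nonneg ht.le]
  rfl

theorem statement5_general (n : ℕ) (c : ℝ) (hc : 0 < c) (κ : ℝ) (hκ : 1 ≤ κ)
    (δ p : ℝ) (hδ : 0 ≤ δ) (hp : 1 ≤ p) (hpn : δ * p < n) :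
    ∃ C : ℝ, 0 < C ∧
      ∀ D : Set (Eucl n), IsJohnDomain n c D → Bornology.IsBounded D →
        ∀ u : Eucl n → ℝ, IntegrableOn u D volume →
          (⨅ a : ℝ, ⨆ (t : ℝ) (_ : 0 < t),
              volume {x ∈ D | t < |u x - a|} *
                ENNReal.ofReal (t ^ ((n:ℝ) * p / ((n:ℝ) - δ * p))))
            ≤ ENNReal.ofReal C * ASeminorm n κ δ p D u ^ ((n:ℝ) * p / ((n:ℝ) - δ * p)) := by
  have hn : 0 < (n : ℝ) := (mul_nonneg hδ (by linarith)).trans_lt hpn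
  have : Nonempty (Fin n) := Fin.pos_iff_nonempty.1 (Nat.cast_pos.1 hn)
  have hq : 0 < n * p / (n - δ * p) := div_pos (by positivity) (by linarith)
  have hpq : (1 / p - δ / n) * (n * p / (n - δ * p)) = 1 := by
    have : n - p * δ ≠ 0 := by linarith
    field_simp
  obtain ⟨M, hM, hcenter⟩ := exists_isJohnCenter_preimage_toLp n hc
  obtain ⟨C, hC, hweak⟩ := exists_weakType_const (ι := Fin n) (E := ℝ) hκ
    (div_nonneg hδ hn.le) hp hM hq hpq
  refine ⟨C.toReal + 1, by positivity, fun D hJ hb u hu ↦ ?_⟩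
  have hne : Dᶜ.Nonempty := nonempty_compl.2 fun h ↦
    NormedSpace.unbounded_univ ℝ (Eucl n) (h ▸ hb)
  obtain ⟨x₀, hx₀⟩ := hcenter D hJ hb hne
  obtain ⟨a, ha⟩ := hweak (WithLp.toLp 2 ⁻¹' D) (u ∘ WithLp.toLp 2) x₀
    (hJ.1.preimage (PiLp.continuous_toLp 2 _))
    ((PiLp.antilipschitzWith_toLp 2 _).isBounded_preimage hb)
    (hne.preimage (WithLp.toLp_surjective 2)) (integrableOn_preimage_toLp_iff.2 hu) hx₀
  refine iInf_le_of_le a (iSup₂_le fun t ht ↦ ?_)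
  rw [volume_lt_abs_sub_mul_rpow D u a _ ht]
  refine (ha _).trans ?_
  gcongr
  · exact (ENNReal.ofReal_toReal hC).symm.trans_le (ENNReal.ofReal_le_ofReal (by linarith))
  · exact cubeSeminorm_comp_toLp_le_aSeminorm hκ (by linarith) hu

/-- For a bounded `c`-John domain `D ⊆ ℝⁿ`, `n ≥ 2`, `κ ≥ 1`,
`δ ∈ [0,1]`, `1 ≤ p` with `δp < n` and `q = np/(n-δp)`, there is
`C = C(n,κ,p,δ,c)` such that
`inf_a sup_{t>0} |{x ∈ D : |u x - a| > t}| t^q ≤ C |u|_{A^{δ,p}_κ(D)}^q`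
for every `u ∈ L¹(D)`. -/
theorem statement5 (n : ℕ) (hn : 2 ≤ n) (c : ℝ) (hc : 1 ≤ c) (κ : ℝ) (hκ : 1 ≤ κ)
    (δ p : ℝ) (hδ : δ ∈ Icc (0:ℝ) 1) (hp : 1 ≤ p) (hpn : δ * p < n) :
    ∃ C : ℝ, 0 < C ∧
      ∀ D : Set (Eucl n), IsJohnDomain n c D → Bornology.IsBounded D →
        ∀ u : Eucl n → ℝ, IntegrableOn u D volume →
          (⨅ a : ℝ, ⨆ (t : ℝ) (_ : 0 < t),
              volume {x ∈ D | t < |u x - a|} *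
                ENNReal.ofReal (t ^ ((n:ℝ) * p / ((n:ℝ) - δ * p))))
            ≤ ENNReal.ofReal C * ASeminorm n κ δ p D u ^ ((n:ℝ) * p / ((n:ℝ) - δ * p)) :=
  statement5_general n c (zero_lt_one.trans_le hc) κ hκ δ p hδ.1 hp hpn
end
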